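/- arXiv:1902.08770 — 6 statements merged into one kernel-verified Lean document; each statement's English description precedes it below -/
import Mathlib

section
/- Let a = (a_{ij}) be a real symmetric positive definite 2×2 matrix with determinant A = a₁₁a₂₂ − a₁₂² > 0. The function α₁ (viewed as a function of (μ₁, μ₂, x, y) ∈ ℝ⁴ via η = x + iy) is locally integrable on ℝ⁴, and for every smooth compactly supported function φ : ℝ⁴ → ℝ one has ∫_{ℝ⁴} α₁ · (a₂₂ ∂²φ/∂μ₁² − 2a₁₂ ∂²φ/∂μ₁∂μ₂ + a₁₁ ∂²φ/∂μ₂² + ∂²φ/∂x² + ∂²φ/∂y²) dμ₁ dμ₂ dx dy = −2π ∫₀^∞ φ(0, s, 0, 0) ds. (This is the weak form of the equation (Δ_a α₁) dVol_a = −2π√A ∫_{𝔇₁} dμ₂, where Δ_a = a^{ij}∂²/∂μᵢ∂μⱼ + 4A⁻¹∂²/∂η∂η̄ and dVol_a = A^{3/2} dμ₁dμ₂dxdy.) -/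
open MeasureTheory

/-- The function `α₁` of the paper. -/
noncomputable def alpha1 (a11 a12 a22 μ1 μ2 : ℝ) (η : ℂ) : ℝ :=
  (1 / (2 * Real.sqrt (μ1 ^ 2 + a22 * Complex.normSq η))) *
    (1 / 2 + (1 / Real.pi) * Real.arctan ((a22 * μ2 + a12 * μ1) /
      (Real.sqrt (a11 * a22 - a12 ^ 2) * Real.sqrt (μ1 ^ 2 + a22 * Complex.normSq η))))

/-- `α₁` viewed as a function on `ℝ⁴` via `η = x + iy`, with coordinates `(μ₁, μ₂, x, y)`. -/
noncomputable def alpha1R4 (a11 a12 a22 : ℝ) (x : Fin 4 → ℝ) : ℝ :=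
  alpha1 a11 a12 a22 (x 0) (x 1) ((x 2 : ℂ) + (x 3 : ℂ) * Complex.I)

/-- The partial derivative in the `i`-th coordinate direction of `ℝ⁴`. -/
noncomputable def pder (i : Fin 4) (φ : (Fin 4 → ℝ) → ℝ) (x : Fin 4 → ℝ) : ℝ :=
  fderiv ℝ φ x (Pi.single i 1)


/-- The quadratic form dual to the symbol of the operator. -/
noncomputable def QQ (a11 a12 a22 : ℝ) (x : Fin 4 → ℝ) : ℝ :=
  x 0 ^ 2 + a22 * (x 2 ^ 2 + x 3 ^ 2) + (a22 * x 1 + a12 * x 0) ^ 2 / (a11 * a22 - a12 ^ 2)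

/-- The shift along the second axis. -/
noncomputable def QT (a11 a12 a22 t : ℝ) (x : Fin 4 → ℝ) : ℝ :=
  x 0 ^ 2 + a22 * (x 2 ^ 2 + x 3 ^ 2)
    + (a22 * (x 1 - t) + a12 * x 0) ^ 2 / (a11 * a22 - a12 ^ 2)

lemma a22_pos {a11 a12 a22 : ℝ} (ha11 : 0 < a11) (hA : 0 < a11 * a22 - a12 ^ 2) : 0 < a22 := by
  have : 0 < a11 * a22 := by nlinarith [sq_nonneg a12]
  exact (pos_iff_pos_of_mul_pos this).1 ha11

lemma radial_int : ∫ y in Set.Ioi (0 : ℝ), y ^ 3 * ((1 + y ^ 2) ^ 3)⁻¹ = 1 / 4 := by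
  have h := integral_Ioi_of_hasDerivAt_of_nonneg' (a := 0) (l := 1 / 4)
    (g := fun y : ℝ => (1 / 4) * (1 - (1 + y ^ 2)⁻¹) ^ 2)
    (g' := fun y : ℝ => y ^ 3 * ((1 + y ^ 2) ^ 3)⁻¹) ?_ ?_ ?_
  · rw [h]; norm_num
  · intro y _
    have hp : (1 + y ^ 2) ≠ 0 := by positivity
    have h1 : HasDerivAt (fun y : ℝ => 1 + y ^ 2) (2 * y) y := by
      simpa using (hasDerivAt_pow 2 y).const_add 1
    have h2 := (((h1.inv hp).const_sub 1).pow 2).const_mul (1 / 4 : ℝ)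
    refine h2.congr_deriv ?_
    simp
    field_simp
    ring
  · intro y hy
    have : (0 : ℝ) < y := hy
    positivity
  · have h1 : Filter.Tendsto (fun y : ℝ => (1 + y ^ 2)⁻¹) Filter.atTop (nhds 0) := by
      apply Filter.Tendsto.inv_tendsto_atTop
      apply Filter.tendsto_atTop_add_const_left
      exact Filter.tendsto_pow_atTop (by norm_num)
    have h2 := ((h1.const_sub 1).pow 2).const_mul (1 / 4 : ℝ)
    simpa using h2

lemma euclid_int : ∫ x : Fin 4 → ℝ, ((1 + (x 0 ^ 2 + x 1 ^ 2 + x 2 ^ 2 + x 3 ^ 2)) ^ 3)⁻¹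
    = Real.pi ^ 2 / 2 := by
  have h := (EuclideanSpace.volume_preserving_symm_measurableEquiv_toLp (Fin 4)).integral_comp
    (MeasurableEquiv.measurableEmbedding _)
    (fun x : Fin 4 → ℝ => ((1 + (x 0 ^ 2 + x 1 ^ 2 + x 2 ^ 2 + x 3 ^ 2)) ^ 3)⁻¹)
  rw [← h]
  have h2 := integral_fun_norm_addHaar (volume : Measure (EuclideanSpace ℝ (Fin 4)))
    (fun y : ℝ => ((1 + y ^ 2) ^ 3)⁻¹)
  have h3 : ∀ x : EuclideanSpace ℝ (Fin 4),
      ((1 + ‖x‖ ^ 2) ^ 3)⁻¹ = ((1 + (x 0 ^ 2 + x 1 ^ 2 + x 2 ^ 2 + x 3 ^ 2)) ^ 3)⁻¹ := by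
    intro x
    rw [EuclideanSpace.norm_sq_eq]
    simp [Fin.sum_univ_four]
  simp only [h3] at h2
  refine Eq.trans ?_ (h2.trans ?_)
  · rfl
  · simp only [finrank_euclideanSpace, Fintype.card_fin, smul_eq_mul, Nat.reduceSub, radial_int,
      Measure.real, EuclideanSpace.volume_ball]
    have hg : Real.Gamma ((4 : ℕ) / 2 + 1) = 2 := by
      have := Real.Gamma_nat_eq_factorial 2
      norm_num [Nat.factorial] at this ⊢
    rw [hg]
    have : Real.sqrt Real.pi ^ 4 = Real.pi ^ 2 := by
      rw [show (4 : ℕ) = 2 * 2 from rfl, pow_mul, Real.sq_sqrt Real.pi_pos.le]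
    rw [this]
    simp
    rw [ENNReal.toReal_ofReal (by positivity)]
    ring

lemma QQ_int {a11 a12 a22 : ℝ} (ha11 : 0 < a11) (hA : 0 < a11 * a22 - a12 ^ 2) :
    ∫ x, ((1 + QQ a11 a12 a22 x) ^ 3)⁻¹
      = Real.sqrt (a11 * a22 - a12 ^ 2) / a22 ^ 2 * (Real.pi ^ 2 / 2) := by
  have h22 := a22_pos ha11 hA
  set s := Real.sqrt (a11 * a22 - a12 ^ 2) with hs
  have hsp : 0 < s := Real.sqrt_pos.2 hA
  have hs2 : s ^ 2 = a11 * a22 - a12 ^ 2 := Real.sq_sqrt hA.le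
  let M : Matrix (Fin 4) (Fin 4) ℝ :=
    !![1, 0, 0, 0; a12 / s, a22 / s, 0, 0; 0, 0, Real.sqrt a22, 0; 0, 0, 0, Real.sqrt a22]
  have hdet : M.det = a22 ^ 2 / s := by
    simp [M, Matrix.det_succ_row_zero, Fin.sum_univ_succ, Fin.succAbove]
    have := Real.mul_self_sqrt h22.le
    field_simp
    linear_combination this
  have hdp : 0 < M.det := by rw [hdet]; positivity
  have hmap := Real.map_matrix_volume_pi_eq_smul_volume_pi hdp.ne'
  have hc : Continuous (Matrix.toLin' M) := LinearMap.continuous_of_finiteDimensional _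
  have hgc : Continuous (fun x : Fin 4 → ℝ =>
      ((1 + (x 0 ^ 2 + x 1 ^ 2 + x 2 ^ 2 + x 3 ^ 2)) ^ 3)⁻¹) := by
    apply Continuous.inv₀ (by fun_prop)
    intro x; positivity
  have h := integral_map (μ := volume) hc.measurable.aemeasurable
    (f := fun x : Fin 4 → ℝ => ((1 + (x 0 ^ 2 + x 1 ^ 2 + x 2 ^ 2 + x 3 ^ 2)) ^ 3)⁻¹)
    hgc.aestronglyMeasurable
  rw [hmap, integral_smul_measure, euclid_int] at h
  have he : ∀ x : Fin 4 → ℝ, ((1 + QQ a11 a12 a22 x) ^ 3)⁻¹ =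
     ((1 + ((Matrix.toLin' M x) 0 ^ 2 + (Matrix.toLin' M x) 1 ^ 2 + (Matrix.toLin' M x) 2 ^ 2
      + (Matrix.toLin' M x) 3 ^ 2)) ^ 3)⁻¹ := by
    intro x
    congr 3
    simp [M, QQ, Matrix.mulVec, dotProduct, Fin.sum_univ_four, mul_pow, Real.sq_sqrt h22.le]
    rw [← hs2]
    field_simp
    ring
  simp only [he]
  rw [← h, hdet]
  rw [ENNReal.toReal_ofReal (abs_nonneg _), abs_of_pos (by positivity)]
  simp

lemma QQ_integrable {a11 a12 a22 : ℝ} (ha11 : 0 < a11) (hA : 0 < a11 * a22 - a12 ^ 2) :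
    Integrable (fun x => ((1 + QQ a11 a12 a22 x) ^ 3)⁻¹) := by
  by_contra h
  have h1 := QQ_int ha11 hA
  rw [integral_undef h] at h1
  have h22 := a22_pos ha11 hA
  have : 0 < Real.sqrt (a11 * a22 - a12 ^ 2) / a22 ^ 2 * (Real.pi ^ 2 / 2) := by positivity
  exact this.ne h1

lemma QT_nonneg {a11 a12 a22 : ℝ} (ha11 : 0 < a11) (hA : 0 < a11 * a22 - a12 ^ 2) (t : ℝ)
    (x : Fin 4 → ℝ) : 0 ≤ QT a11 a12 a22 t x := by
  have h22 := a22_pos ha11 hA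
  unfold QT
  positivity

lemma QT_eq (a11 a12 a22 t : ℝ) (x : Fin 4 → ℝ) :
    QT a11 a12 a22 t x = QQ a11 a12 a22 (x - Pi.single 1 t) := by
  simp [QT, QQ]

/-- approximate identity -/
lemma approx {a11 a12 a22 : ℝ} (ha11 : 0 < a11) (hA : 0 < a11 * a22 - a12 ^ 2) (t : ℝ)
    (φ : (Fin 4 → ℝ) → ℝ) (hφ : Continuous φ) (hc : HasCompactSupport φ)
    (r : ℕ → ℝ) (hr : ∀ n, 0 < r n) (hr0 : Filter.Tendsto r Filter.atTop (nhds 0)) :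
    Filter.Tendsto (fun n => ∫ x, r n ^ 2 * ((QT a11 a12 a22 t x + r n ^ 2) ^ 3)⁻¹ * φ x)
      Filter.atTop
      (nhds (Real.sqrt (a11 * a22 - a12 ^ 2) / a22 ^ 2 * (Real.pi ^ 2 / 2) *
        φ (Pi.single 1 t))) := by
  have h22 := a22_pos ha11 hA
  have hQn : ∀ x, 0 ≤ QQ a11 a12 a22 x := by
    intro x; unfold QQ; positivity
  have key : ∀ n, ∫ x, r n ^ 2 * ((QT a11 a12 a22 t x + r n ^ 2) ^ 3)⁻¹ * φ x
      = ∫ z, ((1 + QQ a11 a12 a22 z) ^ 3)⁻¹ * φ (r n • z + Pi.single 1 t) := by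
    intro n
    rw [← integral_add_right_eq_self _ (Pi.single 1 t : Fin 4 → ℝ)]
    simp only [QT_eq, add_sub_cancel_right]
    have h := Measure.integral_comp_smul (volume : Measure (Fin 4 → ℝ))
      (fun x => r n ^ 2 * ((QQ a11 a12 a22 x + r n ^ 2) ^ 3)⁻¹ * φ (x + Pi.single 1 t)) (r n)
    have hrn := hr n
    rw [Module.finrank_fin_fun, abs_of_pos (by positivity), smul_eq_mul] at h
    rw [eq_inv_mul_iff_mul_eq₀ (by positivity)] at h
    rw [← h, ← integral_const_mul]
    congr 1
    ext z
    have : QQ a11 a12 a22 (r n • z) = r n ^ 2 * QQ a11 a12 a22 z := by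
      simp only [QQ, Pi.smul_apply, smul_eq_mul]; ring
    rw [this]
    have := hQn z
    have : 1 + QQ a11 a12 a22 z ≠ 0 := by positivity
    have h2 : r n ^ 2 * QQ a11 a12 a22 z + r n ^ 2 = r n ^ 2 * (1 + QQ a11 a12 a22 z) := by ring
    rw [h2]
    field_simp
  simp only [key]
  rw [← QQ_int ha11 hA, ← integral_mul_const]
  obtain ⟨C, hC⟩ := hc.exists_bound_of_continuous hφ
  have hQc : Continuous (fun x => ((1 + QQ a11 a12 a22 x) ^ 3)⁻¹) := by
    apply Continuous.inv₀
    · unfold QQ; fun_prop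
    · intro x; have := hQn x; positivity
  apply tendsto_integral_of_dominated_convergence
    (fun x => ((1 + QQ a11 a12 a22 x) ^ 3)⁻¹ * C)
  · intro n
    exact (hQc.mul (hφ.comp (by fun_prop))).aestronglyMeasurable
  · exact (QQ_integrable ha11 hA).mul_const C
  · intro n
    filter_upwards with x
    have := hQn x
    rw [norm_mul, Real.norm_of_nonneg (by positivity)]
    exact mul_le_mul_of_nonneg_left (hC _) (by positivity)
  · filter_upwards with x
    apply Filter.Tendsto.const_mul
    have h1 : Filter.Tendsto (fun n => r n • x + Pi.single 1 t) Filter.atTop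
        (nhds ((0 : ℝ) • x + Pi.single 1 t)) := (hr0.smul_const x).add_const _
    rw [zero_smul, zero_add] at h1
    exact (hφ.tendsto _).comp h1


lemma pder_contDiff {φ : (Fin 4 → ℝ) → ℝ} (h : ContDiff ℝ (⊤ : ℕ∞) φ) (i : Fin 4) :
    ContDiff ℝ (⊤ : ℕ∞) (pder i φ) := by
  unfold pder
  exact (h.fderiv_right (m := (⊤ : ℕ∞)) (by norm_cast)).clm_apply contDiff_const

lemma pder_compact {φ : (Fin 4 → ℝ) → ℝ} (h : HasCompactSupport φ) (i : Fin 4) :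
    HasCompactSupport (pder i φ) := by
  unfold pder
  exact h.fderiv_apply (𝕜 := ℝ) _

lemma ibp1 {g φ : (Fin 4 → ℝ) → ℝ} (hg : ContDiff ℝ (⊤ : ℕ∞) g) (h : ContDiff ℝ (⊤ : ℕ∞) φ)
    (hc : HasCompactSupport φ) (i : Fin 4) :
    ∫ x, g x * pder i φ x = -∫ x, pder i g x * φ x := by
  have hd := (pder_contDiff h i).continuous
  have hd' := (pder_contDiff hg i).continuous
  apply integral_mul_fderiv_eq_neg_fderiv_mul_of_integrable
  · exact (hd'.mul h.continuous).integrable_of_hasCompactSupport hc.mul_left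
  · exact (hg.continuous.mul hd).integrable_of_hasCompactSupport (pder_compact hc i).mul_left
  · exact (hg.continuous.mul h.continuous).integrable_of_hasCompactSupport hc.mul_left
  · intro x _; exact (hg.differentiable (by simp)) x
  · intro x _; exact (h.differentiable (by simp)) x

lemma ibp2 {g φ : (Fin 4 → ℝ) → ℝ} (hg : ContDiff ℝ (⊤ : ℕ∞) g) (h : ContDiff ℝ (⊤ : ℕ∞) φ)
    (hc : HasCompactSupport φ) (i j : Fin 4) :
    ∫ x, g x * pder i (pder j φ) x = ∫ x, pder j (pder i g) x * φ x := by
  rw [ibp1 hg (pder_contDiff h j) (pder_compact hc j), ibp1 (pder_contDiff hg i) h hc, neg_neg]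

/-- The operator. -/
noncomputable def LL (a11 a12 a22 : ℝ) (φ : (Fin 4 → ℝ) → ℝ) (x : Fin 4 → ℝ) : ℝ :=
  a22 * pder 0 (pder 0 φ) x - 2 * a12 * pder 0 (pder 1 φ) x
          + a11 * pder 1 (pder 1 φ) x + pder 2 (pder 2 φ) x + pder 3 (pder 3 φ) x

lemma LL_continuous {a11 a12 a22 : ℝ} {φ : (Fin 4 → ℝ) → ℝ} (h : ContDiff ℝ (⊤ : ℕ∞) φ) :
    Continuous (LL a11 a12 a22 φ) := by
  have := fun i j => (pder_contDiff (pder_contDiff h j) i).continuous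
  unfold LL
  exact (((((this 0 0).const_mul _).sub ((this 0 1).const_mul _)).add
    ((this 1 1).const_mul _)).add (this 2 2)).add (this 3 3)

lemma LL_compact {a11 a12 a22 : ℝ} {φ : (Fin 4 → ℝ) → ℝ} (h : HasCompactSupport φ) :
    HasCompactSupport (LL a11 a12 a22 φ) := by
  have := fun i j => (pder_compact (pder_compact h j) i)
  unfold LL
  exact (((((this 0 0).mul_left).sub ((this 0 1).mul_left)).add
    ((this 1 1).mul_left)).add (this 2 2)).add (this 3 3)

lemma ibpL {a11 a12 a22 : ℝ} {g φ : (Fin 4 → ℝ) → ℝ} (hg : ContDiff ℝ (⊤ : ℕ∞) g)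
    (h : ContDiff ℝ (⊤ : ℕ∞) φ) (hc : HasCompactSupport φ) :
    ∫ x, g x * LL a11 a12 a22 φ x =
      ∫ x, (a22 * pder 0 (pder 0 g) x - 2 * a12 * pder 1 (pder 0 g) x
          + a11 * pder 1 (pder 1 g) x + pder 2 (pder 2 g) x + pder 3 (pder 3 g) x) * φ x := by
  have I1 : ∀ i j, Integrable (fun x => g x * pder i (pder j φ) x) := fun i j =>
    (hg.continuous.mul (pder_contDiff (pder_contDiff h j) i).continuous
      ).integrable_of_hasCompactSupport (pder_compact (pder_compact hc j) i).mul_left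
  have I2 : ∀ i j, Integrable (fun x => pder j (pder i g) x * φ x) := fun i j =>
    ((pder_contDiff (pder_contDiff hg i) j).continuous.mul h.continuous
      ).integrable_of_hasCompactSupport hc.mul_left
  have e1 : ∀ x, g x * LL a11 a12 a22 φ x = a22 * (g x * pder 0 (pder 0 φ) x)
      - (2 * a12) * (g x * pder 0 (pder 1 φ) x) + a11 * (g x * pder 1 (pder 1 φ) x)
      + g x * pder 2 (pder 2 φ) x + g x * pder 3 (pder 3 φ) x := by
    intro x; unfold LL; ring
  have e2 : ∀ x, (a22 * pder 0 (pder 0 g) x - 2 * a12 * pder 1 (pder 0 g) x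
          + a11 * pder 1 (pder 1 g) x + pder 2 (pder 2 g) x + pder 3 (pder 3 g) x) * φ x
      = a22 * (pder 0 (pder 0 g) x * φ x)
      - (2 * a12) * (pder 1 (pder 0 g) x * φ x) + a11 * (pder 1 (pder 1 g) x * φ x)
      + pder 2 (pder 2 g) x * φ x + pder 3 (pder 3 g) x * φ x := by
    intro x; ring
  simp only [e1, e2]
  rw [integral_add, integral_add, integral_add, integral_sub, integral_const_mul,
    integral_const_mul, integral_const_mul]
  · rw [integral_add, integral_add, integral_add, integral_sub, integral_const_mul,
      integral_const_mul, integral_const_mul]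
    · simp only [ibp2 hg h hc]
    · exact (I2 _ _).const_mul _
    · exact (I2 _ _).const_mul _
    · exact ((I2 _ _).const_mul _).sub ((I2 _ _).const_mul _)
    · exact (I2 _ _).const_mul _
    · exact (((I2 _ _).const_mul _).sub ((I2 _ _).const_mul _)).add ((I2 _ _).const_mul _)
    · exact (I2 _ _)
    · exact ((((I2 _ _).const_mul _).sub ((I2 _ _).const_mul _)).add ((I2 _ _).const_mul _)).add
        (I2 _ _)
    · exact (I2 _ _)
  · exact (I1 _ _).const_mul _
  · exact (I1 _ _).const_mul _
  · exact ((I1 _ _).const_mul _).sub ((I1 _ _).const_mul _)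
  · exact (I1 _ _).const_mul _
  · exact (((I1 _ _).const_mul _).sub ((I1 _ _).const_mul _)).add ((I1 _ _).const_mul _)
  · exact (I1 _ _)
  · exact ((((I1 _ _).const_mul _).sub ((I1 _ _).const_mul _)).add ((I1 _ _).const_mul _)).add
      (I1 _ _)
  · exact (I1 _ _)

lemma pder_eq_of_line {f : (Fin 4 → ℝ) → ℝ} {x : Fin 4 → ℝ} {i : Fin 4} {d : ℝ}
    (hf : DifferentiableAt ℝ f x)
    (h : HasDerivAt (fun s : ℝ => f (x + s • Pi.single i 1)) d 0) : pder i f x = d := by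
  have h1 : HasLineDerivAt ℝ f d x (Pi.single i 1) := h
  exact (hf.hasFDerivAt.hasLineDerivAt (Pi.single i 1)).unique h1

/-- half the gradient of `QT` -/
noncomputable def dQ (a11 a12 a22 t : ℝ) (i : Fin 4) (x : Fin 4 → ℝ) : ℝ :=
  ![x 0 + a12 * (a22 * (x 1 - t) + a12 * x 0) / (a11 * a22 - a12 ^ 2),
    a22 * (a22 * (x 1 - t) + a12 * x 0) / (a11 * a22 - a12 ^ 2),
    a22 * x 2, a22 * x 3] i

/-- half the Hessian of `QT` -/
noncomputable def ddQ (a11 a12 a22 : ℝ) (i j : Fin 4) : ℝ :=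
  (!![1 + a12 * a12 / (a11 * a22 - a12 ^ 2), a12 * a22 / (a11 * a22 - a12 ^ 2), 0, 0;
    a22 * a12 / (a11 * a22 - a12 ^ 2), a22 * a22 / (a11 * a22 - a12 ^ 2), 0, 0;
    0, 0, a22, 0; 0, 0, 0, a22] : Matrix (Fin 4) (Fin 4) ℝ) i j

lemma QT_line (a11 a12 a22 t : ℝ) (i : Fin 4) (x : Fin 4 → ℝ) (s : ℝ) :
    QT a11 a12 a22 t (x + s • Pi.single i 1) =
      QT a11 a12 a22 t x + 2 * dQ a11 a12 a22 t i x * s + ddQ a11 a12 a22 i i * s ^ 2 := by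
  fin_cases i <;> simp [QT, dQ, ddQ] <;> ring

lemma dQ_line (a11 a12 a22 t : ℝ) (i j : Fin 4) (x : Fin 4 → ℝ) (s : ℝ) :
    dQ a11 a12 a22 t i (x + s • Pi.single j 1) =
      dQ a11 a12 a22 t i x + ddQ a11 a12 a22 i j * s := by
  fin_cases i <;> fin_cases j <;> simp [dQ, ddQ] <;> ring

lemma QT_contDiff (a11 a12 a22 t : ℝ) : ContDiff ℝ (⊤ : ℕ∞) (QT a11 a12 a22 t) := by
  unfold QT; fun_prop

lemma dQ_contDiff (a11 a12 a22 t : ℝ) (i : Fin 4) :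
    ContDiff ℝ (⊤ : ℕ∞) (dQ a11 a12 a22 t i) := by
  unfold dQ; fin_cases i <;> simp <;> fun_prop


lemma N_contDiff {a11 a12 a22 : ℝ} (ha11 : 0 < a11) (hA : 0 < a11 * a22 - a12 ^ 2) (t e : ℝ)
    (he : 0 < e) : ContDiff ℝ (⊤ : ℕ∞) (fun x => (QT a11 a12 a22 t x + e)⁻¹) := by
  apply ContDiff.inv
  · exact (QT_contDiff _ _ _ _).add contDiff_const
  · intro x; have := QT_nonneg ha11 hA t x; positivity


lemma N_line_aux (q d c e : ℝ) (h : q + e ≠ 0) :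
    HasDerivAt (fun s : ℝ => (q + 2 * d * s + c * s ^ 2 + e)⁻¹) (-(2 * d) * ((q + e)⁻¹) ^ 2) 0 := by
  have h1 : HasDerivAt (fun s : ℝ => q + 2 * d * s + c * s ^ 2 + e) (2 * d) 0 := by
    have := ((((hasDerivAt_id (0 : ℝ)).const_mul (2 * d)).const_add q).add
      ((hasDerivAt_pow 2 (0 : ℝ)).const_mul c)).add_const e
    refine this.congr_deriv ?_
    norm_num
  have h2 := h1.inv (by simpa using h)
  refine h2.congr_deriv ?_
  norm_num
  field_simp

lemma pder_N {a11 a12 a22 : ℝ} (ha11 : 0 < a11) (hA : 0 < a11 * a22 - a12 ^ 2) (t e : ℝ)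
    (he : 0 < e) (i : Fin 4) : pder i (fun x => (QT a11 a12 a22 t x + e)⁻¹) =
      fun x => -(2 * dQ a11 a12 a22 t i x) * ((QT a11 a12 a22 t x + e)⁻¹) ^ 2 := by
  ext x
  have hq := QT_nonneg ha11 hA t x
  apply pder_eq_of_line
  · exact (N_contDiff ha11 hA t e he).differentiable (by simp) x
  · simp only [QT_line]
    exact N_line_aux _ _ _ _ (by positivity)

lemma pder_pder_N {a11 a12 a22 : ℝ} (ha11 : 0 < a11) (hA : 0 < a11 * a22 - a12 ^ 2) (t e : ℝ)
    (he : 0 < e) (i j : Fin 4) (x : Fin 4 → ℝ) :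
    pder j (pder i (fun x => (QT a11 a12 a22 t x + e)⁻¹)) x =
      8 * dQ a11 a12 a22 t i x * dQ a11 a12 a22 t j x * ((QT a11 a12 a22 t x + e)⁻¹) ^ 3
      - 2 * ddQ a11 a12 a22 i j * ((QT a11 a12 a22 t x + e)⁻¹) ^ 2 := by
  have hq := QT_nonneg ha11 hA t x
  apply pder_eq_of_line
  · exact (pder_contDiff (N_contDiff ha11 hA t e he) i).differentiable (by simp) x
  · rw [pder_N ha11 hA t e he]
    simp only [QT_line, dQ_line]
    have h1 := (N_line_aux (QT a11 a12 a22 t x) (dQ a11 a12 a22 t j x) (ddQ a11 a12 a22 j j) e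
      (by positivity)).pow 2
    have h2 := ((((hasDerivAt_id (0 : ℝ)).const_mul (ddQ a11 a12 a22 i j)).const_add
      (dQ a11 a12 a22 t i x)).const_mul 2).neg
    have h3 := h2.mul h1
    refine h3.congr_deriv ?_
    simp only [Pi.neg_apply, Pi.pow_apply, id, mul_zero, add_zero, ne_eq, OfNat.ofNat_ne_zero,
      not_false_eq_true, zero_pow, Nat.cast_ofNat, Nat.add_one_sub_one, pow_one, mul_one]
    ring

lemma LN_eq {a11 a12 a22 : ℝ} (ha11 : 0 < a11) (hA : 0 < a11 * a22 - a12 ^ 2) (t e : ℝ)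
    (he : 0 < e) (x : Fin 4 → ℝ) (g : (Fin 4 → ℝ) → ℝ)
    (hg : g = fun x => (QT a11 a12 a22 t x + e)⁻¹) :
    a22 * pder 0 (pder 0 g) x - 2 * a12 * pder 1 (pder 0 g) x
      + a11 * pder 1 (pder 1 g) x + pder 2 (pder 2 g) x + pder 3 (pder 3 g) x
      = -(8 * a22) * (e * ((QT a11 a12 a22 t x + e) ^ 3)⁻¹) := by
  subst hg
  simp only [pder_pder_N ha11 hA t e he]
  have hq := QT_nonneg ha11 hA t x
  have hp : QT a11 a12 a22 t x + e ≠ 0 := by positivity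
  have hi : (a11 * a22 - a12 ^ 2)⁻¹ * (a11 * a22 - a12 ^ 2) = 1 := inv_mul_cancel₀ hA.ne'
  have h1 : a22 * (dQ a11 a12 a22 t 0 x * dQ a11 a12 a22 t 0 x)
    - 2 * a12 * (dQ a11 a12 a22 t 0 x * dQ a11 a12 a22 t 1 x)
    + a11 * (dQ a11 a12 a22 t 1 x * dQ a11 a12 a22 t 1 x)
    + dQ a11 a12 a22 t 2 x * dQ a11 a12 a22 t 2 x
    + dQ a11 a12 a22 t 3 x * dQ a11 a12 a22 t 3 x = a22 * QT a11 a12 a22 t x := by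
    simp [dQ, QT]
    linear_combination (a22 * (a22 * (x 1 - t) + a12 * x 0) ^ 2 * (a11 * a22 - a12 ^ 2)⁻¹) * hi
  have h2 : a22 * ddQ a11 a12 a22 0 0 - 2 * a12 * ddQ a11 a12 a22 0 1
    + a11 * ddQ a11 a12 a22 1 1 + ddQ a11 a12 a22 2 2 + ddQ a11 a12 a22 3 3 = 4 * a22 := by
    simp [ddQ]
    linear_combination a22 * hi
  have h3 : ((QT a11 a12 a22 t x + e)⁻¹) ^ 2
      = (QT a11 a12 a22 t x + e) * ((QT a11 a12 a22 t x + e)⁻¹) ^ 3 := by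
    field_simp
  rw [← inv_pow]
  linear_combination (8 * ((QT a11 a12 a22 t x + e)⁻¹) ^ 3) * h1
    - 2 * ((QT a11 a12 a22 t x + e)⁻¹) ^ 2 * h2 - 8 * a22 * h3

/-- fundamental solution, given integrability -/
lemma fund {a11 a12 a22 : ℝ} (ha11 : 0 < a11) (hA : 0 < a11 * a22 - a12 ^ 2) (t : ℝ)
    (φ : (Fin 4 → ℝ) → ℝ) (h : ContDiff ℝ (⊤ : ℕ∞) φ) (hc : HasCompactSupport φ)
    (hI : Integrable (fun x => (QT a11 a12 a22 t x)⁻¹ * LL a11 a12 a22 φ x)) :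
    ∫ x, (QT a11 a12 a22 t x)⁻¹ * LL a11 a12 a22 φ x =
      -(4 * Real.pi ^ 2 * Real.sqrt (a11 * a22 - a12 ^ 2) / a22) * φ (Pi.single 1 t) := by
  have h22 := a22_pos ha11 hA
  let r : ℕ → ℝ := fun n => 1 / ((n : ℝ) + 1)
  have hr : ∀ n, 0 < r n := fun n => by simp only [r]; positivity
  have hr0 : Filter.Tendsto r Filter.atTop (nhds 0) := tendsto_one_div_add_atTop_nhds_zero_nat
  have hlim := (approx ha11 hA t φ h.continuous hc r hr hr0).const_mul (-(8 * a22))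
  have hLc : Continuous (LL a11 a12 a22 φ) := LL_continuous h
  have hQc := (QT_contDiff a11 a12 a22 t).continuous
  have hlim2 : Filter.Tendsto (fun n => ∫ x, (QT a11 a12 a22 t x + r n ^ 2)⁻¹ *
      LL a11 a12 a22 φ x) Filter.atTop (nhds (∫ x, (QT a11 a12 a22 t x)⁻¹ *
      LL a11 a12 a22 φ x)) := by
    have hne : ∀ᵐ x : Fin 4 → ℝ, x 0 ≠ 0 := Measure.ae_eval_ne (fun _ => volume) 0 0
    have hpos : ∀ x : Fin 4 → ℝ, x 0 ≠ 0 → 0 < QT a11 a12 a22 t x := by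
      intro x hx
      unfold QT
      positivity
    apply tendsto_integral_of_dominated_convergence _ _ hI.norm
    · intro n
      filter_upwards [hne] with x hx
      have hq := hpos x hx
      have := hr n
      rw [norm_mul, norm_mul]
      apply mul_le_mul_of_nonneg_right _ (norm_nonneg _)
      rw [Real.norm_of_nonneg (by positivity), Real.norm_of_nonneg (by positivity)]
      apply inv_anti₀ hq
      nlinarith
    · filter_upwards [hne] with x hx
      have hq := hpos x hx
      apply Filter.Tendsto.mul_const
      have : Filter.Tendsto (fun n => QT a11 a12 a22 t x + r n ^ 2) Filter.atTop
          (nhds (QT a11 a12 a22 t x + 0 ^ 2)) := (hr0.pow 2).const_add _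
      rw [zero_pow two_ne_zero, add_zero] at this
      exact this.inv₀ hq.ne'
    · intro n
      have := hr n
      exact ((N_contDiff ha11 hA t (r n ^ 2) (by positivity)).continuous.mul
        hLc).aestronglyMeasurable
  have heq : ∀ n, ∫ x, (QT a11 a12 a22 t x + r n ^ 2)⁻¹ * LL a11 a12 a22 φ x =
      -(8 * a22) * ∫ x, r n ^ 2 * ((QT a11 a12 a22 t x + r n ^ 2) ^ 3)⁻¹ * φ x := by
    intro n
    have hn := hr n
    have hn2 : 0 < r n ^ 2 := by positivity
    rw [ibpL (N_contDiff ha11 hA t (r n ^ 2) hn2) h hc, ← integral_const_mul]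
    congr 1
    ext x
    rw [LN_eq ha11 hA t (r n ^ 2) hn2 x _ rfl]
    ring
  simp only [heq] at hlim2
  rw [tendsto_nhds_unique hlim2 hlim]
  field_simp
  ring


lemma rep {a11 a12 a22 : ℝ} (ha11 : 0 < a11) (hA : 0 < a11 * a22 - a12 ^ 2)
    (x : Fin 4 → ℝ) (hx : x 0 ≠ 0) :
    IntegrableOn (fun t => (QT a11 a12 a22 t x)⁻¹) (Set.Ioi 0) ∧
    alpha1R4 a11 a12 a22 x = a22 / (2 * Real.pi * Real.sqrt (a11 * a22 - a12 ^ 2)) *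
      ∫ t in Set.Ioi 0, (QT a11 a12 a22 t x)⁻¹ := by
  have h22 := a22_pos ha11 hA
  set s := Real.sqrt (a11 * a22 - a12 ^ 2) with hs
  have hsp : 0 < s := Real.sqrt_pos.2 hA
  have hs2 : s ^ 2 = a11 * a22 - a12 ^ 2 := Real.sq_sqrt hA.le
  set R := Real.sqrt (x 0 ^ 2 + a22 * (x 2 ^ 2 + x 3 ^ 2)) with hR
  have hRp : 0 < R := Real.sqrt_pos.2 (by positivity)
  have hR2 : R ^ 2 = x 0 ^ 2 + a22 * (x 2 ^ 2 + x 3 ^ 2) := Real.sq_sqrt (by positivity)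
  let g : ℝ → ℝ := fun t =>
    -(s / (a22 * R)) * Real.arctan ((a22 * (x 1 - t) + a12 * x 0) / (s * R))
  have hg : ∀ t ∈ Set.Ici (0 : ℝ), HasDerivAt g ((QT a11 a12 a22 t x)⁻¹) t := by
    intro t _
    have h1 : HasDerivAt (fun t => (a22 * (x 1 - t) + a12 * x 0) / (s * R))
        ((a22 * (-1)) / (s * R)) t :=
      (((((hasDerivAt_id t).const_sub (x 1)).const_mul a22).add_const (a12 * x 0)).div_const
        (s * R))
    have h2 := (h1.arctan).const_mul (-(s / (a22 * R)))
    refine h2.congr_deriv ?_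
    unfold QT
    rw [← hR2, ← hs2]
    have e1 : 0 < R ^ 2 + (a22 * (x 1 - t) + a12 * x 0) ^ 2 / s ^ 2 := by positivity
    have e2 : 0 < 1 + ((a22 * (x 1 - t) + a12 * x 0) / (s * R)) ^ 2 := by positivity
    have e3 : R ^ 2 + (a22 * (x 1 - t) + a12 * x 0) ^ 2 / s ^ 2 =
      R ^ 2 * (1 + ((a22 * (x 1 - t) + a12 * x 0) / (s * R)) ^ 2) := by
      field_simp
    rw [e3]
    generalize 1 + ((a22 * (x 1 - t) + a12 * x 0) / (s * R)) ^ 2 = w at e2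
    field_simp
  have hpos : ∀ t ∈ Set.Ioi (0 : ℝ), 0 ≤ (QT a11 a12 a22 t x)⁻¹ := fun t _ =>
    inv_nonneg.2 (QT_nonneg ha11 hA t x)
  have hlim : Filter.Tendsto g Filter.atTop (nhds (-(s / (a22 * R)) * (-(Real.pi / 2)))) := by
    apply Filter.Tendsto.const_mul
    apply (Filter.Tendsto.mono_right Real.tendsto_arctan_atBot nhdsWithin_le_nhds).comp
    apply Filter.Tendsto.atBot_div_const (by positivity)
    apply Filter.tendsto_atBot_add_const_right
    apply Filter.Tendsto.const_mul_atBot h22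
    exact Filter.tendsto_atBot_add_const_left _ _ Filter.tendsto_neg_atTop_atBot
  refine ⟨integrableOn_Ioi_deriv_of_nonneg' hg hpos hlim, ?_⟩
  rw [integral_Ioi_of_hasDerivAt_of_nonneg' hg hpos hlim]
  unfold alpha1R4 alpha1
  rw [Complex.normSq_add_mul_I, ← hR, ← hs]
  simp only [g, sub_zero]
  have := Real.pi_pos
  field_simp
  ring

lemma alpha_meas (a11 a12 a22 : ℝ) : Measurable (alpha1R4 a11 a12 a22) := by
  unfold alpha1R4 alpha1
  simp only [Complex.normSq_add_mul_I]
  have : Measurable Real.arctan := Real.continuous_arctan.measurable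
  fun_prop

lemma alpha_bound {a11 a12 a22 : ℝ} (ha11 : 0 < a11) (hA : 0 < a11 * a22 - a12 ^ 2)
    (x : Fin 4 → ℝ) (hx : x 0 ≠ 0) (hx2 : x 2 ≠ 0) :
    ‖alpha1R4 a11 a12 a22 x‖ ≤ (Real.sqrt (Real.sqrt a22))⁻¹ *
      ((Real.sqrt |x 0|)⁻¹ * (Real.sqrt |x 2|)⁻¹) := by
  have h22 := a22_pos ha11 hA
  have h0 : 0 < |x 0| := abs_pos.2 hx
  have h2 : 0 < |x 2| := abs_pos.2 hx2
  set R := Real.sqrt (x 0 ^ 2 + a22 * (x 2 ^ 2 + x 3 ^ 2)) with hR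
  have hRp : 0 < R := Real.sqrt_pos.2 (by positivity)
  have hle : Real.sqrt (Real.sqrt a22) * (Real.sqrt |x 0| * Real.sqrt |x 2|) ≤ R := by
    rw [← Real.sqrt_mul (abs_nonneg _), ← Real.sqrt_mul (Real.sqrt_nonneg _), hR]
    apply Real.sqrt_le_sqrt
    have e : Real.sqrt a22 ^ 2 = a22 := Real.sq_sqrt h22.le
    have e0 := sq_abs (x 0)
    have e2 := sq_abs (x 2)
    have : a22 * (x 2 ^ 2 + x 3 ^ 2) = (Real.sqrt a22 * |x 2|) ^ 2 + a22 * x 3 ^ 2 := by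
      rw [mul_pow, e, e2]; ring
    rw [this]
    have h3 : 0 ≤ a22 * x 3 ^ 2 := by positivity
    have h4 : 0 ≤ |x 0| * (Real.sqrt a22 * |x 2|) := by positivity
    nlinarith [sq_nonneg (|x 0| - Real.sqrt a22 * |x 2|)]
  rw [← mul_inv, ← mul_inv]
  refine le_trans ?_ (inv_anti₀ (by positivity) hle)
  unfold alpha1R4 alpha1
  rw [Complex.normSq_add_mul_I, ← hR, norm_mul]
  generalize (a22 * x 1 + a12 * x 0) / (Real.sqrt (a11 * a22 - a12 ^ 2) * R) = w
  have hp := Real.pi_pos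
  have a1 := Real.arctan_lt_pi_div_two w
  have a2 := Real.neg_pi_div_two_lt_arctan w
  have b : ‖1 / 2 + 1 / Real.pi * Real.arctan w‖ ≤ 1 := by
    have : 1 / Real.pi * Real.arctan w = Real.arctan w / Real.pi := by ring
    rw [this, Real.norm_eq_abs, abs_le]
    have c1 : Real.arctan w / Real.pi ≤ 1 / 2 := by rw [div_le_iff₀ hp]; linarith
    have c2 : -(1 / 2) ≤ Real.arctan w / Real.pi := by rw [le_div_iff₀ hp]; linarith
    constructor <;> linarith
  calc _ ≤ ‖1 / (2 * R)‖ * 1 := mul_le_mul_of_nonneg_left b (norm_nonneg _)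
    _ = (2 * R)⁻¹ := by rw [mul_one, Real.norm_of_nonneg (by positivity), one_div]
    _ ≤ R⁻¹ := inv_anti₀ hRp (by linarith)

lemma sqrt_int (r : ℝ) : IntegrableOn (fun t : ℝ => (Real.sqrt |t|)⁻¹) (Set.Icc (-r) r) := by
  rcases lt_or_ge r 0 with h | h
  · rw [Set.Icc_eq_empty (by linarith)]; exact integrableOn_empty
  have h1 : IntervalIntegrable (fun t : ℝ => (Real.sqrt |t|)⁻¹) volume 0 r := by
    have := intervalIntegral.intervalIntegrable_rpow' (a := 0) (b := r) (r := -(1 / 2))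
      (by norm_num)
    refine this.congr ?_
    intro t ht
    rw [Set.uIoc_of_le h] at ht
    simp only
    rw [abs_of_pos ht.1, Real.sqrt_eq_rpow, Real.rpow_neg ht.1.le]
  have h2 : IntervalIntegrable (fun t : ℝ => (Real.sqrt |t|)⁻¹) volume (-r) 0 := by
    have := (h1.comp_sub_left 0).symm
    simpa using this
  have := h2.trans h1
  rwa [intervalIntegrable_iff_integrableOn_Icc_of_le (by linarith)] at this

lemma loc_int {a11 a12 a22 : ℝ} (ha11 : 0 < a11) (hA : 0 < a11 * a22 - a12 ^ 2) :
    LocallyIntegrable (alpha1R4 a11 a12 a22) volume := by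
  rw [locallyIntegrable_iff]
  intro k hk
  obtain ⟨r, hr⟩ := hk.isBounded.subset_closedBall 0
  have hsub : k ⊆ Set.pi Set.univ (fun _ : Fin 4 => Set.Icc (-r) r) := by
    intro x hx i _
    have h1 := hr hx
    rw [mem_closedBall_zero_iff] at h1
    have h2 := (norm_le_pi_norm x i).trans h1
    rw [Real.norm_eq_abs, abs_le] at h2
    exact h2
  refine IntegrableOn.mono_set ?_ hsub
  let f : Fin 4 → ℝ → ℝ := ![fun t => (Real.sqrt |t|)⁻¹, fun _ => 1, fun t => (Real.sqrt |t|)⁻¹,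
    fun _ => 1]
  have hf : ∀ i, Integrable (f i) (volume.restrict (Set.Icc (-r) r)) := by
    have hc : Integrable (fun _ : ℝ => (1 : ℝ)) (volume.restrict (Set.Icc (-r) r)) :=
      integrable_const _
    intro i
    fin_cases i
    · exact sqrt_int r
    · exact hc
    · exact sqrt_int r
    · exact hc
  have hprod := Integrable.fintype_prod hf
  rw [← Measure.restrict_pi_pi, ← volume_pi] at hprod
  have hb := hprod.const_mul ((Real.sqrt (Real.sqrt a22))⁻¹)
  refine Integrable.mono' hb (alpha_meas _ _ _).aestronglyMeasurable ?_
  apply ae_restrict_of_ae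
  have hne : ∀ᵐ x : Fin 4 → ℝ, x 0 ≠ 0 := Measure.ae_eval_ne (fun _ => volume) 0 0
  have hne2 : ∀ᵐ x : Fin 4 → ℝ, x 2 ≠ 0 := Measure.ae_eval_ne (fun _ => volume) 2 0
  filter_upwards [hne, hne2] with x hx hx2
  refine (alpha_bound ha11 hA x hx hx2).trans (le_of_eq ?_)
  simp [f, Fin.prod_univ_four]

/-- `α₁` is locally integrable on `ℝ⁴`, and satisfies in the weak
(distributional) sense the equation `(Δ_a α₁) dVol_a = −2π√A ∫_{𝔇₁} dμ₂`. -/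
theorem statement1 (a11 a12 a22 : ℝ) (ha11 : 0 < a11) (hA : 0 < a11 * a22 - a12 ^ 2) :
    LocallyIntegrable (alpha1R4 a11 a12 a22) volume ∧
    ∀ φ : (Fin 4 → ℝ) → ℝ, ContDiff ℝ (⊤ : ℕ∞) φ → HasCompactSupport φ →
      (∫ x, alpha1R4 a11 a12 a22 x *
        (a22 * pder 0 (pder 0 φ) x - 2 * a12 * pder 0 (pder 1 φ) x
          + a11 * pder 1 (pder 1 φ) x + pder 2 (pder 2 φ) x + pder 3 (pder 3 φ) x))
      = -(2 * Real.pi) * ∫ s in Set.Ioi (0 : ℝ), φ ![0, s, 0, 0] := by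
  refine ⟨loc_int ha11 hA, ?_⟩
  intro φ h hc
  change ∫ x, alpha1R4 a11 a12 a22 x * LL a11 a12 a22 φ x = _
  have h22 := a22_pos ha11 hA
  have hpi := Real.pi_pos
  set s := Real.sqrt (a11 * a22 - a12 ^ 2) with hs
  have hsp : 0 < s := Real.sqrt_pos.2 hA
  set c := a22 / (2 * Real.pi * s) with hcdef
  have hcp : 0 < c := by positivity
  have hLc : Continuous (LL a11 a12 a22 φ) := LL_continuous h
  have hne : ∀ᵐ x : Fin 4 → ℝ, x 0 ≠ 0 := Measure.ae_eval_ne (fun _ => volume) 0 0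
  have hαL : Integrable (fun x => alpha1R4 a11 a12 a22 x * LL a11 a12 a22 φ x) := by
    have := (loc_int ha11 hA).integrable_smul_right_of_hasCompactSupport hLc
      (LL_compact (a11 := a11) (a12 := a12) (a22 := a22) hc)
    simpa [smul_eq_mul] using this
  have hmeas : Measurable (fun p : (Fin 4 → ℝ) × ℝ =>
      (QT a11 a12 a22 p.2 p.1)⁻¹ * LL a11 a12 a22 φ p.1) := by
    apply Measurable.mul
    · apply Measurable.inv
      unfold QT
      fun_prop
    · exact hLc.measurable.comp measurable_fst
  have hprod : Integrable (fun p : (Fin 4 → ℝ) × ℝ =>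
      (QT a11 a12 a22 p.2 p.1)⁻¹ * LL a11 a12 a22 φ p.1)
      (volume.prod (volume.restrict (Set.Ioi 0))) := by
    rw [integrable_prod_iff hmeas.aestronglyMeasurable]
    constructor
    · filter_upwards [hne] with x hx
      exact (rep ha11 hA x hx).1.mul_const _
    · refine (hαL.norm.const_mul c⁻¹).congr ?_
      filter_upwards [hne] with x hx
      have hr := (rep ha11 hA x hx).2
      rw [← hs, ← hcdef] at hr
      have e : ∀ t, ‖(QT a11 a12 a22 t x)⁻¹ * LL a11 a12 a22 φ x‖
          = (QT a11 a12 a22 t x)⁻¹ * ‖LL a11 a12 a22 φ x‖ := by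
        intro t
        rw [norm_mul, Real.norm_of_nonneg (inv_nonneg.2 (QT_nonneg ha11 hA t x))]
      simp only [e]
      have hIn : 0 ≤ ∫ t in Set.Ioi 0, (QT a11 a12 a22 t x)⁻¹ :=
        integral_nonneg (fun t => inv_nonneg.2 (QT_nonneg ha11 hA t x))
      rw [integral_mul_const, norm_mul, hr, Real.norm_of_nonneg (mul_nonneg hcp.le hIn)]
      field_simp
  have hstep : ∫ x, alpha1R4 a11 a12 a22 x * LL a11 a12 a22 φ x =
      c * ∫ x, ∫ t in Set.Ioi 0, (QT a11 a12 a22 t x)⁻¹ * LL a11 a12 a22 φ x := by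
    rw [← integral_const_mul]
    apply integral_congr_ae
    filter_upwards [hne] with x hx
    have hr := (rep ha11 hA x hx).2
    rw [← hs, ← hcdef] at hr
    rw [integral_mul_const, hr]
    ring
  rw [hstep, integral_integral_swap (f := fun x t => (QT a11 a12 a22 t x)⁻¹ *
    LL a11 a12 a22 φ x) hprod]
  have hfun : (fun t => ∫ x, (QT a11 a12 a22 t x)⁻¹ * LL a11 a12 a22 φ x)
      =ᵐ[volume.restrict (Set.Ioi 0)]
      (fun t => -(4 * Real.pi ^ 2 * s / a22) * φ ![0, t, 0, 0]) := by
    filter_upwards [hprod.prod_left_ae] with t ht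
    rw [fund ha11 hA t φ h hc ht]
    congr 2
    ext i
    fin_cases i <;> simp
  rw [integral_congr_ae hfun, integral_const_mul, ← mul_assoc]
  congr 1
  rw [hcdef]
  field_simp
  ring
end

section
/- For every C₀ ≥ 1 there is a constant C > 0 with the following property. Let a = (a_{ij}) be a real symmetric positive definite 2×2 matrix with A = det a ≥ 1 which is C₀-elliptic. Then for every (μ₁, μ₂) ∈ ℝ² and η = x + iy ∈ ℂ with μ₁² + x² + y² > 0 and |x| ≤ 1/2, the series defining α̃₁(μ₁, μ₂, η) converges absolutely and |α̃₁(μ₁, μ₂, η) − α₁(μ₁, μ₂, η)| ≤ C·A^{−1/4}·log(1 + A^{−1/2}|μ⃗|_a), where |μ⃗|_a = √(a₁₁μ₁² + 2a₁₂μ₁μ₂ + a₂₂μ₂² + A|η|²). -/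
lemma aux_arctan_nonneg (u : ℝ) (hu : 0 ≤ u) : Real.arctan u ≤ u := by
  have := Real.le_tan (Real.arctan_nonneg.2 hu) (Real.arctan_lt_pi_div_two u)
  rwa [Real.tan_arctan] at this

lemma aux_arctan (u : ℝ) : |Real.arctan u| ≤ |u| := by
  rcases le_total 0 u with h | h
  · rw [abs_of_nonneg h, abs_of_nonneg (Real.arctan_nonneg.2 h)]
    exact aux_arctan_nonneg u h
  · have h' : 0 ≤ -u := by linarith
    rw [← abs_neg, ← Real.arctan_neg, ← abs_neg u, abs_of_nonneg h',
      abs_of_nonneg (Real.arctan_nonneg.2 h')]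
    exact aux_arctan_nonneg _ h'

/-- comparison sequence -/
lemma aux_sum_nat (M : ℝ) (hM : 0 ≤ M) :
    Summable (fun k : ℕ => M / (((k : ℝ) + 1) * ((k : ℝ) + 1 + M))) ∧
    ∑' k : ℕ, M / (((k : ℝ) + 1) * ((k : ℝ) + 1 + M)) ≤ 2 * Real.log (1 + M) := by
  have key : ∀ K : ℕ, ∑ k ∈ Finset.range K, M / (((k : ℝ) + 1) * ((k : ℝ) + 1 + M))
      ≤ 2 * Real.log (1 + M) - 2 * Real.log (1 + M / ((K : ℝ) + 1)) := by
    intro K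
    induction K with
    | zero => simp
    | succ K ih =>
      rw [Finset.sum_range_succ]
      have hk : (0 : ℝ) ≤ K := Nat.cast_nonneg K
      push_cast
      set n : ℝ := (K : ℝ) + 1 with hn
      have hn1 : 1 ≤ n := by linarith
      have h1 : 0 < 1 + M / n := by positivity
      have h2 : 0 < 1 + M / (n + 1) := by positivity
      have h3 := Real.one_sub_inv_le_log_of_pos (div_pos h1 h2)
      rw [Real.log_div h1.ne' h2.ne'] at h3
      have h4 : M / (n * (n + M)) ≤ 2 * (1 - ((1 + M / n) / (1 + M / (n + 1)))⁻¹) := by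
        have : 1 - ((1 + M / n) / (1 + M / (n + 1)))⁻¹ = M / ((n + 1) * (n + M)) := by
          field_simp
          ring
        rw [this, ← mul_div_assoc, div_le_div_iff₀ (by positivity) (by positivity)]
        have : 0 ≤ M * (n + M) * (n - 1) :=
          mul_nonneg (by positivity) (by linarith)
        nlinarith
      linarith
  have key2 : ∀ K : ℕ, ∑ k ∈ Finset.range K, M / (((k : ℝ) + 1) * ((k : ℝ) + 1 + M))
      ≤ 2 * Real.log (1 + M) := by
    intro K
    have := key K
    have h : 0 ≤ Real.log (1 + M / ((K : ℝ) + 1)) := Real.log_nonneg (by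
      have : 0 ≤ M / ((K : ℝ) + 1) := by positivity
      linarith)
    linarith
  have nn : ∀ k : ℕ, 0 ≤ M / (((k : ℝ) + 1) * ((k : ℝ) + 1 + M)) := fun k => by positivity
  exact ⟨summable_of_sum_range_le nn key2, Real.tsum_le_of_sum_range_le nn key2⟩

lemma aux_sum_int (M B : ℝ) (hM : 0 ≤ M) (f : ℤ → ℝ) (h0 : f 0 = 0)
    (hf : ∀ n : ℤ, n ≠ 0 → |f n| ≤ B * (M / (|(n : ℝ)| * (|(n : ℝ)| + M))))
    (hB : 0 ≤ B) :
    Summable (fun n => |f n|) ∧ |∑' n, f n| ≤ B * (4 * Real.log (1 + M)) := by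
  obtain ⟨hs, ht⟩ := aux_sum_nat M hM
  set b : ℤ → ℝ := fun n => B * (M / (|(n : ℝ)| * (|(n : ℝ)| + M))) with hb
  have hle : ∀ n, |f n| ≤ b n := by
    intro n
    by_cases hn : n = 0
    · subst hn; simp [h0, hb]
    · exact hf n hn
  have hS : HasSum (fun k : ℕ => B * (M / (((k : ℝ) + 1) * ((k : ℝ) + 1 + M))))
      (∑' k : ℕ, B * (M / (((k : ℝ) + 1) * ((k : ℝ) + 1 + M)))) := (hs.mul_left B).hasSum
  have e1 : HasSum (fun n : ℕ => b ((n : ℤ) + 1))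
      (∑' k : ℕ, B * (M / (((k : ℝ) + 1) * ((k : ℝ) + 1 + M)))) := by
    convert hS using 1
    funext k
    simp only [hb]; push_cast
    rw [abs_of_nonneg (by positivity : (0 : ℝ) ≤ (k : ℝ) + 1)]
  have e2 : HasSum (fun n : ℕ => b (-((n : ℤ) + 1)))
      (∑' k : ℕ, B * (M / (((k : ℝ) + 1) * ((k : ℝ) + 1 + M)))) := by
    convert hS using 1
    funext k
    simp only [hb]; push_cast
    rw [abs_neg, abs_of_nonneg (by positivity : (0 : ℝ) ≤ (k : ℝ) + 1)]
  have e3 := HasSum.of_add_one_of_neg_add_one e1 e2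
  have hb0 : b 0 = 0 := by simp [hb]
  rw [hb0, tsum_mul_left] at e3
  have sf : Summable (fun n => |f n|) :=
    Summable.of_nonneg_of_le (fun n => abs_nonneg _) hle e3.summable
  refine ⟨sf, ?_⟩
  have h1 : |∑' n, f n| ≤ ∑' n, |f n| := by
    have := norm_tsum_le_tsum_norm (f := f) (by simpa using sf)
    simpa using this
  have h2 : ∑' n, |f n| ≤ ∑' n, b n := sf.tsum_le_tsum hle e3.summable
  rw [e3.tsum_eq] at h2
  have := mul_le_mul_of_nonneg_left ht hB
  linarith

lemma aux_term (m2 p x M : ℝ) (hm : 0 ≤ m2) (hx : |x| ≤ 1 / 2)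
    (hM : M = Real.sqrt (p ^ 2 + m2 + x ^ 2)) (n : ℤ) (hn : n ≠ 0) (r : ℝ)
    (hr : r = Real.sqrt (m2 + (x + n) ^ 2)) :
    |1 / (2 * r) * (1 / 2 + 1 / Real.pi * Real.arctan (p / r)) - 1 / (4 * |(n : ℝ)|)|
      ≤ 4 * (M / (|(n : ℝ)| * (|(n : ℝ)| + M))) := by
  have hM0 : 0 ≤ M := hM ▸ Real.sqrt_nonneg _
  have hMp : |p| ≤ M := by rw [hM]; exact Real.abs_le_sqrt (by nlinarith [sq_nonneg x])
  have hMx : |x| ≤ M := by rw [hM]; exact Real.abs_le_sqrt (by nlinarith [sq_nonneg p])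
  have hMm : Real.sqrt m2 ≤ M := by
    rw [hM]; exact Real.sqrt_le_sqrt (by nlinarith [sq_nonneg p, sq_nonneg x])
  have hN : 1 ≤ |(n : ℝ)| := by exact_mod_cast Int.one_le_abs hn
  have hxn : |x + n| ≤ r := by rw [hr]; exact Real.abs_le_sqrt (by linarith)
  have hxn1 : |(n : ℝ)| - |x| ≤ |x + n| := by
    have := abs_sub_abs_le_abs_sub (n : ℝ) (-x)
    rw [abs_neg] at this
    rwa [show (n : ℝ) - -x = x + n by ring] at this
  have hxn2 : |x + n| ≤ |x| + |(n : ℝ)| := abs_add_le _ _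
  have hr2 : r ≤ Real.sqrt m2 + |x + n| := by
    rw [hr, ← Real.sqrt_sq_eq_abs]
    rw [Real.sqrt_le_left (by positivity)]
    nlinarith [Real.sq_sqrt hm, Real.sq_sqrt (sq_nonneg (x + (n : ℝ))),
      mul_nonneg (Real.sqrt_nonneg m2) (Real.sqrt_nonneg ((x + (n : ℝ)) ^ 2))]
  set N := |(n : ℝ)| with hNdef
  have hrN : N / 2 ≤ r := by linarith
  have hr0 : 0 < r := by linarith
  have hN0 : 0 < N := by linarith
  have hd : |N - r| ≤ 2 * M := by rw [abs_le]; constructor <;> linarith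
  have hpi := Real.pi_pos
  have hpi3 := Real.pi_gt_three
  have hir : 1 / r ≤ 2 / N := by
    rw [div_le_div_iff₀ hr0 hN0]; linarith
  -- split
  set θ := Real.arctan (p / r) with hθ
  have hθ1 : |θ| ≤ Real.pi / 2 := by
    rw [abs_le]; exact ⟨(Real.neg_pi_div_two_lt_arctan _).le, (Real.arctan_lt_pi_div_two _).le⟩
  have hθ2 : |θ| ≤ |p| / r := by
    have : |θ| ≤ |p / r| := by
      rw [hθ]
      exact aux_arctan _
    rwa [abs_div, abs_of_pos hr0] at this
  have hsplit : 1 / (2 * r) * (1 / 2 + 1 / Real.pi * θ) - 1 / (4 * N)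
      = (N - r) / (4 * N * r) + θ / (2 * Real.pi * r) := by
    field_simp
    ring
  rw [hsplit]
  set t := (N - r) / (4 * N * r) + θ / (2 * Real.pi * r) with ht
  have htri : |t| ≤ |N - r| / (4 * N * r) + |θ| / (2 * Real.pi * r) := by
    refine (abs_add_le _ _).trans (le_of_eq ?_)
    rw [abs_div, abs_div, abs_of_pos (by positivity : 0 < 4 * N * r),
      abs_of_pos (by positivity : 0 < 2 * Real.pi * r)]
  have hA1 : |N - r| / (4 * N * r) ≤ 1 / N := by
    rw [div_le_div_iff₀ (by positivity) hN0]
    have : |N - r| ≤ 4 * r := by rw [abs_le]; constructor <;> linarith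
    nlinarith
  have hA2 : |N - r| / (4 * N * r) ≤ M / N ^ 2 := by
    rw [div_le_div_iff₀ (by positivity) (by positivity)]
    calc |N - r| * N ^ 2 ≤ 2 * M * N ^ 2 := by gcongr
      _ = M * (4 * N * (N / 2)) := by ring
      _ ≤ M * (4 * N * r) := by gcongr
  have hB1 : |θ| / (2 * Real.pi * r) ≤ 1 / N := by
    rw [div_le_div_iff₀ (by positivity) hN0]
    calc |θ| * N ≤ Real.pi / 2 * (2 * r) := by gcongr; linarith
      _ ≤ 1 * (2 * Real.pi * r) := by nlinarith [mul_pos hpi hr0]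
  have hB2 : |θ| / (2 * Real.pi * r) ≤ M / N ^ 2 := by
    rw [div_le_div_iff₀ (by positivity) (by positivity)]
    have h1 : |θ| * r ≤ M := ((le_div_iff₀ hr0).1 hθ2).trans hMp
    calc |θ| * N ^ 2 ≤ |θ| * (2 * r) ^ 2 := by gcongr; linarith
      _ = (|θ| * r) * (4 * r) := by ring
      _ ≤ M * (4 * r) := by gcongr
      _ ≤ M * (2 * Real.pi * r) := by gcongr; linarith
  have hC1 : |t| ≤ 2 / N := by
    have : (2 : ℝ) / N = 1 / N + 1 / N := by ring
    linarith
  have hC2 : |t| ≤ 2 * M / N ^ 2 := by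
    have : 2 * M / N ^ 2 = M / N ^ 2 + M / N ^ 2 := by ring
    linarith
  rw [le_div_iff₀ (by positivity)] at hC1 hC2
  rw [← mul_div_assoc, le_div_iff₀ (by positivity)]
  nlinarith [mul_le_mul_of_nonneg_right hC1 hM0]

/-- The `n`-th term (`n ≠ 0`) of the series defining `α̃₁ − α₁`. -/
noncomputable def alpha1Term (a11 a12 a22 μ1 μ2 : ℝ) (η : ℂ) (n : ℤ) : ℝ :=
  if n = 0 then 0
  else alpha1 a11 a12 a22 μ1 μ2 (η + (n : ℂ)) - 1 / (4 * |(n : ℝ)| * Real.sqrt a22)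

/-- `C₀`-ellipticity of the symmetric matrix `(a_{ij})` (scale invariant uniform
ellipticity bound). -/
def IsElliptic (C₀ a11 a12 a22 : ℝ) : Prop :=
  ∀ v1 v2 : ℝ,
    C₀⁻¹ * Real.sqrt (a11 * a22 - a12 ^ 2) * (v1 ^ 2 + v2 ^ 2)
        ≤ a11 * v1 ^ 2 + 2 * a12 * v1 * v2 + a22 * v2 ^ 2 ∧
      a11 * v1 ^ 2 + 2 * a12 * v1 * v2 + a22 * v2 ^ 2
        ≤ C₀ * Real.sqrt (a11 * a22 - a12 ^ 2) * (v1 ^ 2 + v2 ^ 2)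

/-- the series defining `α̃₁` converges absolutely and
`|α̃₁ − α₁| ≤ C·A^{−1/4}·log(1 + A^{−1/2}|μ⃗|_a)` for `|Re η| ≤ 1/2`, uniformly over
`C₀`-elliptic matrices with `A ≥ 1`. -/
theorem statement4 : ∀ C₀ : ℝ, 1 ≤ C₀ → ∃ C : ℝ, 0 < C ∧
    ∀ a11 a12 a22 : ℝ, 0 < a11 → 1 ≤ a11 * a22 - a12 ^ 2 → IsElliptic C₀ a11 a12 a22 →
    ∀ μ1 μ2 x y : ℝ, 0 < μ1 ^ 2 + x ^ 2 + y ^ 2 → |x| ≤ 1 / 2 →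
      Summable (fun n : ℤ =>
        |alpha1Term a11 a12 a22 μ1 μ2 ((x : ℂ) + (y : ℂ) * Complex.I) n|) ∧
      |∑' n : ℤ, alpha1Term a11 a12 a22 μ1 μ2 ((x : ℂ) + (y : ℂ) * Complex.I) n|
        ≤ C * (a11 * a22 - a12 ^ 2) ^ (-(1 : ℝ) / 4) *
          Real.log (1 + (a11 * a22 - a12 ^ 2) ^ (-(1 : ℝ) / 2) *
            Real.sqrt (a11 * μ1 ^ 2 + 2 * a12 * μ1 * μ2 + a22 * μ2 ^ 2
              + (a11 * a22 - a12 ^ 2) * (x ^ 2 + y ^ 2))) := by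
  intro C₀ hC₀
  have hC₀' : 0 < C₀ := by linarith
  refine ⟨16 * Real.sqrt C₀, by positivity, ?_⟩
  intro a11 a12 a22 ha11 hA hell μ1 μ2 x y hpos hx
  set A := a11 * a22 - a12 ^ 2 with hAdef
  have hA0 : 0 < A := by linarith
  have h22 : C₀⁻¹ * Real.sqrt A ≤ a22 := by
    have := (hell 0 1).1
    simpa [← hAdef] using this
  have hsA : 0 < Real.sqrt A := Real.sqrt_pos.2 hA0
  have ha22 : 0 < a22 := lt_of_lt_of_le (by positivity) h22
  have hs22 : 0 < Real.sqrt a22 := Real.sqrt_pos.2 ha22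
  have hs22' : Real.sqrt a22 ^ 2 = a22 := Real.sq_sqrt ha22.le
  have hsA' : Real.sqrt A ^ 2 = A := Real.sq_sqrt hA0.le
  set p := (a22 * μ2 + a12 * μ1) / (Real.sqrt A * Real.sqrt a22) with hp
  set m2 := μ1 ^ 2 / a22 + y ^ 2 with hm2
  set M := Real.sqrt (p ^ 2 + m2 + x ^ 2) with hM
  have hm2' : 0 ≤ m2 := by positivity
  have hMeq : A ^ (-(1 : ℝ) / 2) * Real.sqrt (a11 * μ1 ^ 2 + 2 * a12 * μ1 * μ2 + a22 * μ2 ^ 2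
              + A * (x ^ 2 + y ^ 2)) = M := by
    rw [neg_div, Real.rpow_neg hA0.le, ← Real.sqrt_eq_rpow, ← Real.sqrt_inv,
      ← Real.sqrt_mul (by positivity), hM]
    congr 1
    rw [hp, div_pow, mul_pow, hs22', hsA', hm2]
    field_simp
    rw [hAdef]
    ring
  rw [hMeq]
  have hA4 : 1 / Real.sqrt a22 ≤ Real.sqrt C₀ * A ^ (-(1 : ℝ) / 4) := by
    have e : A ^ (-(1 : ℝ) / 4) = 1 / Real.sqrt (Real.sqrt A) := by
      rw [neg_div, Real.rpow_neg hA0.le, Real.sqrt_eq_rpow, Real.sqrt_eq_rpow,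
        ← Real.rpow_mul hA0.le, one_div]
      norm_num
    have h : Real.sqrt (Real.sqrt A) ≤ Real.sqrt C₀ * Real.sqrt a22 := by
      rw [← Real.sqrt_mul hC₀'.le]
      apply Real.sqrt_le_sqrt
      rwa [inv_mul_le_iff₀ hC₀'] at h22
    rw [e, ← mul_div_assoc, mul_one, div_le_div_iff₀ hs22 (Real.sqrt_pos.2 hsA)]
    linarith
  have hterm : ∀ n : ℤ, n ≠ 0 →
      |alpha1Term a11 a12 a22 μ1 μ2 ((x : ℂ) + (y : ℂ) * Complex.I) n| ≤
        (4 * (1 / Real.sqrt a22)) * (M / (|(n : ℝ)| * (|(n : ℝ)| + M))) := by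
    intro n hn
    have h := aux_term m2 p x M hm2' hx hM n hn _ rfl
    set r := Real.sqrt (m2 + (x + n) ^ 2) with hr
    have hsq : Real.sqrt (μ1 ^ 2 + a22 * Complex.normSq ((x : ℂ) + (y : ℂ) * Complex.I + (n : ℂ)))
        = Real.sqrt a22 * r := by
      rw [hr, ← Real.sqrt_mul ha22.le]
      congr 1
      simp [Complex.normSq_apply, hm2]
      field_simp
      ring
    have heq : alpha1Term a11 a12 a22 μ1 μ2 ((x : ℂ) + (y : ℂ) * Complex.I) n =
        1 / Real.sqrt a22 * (1 / (2 * r) * (1 / 2 + 1 / Real.pi * Real.arctan (p / r))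
          - 1 / (4 * |(n : ℝ)|)) := by
      simp only [alpha1Term, if_neg hn, alpha1, hsq, ← hAdef]
      have : (a22 * μ2 + a12 * μ1) / (Real.sqrt A * (Real.sqrt a22 * r)) = p / r := by
        rw [hp, div_div, mul_assoc]
      rw [this, mul_sub]
      congr 1
      · ring
      · ring
    rw [heq, abs_mul, abs_of_pos (by positivity : 0 < 1 / Real.sqrt a22)]
    calc _ ≤ 1 / Real.sqrt a22 * (4 * (M / (|(n : ℝ)| * (|(n : ℝ)| + M)))) := by gcongr
      _ = _ := by ring
  have hM0 : 0 ≤ M := Real.sqrt_nonneg _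
  obtain ⟨s1, s2⟩ := aux_sum_int M (4 * (1 / Real.sqrt a22)) hM0 _ (by simp [alpha1Term]) hterm
    (by positivity)
  refine ⟨s1, s2.trans ?_⟩
  have hlog : 0 ≤ Real.log (1 + M) := Real.log_nonneg (by linarith)
  calc _ = 16 * (1 / Real.sqrt a22) * Real.log (1 + M) := by ring
    _ ≤ 16 * (Real.sqrt C₀ * A ^ (-(1 : ℝ) / 4)) * Real.log (1 + M) := by gcongr
    _ = _ := by ring
end

section
/- Let a = (a_{ij}) be a real symmetric positive definite 2×2 matrix with determinant A = a₁₁a₂₂ − a₁₂² > 0. For every (μ₁, μ₂, y) ∈ ℝ³ not lying on the closed ray {μ₁ = 0, y = 0, μ₂ ≥ 0}, the Fourier average ᾱ₁(μ₁, μ₂, y) = ∫₀¹ α̃₁(μ₁, μ₂, x + iy) dx is well defined and is given by the closed formula ᾱ₁(μ₁, μ₂, y) = (1/(2√a₂₂))·( log 2 − γ_E − log( ϱ'/√A − (a₂₂μ₂ + a₁₂μ₁)/√(A·a₂₂) ) ), where ϱ' = √(a₁₁μ₁² + 2a₁₂μ₁μ₂ + a₂₂μ₂² + Ay²) and γ_E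 is the Euler–Mascheroni constant. -/
/-- The periodic function `α̃₁ = α₁ + Σ_{n≠0}(α₁(μ₁,μ₂,η+n) − 1/(4|n|√a₂₂))`. -/
noncomputable def tildeAlpha1 (a11 a12 a22 μ1 μ2 : ℝ) (η : ℂ) : ℝ :=
  alpha1 a11 a12 a22 μ1 μ2 η + ∑' n : ℤ, alpha1Term a11 a12 a22 μ1 μ2 η n

open Filter Topology MeasureTheory Set

lemma aux_bound (g : ℝ → ℝ) (K C : ℝ) (hC0 : 0 ≤ C)
    (hK : ∀ x, |g x| ≤ K) (hC : ∀ x, x ≠ 0 → |g x - 1 / (2 * |x|)| ≤ C / x ^ 2)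
    (x : ℝ) (hx0 : 0 ≤ x) (hx1 : x ≤ 1) (n : ℤ) :
    |g (x + n) - 1 / (2 * |(n : ℝ)|)| ≤
      (4 * C + K + 2) * (1 / (n : ℝ) ^ 2) + if n = 0 then K else 0 := by
  have hK0 : 0 ≤ K := (abs_nonneg _).trans (hK 0)
  by_cases h0 : n = 0
  · subst h0
    simpa using hK x
  rw [if_neg h0, add_zero]
  by_cases h1 : n = -1
  · subst h1
    have := abs_sub (g (x + ((-1 : ℤ) : ℝ))) (1 / (2 * |((-1 : ℤ) : ℝ)|))
    have h2 := hK (x + ((-1 : ℤ) : ℝ))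
    norm_num at this h2 ⊢
    linarith
  have hn : |(n : ℝ)| / 2 ≤ |x + n| ∧ 0 < |(n : ℝ)| ∧ |(|(n : ℝ)| - |x + n|)| ≤ 1 := by
    rcases lt_or_ge n 0 with h | h
    · have : (n : ℝ) ≤ -2 := by exact_mod_cast (by omega : n ≤ -2)
      rw [abs_of_neg (by linarith : (n : ℝ) < 0), abs_of_neg (by linarith : x + (n : ℝ) < 0)]
      refine ⟨by linarith, by linarith, ?_⟩
      rw [abs_le]; constructor <;> linarith
    · have : (1 : ℝ) ≤ n := by exact_mod_cast (by omega : 1 ≤ n)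
      rw [abs_of_pos (by linarith : 0 < (n : ℝ)), abs_of_pos (by linarith : 0 < x + (n : ℝ))]
      refine ⟨by linarith, by linarith, ?_⟩
      rw [abs_le]; constructor <;> linarith
  obtain ⟨ha, hp, hd⟩ := hn
  have hxp : 0 < |x + n| := by linarith
  have e1 : |g (x + n) - 1 / (2 * |x + n|)| ≤ 4 * C * (1 / (n : ℝ) ^ 2) := by
    refine (hC _ (abs_pos.1 hxp)).trans ?_
    rw [← sq_abs (x + n), ← sq_abs (n : ℝ)]
    rw [mul_one_div, div_le_div_iff₀ (by positivity) (by positivity)]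
    have : |(n : ℝ)| ^ 2 ≤ 4 * |x + n| ^ 2 := by nlinarith
    nlinarith
  have e2 : |1 / (2 * |x + n|) - 1 / (2 * |(n : ℝ)|)| ≤ 1 * (1 / (n : ℝ) ^ 2) := by
    have : 1 / (2 * |x + n|) - 1 / (2 * |(n : ℝ)|)
        = (|(n : ℝ)| - |x + n|) / (2 * |x + n| * |(n : ℝ)|) := by
      field_simp
    rw [this, abs_div, abs_of_pos (by positivity : 0 < 2 * |x + n| * |(n : ℝ)|),
      ← sq_abs (n : ℝ), one_mul, div_le_div_iff₀ (by positivity) (by positivity)]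
    nlinarith
  have e3 := abs_sub_le (g (x + n)) (1 / (2 * |x + n|)) (1 / (2 * |(n : ℝ)|))
  have : 0 ≤ 1 / (n : ℝ) ^ 2 := by positivity
  nlinarith

lemma aux_main (g : ℝ → ℝ) (hm : Measurable g) (K C : ℝ) (hC0 : 0 ≤ C)
    (hK : ∀ x, |g x| ≤ K) (hC : ∀ x, x ≠ 0 → |g x - 1 / (2 * |x|)| ≤ C / x ^ 2)
    (heven : ∀ x, g (-x) = g x) (L : ℝ)
    (hL : Tendsto (fun N : ℕ => 2 * (∫ x in (0 : ℝ)..N, g x) - Real.log N) atTop (𝓝 L)) :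
    (∀ x, 0 ≤ x → x ≤ 1 → Summable (fun n : ℤ => g (x + n) - 1 / (2 * |(n : ℝ)|))) ∧
    IntervalIntegrable (fun x => ∑' n : ℤ, (g (x + n) - 1 / (2 * |(n : ℝ)|))) volume 0 1 ∧
    ∫ x in (0 : ℝ)..1, (∑' n : ℤ, (g (x + n) - 1 / (2 * |(n : ℝ)|)))
      = L - Real.eulerMascheroniConstant := by
  set u : ℤ → ℝ := fun n => (4 * C + K + 2) * (1 / (n : ℝ) ^ 2) + if n = 0 then K else 0 with hu
  have hus : Summable u := by
    refine ((Real.summable_one_div_int_pow.2 (by norm_num : 1 < 2)).mul_left _).add ?_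
    exact (hasSum_ite_eq 0 K).summable
  have hb := aux_bound g K C hC0 hK hC
  have hs : ∀ x, 0 ≤ x → x ≤ 1 → Summable (fun n : ℤ => g (x + n) - 1 / (2 * |(n : ℝ)|)) :=
    fun x h0 h1 => Summable.of_norm_bounded hus (fun n => hb x h0 h1 n)
  have hmeas : ∀ n : ℤ, Measurable (fun x => g (x + n) - 1 / (2 * |(n : ℝ)|)) := fun n => by
    fun_prop
  have hgi : ∀ a b : ℝ, IntervalIntegrable g volume a b := fun a b => by
    refine (intervalIntegrable_const (c := K)).mono_fun hm.aestronglyMeasurable ?_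
    refine ae_of_all _ fun x => ?_
    simpa using (hK x).trans (le_abs_self K)
  refine ⟨hs, ?_, ?_⟩
  · refine (intervalIntegrable_const (c := ∑' n, u n)).mono_fun
      (Measurable.tsum hmeas).aestronglyMeasurable ?_
    rw [Filter.EventuallyLE, ae_restrict_iff' measurableSet_uIoc]
    refine ae_of_all _ fun x hx => ?_
    rw [uIoc_of_le zero_le_one] at hx
    refine (tsum_of_norm_bounded hus.hasSum (fun n => hb x hx.1.le hx.2 n)).trans (le_abs_self _)
  · have key := intervalIntegral.hasSum_integral_of_dominated_convergence (μ := volume)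
      (a := 0) (b := 1) (F := fun (n : ℤ) x => g (x + n) - 1 / (2 * |(n : ℝ)|))
      (f := fun x => ∑' n : ℤ, (g (x + n) - 1 / (2 * |(n : ℝ)|)))
      (fun n _ => u n) (fun n => (hmeas n).aestronglyMeasurable)
      (fun n => ae_of_all _ fun x hx => by
        rw [uIoc_of_le zero_le_one] at hx
        exact hb x hx.1.le hx.2 n)
      (ae_of_all _ fun x hx => hus) intervalIntegrable_const
      (ae_of_all _ fun x hx => by
        rw [uIoc_of_le zero_le_one] at hx
        exact (hs x hx.1.le hx.2).hasSum)
    have k2 := key.nat_add_neg_add_one.tendsto_sum_nat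
    refine tendsto_nhds_unique k2 ?_
    have hint : ∀ n : ℤ, ∫ x in (0 : ℝ)..1, (g (x + n) - 1 / (2 * |(n : ℝ)|))
        = (∫ x in (n : ℝ)..(n + 1), g x) - 1 / (2 * |(n : ℝ)|) := fun n => by
      rw [intervalIntegral.integral_sub, intervalIntegral.integral_comp_add_right]
      · simp [add_comm]
      · simpa using (hgi (0 + n) (1 + n)).comp_add_right (n : ℝ)
      · exact intervalIntegrable_const
    have hneg : ∀ n : ℕ, ∫ x in (-((n : ℝ) + 1))..(-((n : ℝ) + 1) + 1), g x
        = ∫ x in (n : ℝ)..(n + 1), g x := fun n => by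
      have := intervalIntegral.integral_comp_neg (a := (n : ℝ)) (b := n + 1) g
      simp only [heven] at this
      rw [this]
      congr 1; ring
    have hsum : ∀ N : ℕ, ∑ i ∈ Finset.range N,
        ((∫ x in (0 : ℝ)..1, (g (x + (i : ℤ)) - 1 / (2 * |((i : ℤ) : ℝ)|))) +
         (∫ x in (0 : ℝ)..1, (g (x + ((-((i : ℤ) + 1) : ℤ) : ℝ))
            - 1 / (2 * |((-((i : ℤ) + 1) : ℤ) : ℝ)|))))
        = 2 * (∫ x in (0 : ℝ)..N, g x) - (harmonic N : ℝ) + 1 / (2 * N) := by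
      intro N
      induction N with
      | zero => simp
      | succ N ih =>
        rw [Finset.sum_range_succ, ih, hint, hint, harmonic_succ]
        have : (((-((N : ℤ) + 1) : ℤ)) : ℝ) = -((N : ℝ) + 1) := by push_cast; ring
        rw [this, hneg, Int.cast_natCast, abs_neg, abs_of_nonneg (by positivity),
          abs_of_nonneg (by positivity)]
        have h2 := intervalIntegral.integral_add_adjacent_intervals (hgi 0 N) (hgi N (N + 1))
        push_cast
        rw [← h2]
        field_simp
        ring
    have h3 : Tendsto (fun N : ℕ => 2 * (∫ x in (0 : ℝ)..N, g x) - (harmonic N : ℝ) + 1 / (2 * N))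
        atTop (𝓝 (L - Real.eulerMascheroniConstant)) := by
      have h4 : Tendsto (fun N : ℕ => (1 / (2 * N) : ℝ)) atTop (𝓝 0) := by
        have := tendsto_one_div_atTop_nhds_zero_nat (𝕜 := ℝ) |>.const_mul (1 / 2)
        simp only [mul_zero] at this
        refine this.congr fun N => ?_
        rw [one_div_mul_one_div]
      have := (hL.sub Real.tendsto_harmonic_sub_log).add h4
      rw [add_zero] at this
      refine this.congr fun N => ?_
      ring
    refine h3.congr fun N => ?_
    rw [← hsum]

lemma abs_arctan_le_abs (x : ℝ) : |Real.arctan x| ≤ |x| := by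
  have := Convex.norm_image_sub_le_of_norm_hasDerivWithin_le (f := Real.arctan)
    (f' := fun x => 1 / (1 + x ^ 2)) (s := univ) (C := 1) (x := 0) (y := x)
    (fun x _ => (Real.hasDerivAt_arctan x).hasDerivWithinAt)
    (fun x _ => by
      rw [Real.norm_eq_abs, abs_of_nonneg (by positivity), div_le_one (by positivity)]
      nlinarith [sq_nonneg x]) convex_univ (mem_univ _) (mem_univ _)
  simpa using this

lemma integral_inv_sq (r : ℝ) (hr : 0 < r) (c : ℝ) :
    ∫ t in (0 : ℝ)..c, 1 / (r ^ 2 + t ^ 2) = Real.arctan (c / r) / r := by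
  rw [intervalIntegral.integral_eq_sub_of_hasDerivAt (f := fun t => Real.arctan (t / r) / r)]
  · simp
  · intro x _
    have := (((hasDerivAt_id x).div_const r).arctan).div_const r
    refine this.congr_deriv ?_
    field_simp
    rfl
  · apply Continuous.intervalIntegrable
    refine continuous_const.div (by fun_prop) fun x => ?_
    positivity

lemma integral_inv_sqrt (b : ℝ) (hb : 0 < b) (c : ℝ) :
    ∫ t in (0 : ℝ)..c, 1 / √(t ^ 2 + b ^ 2) = Real.arsinh (c / b) := by
  rw [intervalIntegral.integral_eq_sub_of_hasDerivAt (f := fun t => Real.arsinh (t / b))]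
  · simp
  · intro x _
    have := ((hasDerivAt_id x).div_const b).arsinh
    refine this.congr_deriv ?_
    simp only [smul_eq_mul]
    have : √(x ^ 2 + b ^ 2) = b * √(1 + (x / b) ^ 2) := by
      rw [← Real.sqrt_sq hb.le, ← Real.sqrt_mul (sq_nonneg _), Real.sqrt_sq hb.le]
      congr 1; field_simp; ring
    rw [this]
    field_simp
    rfl
  · apply Continuous.intervalIntegrable
    refine continuous_const.div (by fun_prop) fun x => ?_
    positivity

noncomputable def GG (b c x : ℝ) : ℝ :=
  1 / √(x ^ 2 + b ^ 2) * (1 / 2 + 1 / Real.pi * Real.arctan (c / √(x ^ 2 + b ^ 2)))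

lemma GG_measurable (b c : ℝ) : Measurable (GG b c) := by
  unfold GG
  have := Real.continuous_arctan.measurable
  fun_prop

lemma GG_even (b c x : ℝ) : GG b c (-x) = GG b c x := by simp [GG]

lemma GG_asymp (b c : ℝ) (hb : 0 ≤ b) (x : ℝ) (hx : x ≠ 0) :
    |GG b c x - 1 / (2 * |x|)| ≤ (b + |c|) / x ^ 2 := by
  unfold GG
  set r := √(x ^ 2 + b ^ 2) with hr
  have hxp : 0 < |x| := abs_pos.2 hx
  have h1 : |x| ≤ r := by
    rw [hr]; apply Real.le_sqrt_of_sq_le; rw [sq_abs]; nlinarith [sq_nonneg b]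
  have h2 : r ≤ |x| + b := by
    rw [hr, Real.sqrt_le_left (by positivity), ← sq_abs x]; nlinarith
  have hrp : 0 < r := by linarith
  have e : 1 / r * (1 / 2 + 1 / Real.pi * Real.arctan (c / r)) - 1 / (2 * |x|)
      = (|x| - r) / (2 * r * |x|) + 1 / Real.pi * (Real.arctan (c / r) / r) := by
    field_simp
    ring
  rw [e, add_div, ← sq_abs x]
  refine (abs_add_le _ _).trans (add_le_add ?_ ?_)
  · rw [abs_div, abs_of_pos (by positivity : 0 < 2 * r * |x|), abs_of_nonpos (by linarith),
      div_le_div_iff₀ (by positivity) (by positivity)]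
    have : |x| * |x| ≤ r * |x| := by nlinarith
    have h5 : -(|x| - r) ≤ b := by linarith
    nlinarith [mul_nonneg hb (by positivity : 0 ≤ r * |x|),
      mul_le_mul_of_nonneg_right h5 (sq_nonneg |x|)]
  · rw [abs_mul, abs_of_pos (by positivity : 0 < 1 / Real.pi), abs_div, abs_of_pos hrp]
    have h3 := abs_arctan_le_abs (c / r)
    rw [abs_div, abs_of_pos hrp] at h3
    have h4 : 1 / Real.pi ≤ 1 := by
      rw [div_le_one Real.pi_pos]; linarith [Real.pi_gt_three]
    calc 1 / Real.pi * (|Real.arctan (c / r)| / r) ≤ 1 * (|c| / r / r) := by gcongr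
      _ = |c| / r ^ 2 := by rw [one_mul, div_div, sq]
      _ ≤ |c| / |x| ^ 2 := by gcongr

lemma GG_bdd_pos (b c : ℝ) (hb : 0 < b) (x : ℝ) : |GG b c x| ≤ 1 / b := by
  unfold GG
  set r := √(x ^ 2 + b ^ 2) with hr
  have h1 : b ≤ r := by
    rw [hr]; apply Real.le_sqrt_of_sq_le; nlinarith [sq_nonneg x]
  have hrp : 0 < r := by linarith
  rw [abs_mul, abs_of_pos (by positivity : 0 < 1 / r)]
  have h2 : |1 / 2 + 1 / Real.pi * Real.arctan (c / r)| ≤ 1 := by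
    have e1 := Real.arctan_lt_pi_div_two (c / r)
    have e2 := Real.neg_pi_div_two_lt_arctan (c / r)
    have hpi := Real.pi_pos
    have : 1 / 2 + 1 / Real.pi * Real.arctan (c / r) 
      = (Real.pi / 2 + Real.arctan (c / r)) / Real.pi := by field_simp
    rw [this, abs_of_pos (by apply div_pos <;> linarith), div_le_one hpi]
    linarith
  calc 1 / r * _ ≤ 1 / b * 1 := by gcongr
    _ = 1 / b := mul_one _

lemma GG_zero (c : ℝ) (hc : c < 0) (x : ℝ) (hx : x ≠ 0) :
    GG 0 c x = 1 / Real.pi * (Real.arctan (|x| / -c) / |x|) := by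
  unfold GG
  have hxp : 0 < |x| := abs_pos.2 hx
  have : √(x ^ 2 + 0 ^ 2) = |x| := by simp [Real.sqrt_sq_eq_abs]
  rw [this]
  have h := Real.arctan_inv_of_pos (x := |x| / -c) (div_pos hxp (by linarith))
  have e : c / |x| = - (|x| / -c)⁻¹ := by rw [inv_div, neg_div, neg_neg]
  rw [e, Real.arctan_neg, h]
  have := Real.pi_pos
  field_simp
  ring

lemma GG_bdd_zero (c : ℝ) (hc : c < 0) (x : ℝ) : |GG 0 c x| ≤ 1 / -c := by
  by_cases hx : x = 0
  · subst hx
    simp [GG]; linarith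
  have hxp : 0 < |x| := abs_pos.2 hx
  have hc' : 0 < -c := by linarith
  rw [GG_zero c hc x hx, abs_mul,
    abs_of_pos (by have := Real.pi_pos; positivity : 0 < 1 / Real.pi), abs_div, abs_abs]
  have h3 := abs_arctan_le_abs (|x| / -c)
  rw [abs_of_pos (div_pos hxp hc')] at h3
  have h4 : 1 / Real.pi ≤ 1 := by
    rw [div_le_one Real.pi_pos]; linarith [Real.pi_gt_three]
  calc 1 / Real.pi * (|Real.arctan (|x| / -c)| / |x|) ≤ 1 * (|x| / -c / |x|) := by gcongr
    _ = 1 / -c := by field_simp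

lemma GG_lim_pos (b c : ℝ) (hb : 0 < b) :
    Tendsto (fun N : ℕ => 2 * (∫ x in (0 : ℝ)..N, GG b c x) - Real.log N) atTop
      (𝓝 (Real.log 2 - Real.log (√(b ^ 2 + c ^ 2) - c))) := by
  have hr : ∀ x : ℝ, 0 < √(x ^ 2 + b ^ 2) := fun x => by positivity
  have hsplit : ∀ N : ℕ, 2 * (∫ x in (0 : ℝ)..N, GG b c x) = Real.arsinh (N / b) +
      2 / Real.pi * ∫ t in (0 : ℝ)..c, 
        Real.arctan (N / √(t ^ 2 + b ^ 2)) / √(t ^ 2 + b ^ 2) := by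
    intro N
    have h1 : ∀ x, GG b c x = 1 / 2 * (1 / √(x ^ 2 + b ^ 2)) + 
        1 / Real.pi * ∫ t in (0 : ℝ)..c, 1 / (x ^ 2 + b ^ 2 + t ^ 2) := by
      intro x
      have := integral_inv_sq _ (hr x) c
      rw [Real.sq_sqrt (by positivity)] at this
      rw [this, GG]
      ring
    have hcont : Continuous (fun p : ℝ × ℝ => 1 / (p.1 ^ 2 + b ^ 2 + p.2 ^ 2)) := by
      refine continuous_const.div (by fun_prop) fun x => ?_
      positivity
    simp only [h1]
    rw [intervalIntegral.integral_add, intervalIntegral.integral_const_mul,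
      intervalIntegral.integral_const_mul, integral_inv_sqrt b hb,
      intervalIntegral_intervalIntegral_swap]
    · have : ∀ t : ℝ, ∫ x in (0 : ℝ)..N, 1 / (x ^ 2 + b ^ 2 + t ^ 2)
          = Real.arctan (N / √(t ^ 2 + b ^ 2)) / √(t ^ 2 + b ^ 2) := by
        intro t
        rw [← integral_inv_sq _ (hr t), Real.sq_sqrt (by positivity)]
        congr 1; ext x; congr 1; ring
      simp only [this]
      ring
    · exact (hcont.continuousOn.integrableOn_compact
        (isCompact_uIcc.prod isCompact_uIcc)).mono_set
        (Set.prod_mono uIoc_subset_uIcc uIoc_subset_uIcc)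
    · apply Continuous.intervalIntegrable
      exact continuous_const.mul (continuous_const.div (by fun_prop) fun x => (hr x).ne')
    · apply Continuous.intervalIntegrable
      exact continuous_const.mul (intervalIntegral.continuous_parametric_intervalIntegral_of_continuous' hcont 0 c)
  have hA : Tendsto (fun N : ℕ => Real.arsinh (N / b) - Real.log N) atTop
      (𝓝 (Real.log (2 / b))) := by
    have h1 : Tendsto (fun N : ℕ => 1 / b + √((1 / (N : ℝ)) ^ 2 + (1 / b) ^ 2)) atTop
        (𝓝 (1 / b + √(0 ^ 2 + (1 / b) ^ 2))) := by
      refine tendsto_const_nhds.add ?_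
      exact (((tendsto_one_div_atTop_nhds_zero_nat (𝕜 := ℝ)).pow 2).add_const _).sqrt
    have h2 : 1 / b + √(0 ^ 2 + (1 / b) ^ 2) = 2 / b := by
      rw [zero_pow (by norm_num), zero_add, Real.sqrt_sq (by positivity)]; ring
    rw [h2] at h1
    have h3 := h1.log (by positivity)
    refine h3.congr' ?_
    filter_upwards [eventually_gt_atTop 0] with N hN
    have hN' : (0 : ℝ) < N := by exact_mod_cast hN
    rw [Real.arsinh, ← Real.log_div (by positivity) hN'.ne']
    congr 1
    have : √(1 + (N / b) ^ 2) = N * √((1 / (N : ℝ)) ^ 2 + (1 / b) ^ 2) := by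
      nth_rewrite 2 [← Real.sqrt_sq hN'.le]
      rw [← Real.sqrt_mul (sq_nonneg _)]
      congr 1; field_simp
    rw [this]
    field_simp
  have hB : Tendsto (fun N : ℕ => ∫ t in (0 : ℝ)..c, 
        Real.arctan (N / √(t ^ 2 + b ^ 2)) / √(t ^ 2 + b ^ 2)) atTop
      (𝓝 (∫ t in (0 : ℝ)..c, (Real.pi / 2) / √(t ^ 2 + b ^ 2))) := by
    refine intervalIntegral.tendsto_integral_filter_of_dominated_convergence
      (fun _ => (Real.pi / 2) / b) ?_ ?_ intervalIntegrable_const ?_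
    · refine Eventually.of_forall fun N => ?_
      apply Continuous.aestronglyMeasurable
      refine Continuous.div ?_ (by fun_prop) fun x => (hr x).ne'
      exact Real.continuous_arctan.comp (continuous_const.div (by fun_prop) fun x => (hr x).ne')
    · refine Eventually.of_forall fun N => ae_of_all _ fun t _ => ?_
      rw [norm_div, Real.norm_eq_abs, Real.norm_eq_abs, abs_of_pos (hr t)]
      have : b ≤ √(t ^ 2 + b ^ 2) := by
        apply Real.le_sqrt_of_sq_le; nlinarith [sq_nonneg t]
      have h2 : |Real.arctan (N / √(t ^ 2 + b ^ 2))| ≤ Real.pi / 2 := by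
        rw [abs_le]
        exact ⟨(Real.neg_pi_div_two_lt_arctan _).le, (Real.arctan_lt_pi_div_two _).le⟩
      have := Real.pi_pos
      gcongr
    · refine ae_of_all _ fun t _ => Tendsto.div_const ?_ _
      refine (tendsto_nhds_of_tendsto_nhdsWithin Real.tendsto_arctan_atTop).comp ?_
      exact tendsto_natCast_atTop_atTop.atTop_div_const (hr t)
  have hB' : ∫ t in (0 : ℝ)..c, (Real.pi / 2) / √(t ^ 2 + b ^ 2)
      = Real.pi / 2 * Real.arsinh (c / b) := by
    rw [← integral_inv_sqrt b hb, ← intervalIntegral.integral_const_mul]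
    congr 1; ext t; ring
  rw [hB'] at hB
  have := hA.add (hB.const_mul (2 / Real.pi))
  have hval : Real.log (2 / b) + 2 / Real.pi * (Real.pi / 2 * Real.arsinh (c / b))
      = Real.log 2 - Real.log (√(b ^ 2 + c ^ 2) - c) := by
    have hpi := Real.pi_pos
    have e1 : 2 / Real.pi * (Real.pi / 2 * Real.arsinh (c / b)) = Real.arsinh (c / b) := by
      field_simp
    have hlt : |c| < √(b ^ 2 + c ^ 2) := by
      apply Real.lt_sqrt_of_sq_lt; rw [sq_abs]; nlinarith [sq_pos_of_pos hb]
    have hp1 : 0 < √(b ^ 2 + c ^ 2) - c := by linarith [le_abs_self c]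
    have hp2 : 0 < √(b ^ 2 + c ^ 2) + c := by linarith [neg_abs_le c]
    have hs := Real.sq_sqrt (by positivity : 0 ≤ b ^ 2 + c ^ 2)
    have e2 : c / b + √(1 + (c / b) ^ 2) = (√(b ^ 2 + c ^ 2) + c) / b := by
      have : √(b ^ 2 + c ^ 2) = b * √(1 + (c / b) ^ 2) := by
        nth_rewrite 2 [← Real.sqrt_sq hb.le]
        rw [← Real.sqrt_mul (sq_nonneg _)]
        congr 1; field_simp
      rw [this]; field_simp; ring
    rw [e1, Real.arsinh, e2, ← Real.log_mul (by positivity) (by positivity),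
      ← Real.log_div (by norm_num) hp1.ne']
    congr 1
    field_simp
    nlinarith
  rw [hval] at this
  refine this.congr fun N => ?_
  rw [hsplit]
  ring

lemma GG_lim_zero (c : ℝ) (hc : c < 0) :
    Tendsto (fun N : ℕ => 2 * (∫ x in (0 : ℝ)..N, GG 0 c x) - Real.log N) atTop
      (𝓝 (Real.log 2 - Real.log (√(0 ^ 2 + c ^ 2) - c))) := by
  have hc' : 0 < -c := by linarith
  have hpi := Real.pi_pos
  set φ : ℝ → ℝ := dslope Real.arctan 0 with hφ
  have hφc : Continuous φ := by
    rw [← continuousOn_univ]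
    rw [hφ, continuousOn_dslope univ_mem]
    exact ⟨Real.continuous_arctan.continuousOn, Real.differentiable_arctan.differentiableAt⟩
  have hφv : ∀ x, x ≠ 0 → φ x = Real.arctan x / x := fun x hx => by
    rw [hφ, dslope_of_ne _ hx, slope_def_field]; simp
  have hφi : ∀ a b, IntervalIntegrable φ volume a b := fun a b => hφc.intervalIntegrable a b
  have hD : ∀ x, HasDerivAt (fun x => ∫ t in (0 : ℝ)..x, φ t) (φ x) x := fun x =>
    intervalIntegral.integral_hasDerivAt_right (hφi 0 x)
      (hφc.stronglyMeasurableAtFilter _ _) hφc.continuousAt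
  have hrec : ∀ M : ℝ, 0 < M → ∫ t in (0 : ℝ)..M, φ t
      = Real.pi / 2 * Real.log M + ∫ t in (0 : ℝ)..M⁻¹, φ t := by
    have hd : ∀ x ∈ Ioi (0 : ℝ), HasDerivAt (fun M : ℝ => (∫ t in (0 : ℝ)..M, φ t)
       - (Real.pi / 2 * Real.log M + ∫ t in (0 : ℝ)..M⁻¹, φ t)) 0 x := by
      intro x hx
      have hx : 0 < x := hx
      have h1 := (hD x⁻¹).comp x (hasDerivAt_inv hx.ne')
      have h2 := (hD x).sub (((Real.hasDerivAt_log hx.ne').const_mul (Real.pi / 2)).add h1)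
      refine h2.congr_deriv ?_
      rw [hφv x hx.ne', hφv x⁻¹ (inv_ne_zero hx.ne'), Real.arctan_inv_of_pos hx]
      field_simp
      ring
    intro M hM
    have := isOpen_Ioi.is_const_of_deriv_eq_zero (isPreconnected_Ioi)
      (fun x hx => (hd x hx).differentiableAt.differentiableWithinAt)
      (fun x hx => (hd x hx).deriv) (show M ∈ Ioi (0 : ℝ) from hM)
      (show (1 : ℝ) ∈ Ioi (0 : ℝ) from mem_Ioi.2 one_pos)
    simp at this
    linarith
  have hGi : ∀ N : ℕ, ∫ x in (0 : ℝ)..N, GG 0 c x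
      = 1 / Real.pi * ∫ t in (0 : ℝ)..(N / -c), φ t := by
    intro N
    have : ∫ x in (0 : ℝ)..N, GG 0 c x
        = ∫ x in (0 : ℝ)..N, 1 / Real.pi * ((-c)⁻¹ * φ (x / -c)) := by
      apply intervalIntegral.integral_congr_ae
      refine ae_of_all _ fun x hx => ?_
      rw [uIoc_of_le (Nat.cast_nonneg N)] at hx
      have hx := hx.1
      rw [GG_zero c hc x hx.ne', hφv _ (div_pos hx hc').ne', abs_of_pos hx]
      have hc0 : c ≠ 0 := hc.ne
      field_simp
    rw [this, intervalIntegral.integral_const_mul, intervalIntegral.integral_const_mul,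
      intervalIntegral.integral_comp_div _ hc'.ne', smul_eq_mul, zero_div,
      inv_mul_cancel_left₀ hc'.ne']
  have hsm : Tendsto (fun N : ℕ => ∫ t in (0 : ℝ)..((N : ℝ) / -c)⁻¹, φ t) atTop (𝓝 0) := by
    have h1 : Tendsto (fun x => ∫ t in (0 : ℝ)..x, φ t) (𝓝 0) (𝓝 0) := by
      have := (hD 0).continuousAt.tendsto
      simpa using this
    refine h1.comp ?_
    refine tendsto_inv_atTop_zero.comp ?_
    exact tendsto_natCast_atTop_atTop.atTop_div_const hc'
  have hval : Real.log 2 - Real.log (√(0 ^ 2 + c ^ 2) - c) = - Real.log (-c) := by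
    have : √(0 ^ 2 + c ^ 2) - c = 2 * -c := by
      rw [zero_pow (by norm_num), zero_add, Real.sqrt_sq_eq_abs, abs_of_neg hc]; ring
    rw [this, Real.log_mul (by norm_num) hc'.ne']; ring
  rw [hval]
  have := (hsm.const_mul (2 / Real.pi)).const_add (- Real.log (-c))
  rw [mul_zero, add_zero] at this
  refine this.congr' ?_
  filter_upwards [eventually_gt_atTop 0] with N hN
  have hN' : (0 : ℝ) < N := by exact_mod_cast hN
  rw [hGi, hrec _ (div_pos hN' hc'), Real.log_div hN'.ne' hc'.ne']
  field_simp
  ring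



/-- off the closed ray `{μ₁ = 0, y = 0, μ₂ ≥ 0}`, the Fourier average
`ᾱ₁(μ₁,μ₂,y) = ∫₀¹ α̃₁(μ₁,μ₂,x+iy) dx` is well defined and equals
`(1/(2√a₂₂))·(log 2 − γ_E − log(ϱ'/√A − (a₂₂μ₂+a₁₂μ₁)/√(A·a₂₂)))`. -/
theorem statement5 (a11 a12 a22 : ℝ) (ha11 : 0 < a11) (hA : 0 < a11 * a22 - a12 ^ 2)
    (μ1 μ2 y : ℝ) (hoff : ¬(μ1 = 0 ∧ y = 0 ∧ 0 ≤ μ2)) :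
    IntervalIntegrable
      (fun x : ℝ => tildeAlpha1 a11 a12 a22 μ1 μ2 ((x : ℂ) + (y : ℂ) * Complex.I))
      MeasureTheory.volume 0 1 ∧
    (∫ x in (0 : ℝ)..1, tildeAlpha1 a11 a12 a22 μ1 μ2 ((x : ℂ) + (y : ℂ) * Complex.I))
      = (1 / (2 * Real.sqrt a22)) *
        (Real.log 2 - Real.eulerMascheroniConstant -
          Real.log (Real.sqrt (a11 * μ1 ^ 2 + 2 * a12 * μ1 * μ2 + a22 * μ2 ^ 2
              + (a11 * a22 - a12 ^ 2) * y ^ 2) / Real.sqrt (a11 * a22 - a12 ^ 2)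
            - (a22 * μ2 + a12 * μ1) / Real.sqrt ((a11 * a22 - a12 ^ 2) * a22))) := by
  have ha22 : 0 < a22 := by
    by_contra h
    push Not at h
    nlinarith [mul_nonneg ha11.le (neg_nonneg.2 h), sq_nonneg a12]
  set A := a11 * a22 - a12 ^ 2 with hAdef
  set s := √a22 with hs
  have hsp : 0 < s := Real.sqrt_pos.2 ha22
  set b := √((μ1 ^ 2 + a22 * y ^ 2) / a22) with hb
  set c := (a22 * μ2 + a12 * μ1) / √(A * a22) with hc
  have hb2 : b ^ 2 = (μ1 ^ 2 + a22 * y ^ 2) / a22 := Real.sq_sqrt (by positivity)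
  have hAs : √(A * a22) = √A * s := Real.sqrt_mul hA.le _
  have hAp : 0 < √A := Real.sqrt_pos.2 hA
  have halpha : ∀ (x : ℝ) (n : ℤ),
      alpha1 a11 a12 a22 μ1 μ2 ((x : ℂ) + (y : ℂ) * Complex.I + (n : ℂ))
        = 1 / (2 * s) * GG b c (x + n) := by
    intro x n
    have h1 : Complex.normSq ((x : ℂ) + (y : ℂ) * Complex.I + (n : ℂ)) = (x + n) ^ 2 + y ^ 2 := by
      simp [Complex.normSq_apply]
      ring
    have h2 : √(μ1 ^ 2 + a22 * ((x + n) ^ 2 + y ^ 2)) = s * √((x + n) ^ 2 + b ^ 2) := by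
      rw [hs, ← Real.sqrt_mul ha22.le, hb2]
      congr 1
      field_simp
      ring
    unfold alpha1 GG
    rw [h1, h2, ← hAdef, hc, hAs, div_div (a22 * μ2 + a12 * μ1), mul_assoc (√A) s,
      ← mul_assoc 2 s, ← one_div_mul_one_div]
    ring
  have hbc : 0 < b ∨ (b = 0 ∧ c < 0) := by
    rcases (Real.sqrt_nonneg ((μ1 ^ 2 + a22 * y ^ 2) / a22)).lt_or_eq with h | h
    · exact Or.inl h
    · right
      have hb0 : b = 0 := h.symm
      refine ⟨hb0, ?_⟩
      rw [hb0] at hb2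
      have h3 : μ1 ^ 2 + a22 * y ^ 2 = 0 := by
        field_simp at hb2
        linarith
      have h4 : μ1 = 0 := by
        have : μ1 ^ 2 = 0 := by nlinarith [sq_nonneg μ1, mul_nonneg ha22.le (sq_nonneg y)]
        exact pow_eq_zero_iff (two_ne_zero) |>.1 this
      have h5 : y = 0 := by
        rw [h4] at h3
        have : a22 * y ^ 2 = 0 := by linarith
        exact pow_eq_zero_iff (two_ne_zero) |>.1 ((mul_eq_zero.1 this).resolve_left ha22.ne')
      have h6 : μ2 < 0 := by
        by_contra h7
        exact hoff ⟨h4, h5, not_lt.1 h7⟩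
      rw [hc, h4]
      apply div_neg_of_neg_of_pos
      · nlinarith
      · rw [hAs]; positivity
  have hb0 : 0 ≤ b := Real.sqrt_nonneg _
  have hK : ∃ K, ∀ x, |GG b c x| ≤ K := by
    rcases hbc with h | ⟨h, h'⟩
    · exact ⟨_, GG_bdd_pos b c h⟩
    · rw [h]; exact ⟨_, GG_bdd_zero c h'⟩
  obtain ⟨K, hK⟩ := hK
  have hL : Tendsto (fun N : ℕ => 2 * (∫ x in (0 : ℝ)..N, GG b c x) - Real.log N) atTop
      (𝓝 (Real.log 2 - Real.log (√(b ^ 2 + c ^ 2) - c))) := by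
    rcases hbc with h | ⟨h, h'⟩
    · exact GG_lim_pos b c h
    · rw [h]; exact GG_lim_zero c h'
  obtain ⟨hsum, hint, hval⟩ := aux_main (GG b c) (GG_measurable b c) K (b + |c|) (by positivity) hK
    (GG_asymp b c hb0) (GG_even b c) _ hL
  have htilde : ∀ x : ℝ, 0 ≤ x → x ≤ 1 →
      tildeAlpha1 a11 a12 a22 μ1 μ2 ((x : ℂ) + (y : ℂ) * Complex.I)
        = 1 / (2 * s) * ∑' n : ℤ, (GG b c (x + n) - 1 / (2 * |(n : ℝ)|)) := by
    intro x h0 h1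
    rw [(hsum x h0 h1).tsum_eq_add_tsum_ite 0, mul_add, ← tsum_mul_left]
    unfold tildeAlpha1
    have e0 := halpha x 0
    simp only [Int.cast_zero, add_zero] at e0
    rw [e0]
    simp only [Int.cast_zero, add_zero, abs_zero, mul_zero, div_zero, sub_zero]
    congr 1
    refine tsum_congr fun n => ?_
    unfold alpha1Term
    split_ifs with hn
    · simp
    · rw [halpha, ← hs]
      have : |(n : ℝ)| ≠ 0 := by simpa using hn
      field_simp
      ring
  have hrho : √(a11 * μ1 ^ 2 + 2 * a12 * μ1 * μ2 + a22 * μ2 ^ 2 + A * y ^ 2) / √A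
      = √(b ^ 2 + c ^ 2) := by
    rw [← Real.sqrt_div' _ hA.le, hb2, hc, div_pow, Real.sq_sqrt (by positivity)]
    congr 1
    field_simp
    rw [hAdef]
    ring
  have hcongr : EqOn (fun x : ℝ => 1 / (2 * s) * ∑' n : ℤ, (GG b c (x + n) - 1 / (2 * |(n : ℝ)|)))
      (fun x : ℝ => tildeAlpha1 a11 a12 a22 μ1 μ2 ((x : ℂ) + (y : ℂ) * Complex.I))
      (uIcc 0 1) := by
    intro x hx
    rw [uIcc_of_le zero_le_one] at hx
    exact (htilde x hx.1 hx.2).symm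
  constructor
  · exact (hint.const_mul (1 / (2 * s))).congr (hcongr.mono uIoc_subset_uIcc)
  · rw [← intervalIntegral.integral_congr hcongr, intervalIntegral.integral_const_mul, hval, hrho]
    ring
end

section
/- Let A > 0 and define the Ooguri–Vafa potential for (μ, x, y) ∈ ℝ³ with (μ, x+n, y) ≠ (0,0,0) for every n ∈ ℤ by V(μ, x, y) = A + 1/(2√(μ² + x² + y²)) + Σ_{n∈ℤ, n≠0} ( 1/(2√(μ² + (x+n)² + y²)) − 1/(2|n|) ). Then: (i) the series converges absolutely; (ii) V is 1-periodic in x; and (iii) there is an absolute constant C (independent of A) such that whenever μ² + y² ≥ 1, | V(μ, x, y) − A + γ_E − log 2 + (1/2)·log(μ² + y²) | ≤ C·exp(−2π·√(μ² + y²)), where γ_E is the Euler–Mascheroni constant. -/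
/-- The `n`-th term (`n ≠ 0`) of the series defining the Ooguri–Vafa potential. -/
noncomputable def OVterm (μ x y : ℝ) (n : ℤ) : ℝ :=
  if n = 0 then 0
  else 1 / (2 * Real.sqrt (μ ^ 2 + (x + n) ^ 2 + y ^ 2)) - 1 / (2 * |(n : ℝ)|)

/-- The Ooguri–Vafa potential
`V(μ,x,y) = A + 1/(2√(μ²+x²+y²)) + Σ_{n≠0}(1/(2√(μ²+(x+n)²+y²)) − 1/(2|n|))`. -/
noncomputable def OVpot (A μ x y : ℝ) : ℝ :=
  A + 1 / (2 * Real.sqrt (μ ^ 2 + x ^ 2 + y ^ 2)) + ∑' n : ℤ, OVterm μ x y n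


namespace OV
open Real Filter Topology MeasureTheory

/-- The regularised `n`-th term, including `n = 0`. -/
noncomputable def T (r x : ℝ) (n : ℤ) : ℝ :=
  1 / (2 * √(r + (x + n) ^ 2)) - 1 / (2 * |(n : ℝ)|)

lemma T_bound (r x : ℝ) (hr : 0 ≤ r) (n : ℤ) (hn : 2 * |x| + 1 ≤ |(n : ℝ)|) :
    ‖T r x n‖ ≤ (r + x ^ 2 + 2 * |x|) * |(n : ℝ)| ^ (-2 : ℝ) := by
  have hN1 : 1 ≤ |(n : ℝ)| := by linarith [abs_nonneg x]
  have hNx : |(n : ℝ)| / 2 ≤ |x + n| := by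
    have := abs_sub_abs_le_abs_sub (n : ℝ) (-x)
    rw [abs_neg, sub_neg_eq_add, add_comm] at this
    linarith
  set N := |(n : ℝ)| with hN
  have hn2 : (n : ℝ) ^ 2 = N ^ 2 := (sq_abs _).symm
  set q := √(r + (x + n) ^ 2) with hq
  have hq2 : q ^ 2 = r + (x + n) ^ 2 := Real.sq_sqrt (by positivity)
  have hqN : N / 2 ≤ q := by
    refine hNx.trans ?_
    rw [hq]
    apply Real.le_sqrt_of_sq_le
    rw [sq_abs]; linarith
  have hq0 : 0 < q := by linarith
  have hN0 : 0 < N := by linarith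
  have e1 : T r x n = (N ^ 2 - q ^ 2) / (2 * N * q * (N + q)) := by
    unfold T
    rw [← hq, ← hN]
    field_simp
    ring
  have e2 : |N ^ 2 - q ^ 2| ≤ (r + x ^ 2 + 2 * |x|) * N := by
    rw [hq2, ← hn2]
    have h1 : |2 * x * n| = 2 * |x| * N := by rw [abs_mul, abs_mul]; simp [hN]
    have h2 : (r + x ^ 2) * 1 ≤ (r + x ^ 2) * N := by gcongr
    rw [show (n : ℝ) ^ 2 - (r + (x + n) ^ 2) = -((r + x ^ 2) + 2 * x * n) by ring, abs_neg]
    calc _ ≤ |r + x ^ 2| + |2 * x * n| := abs_add_le _ _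
      _ ≤ _ := by rw [h1, abs_of_nonneg (by positivity)]; nlinarith
  rw [e1, Real.norm_eq_abs, abs_div, abs_of_pos (show 0 < 2 * N * q * (N + q) by positivity)]
  rw [Real.rpow_neg hN0.le, Real.rpow_two, div_le_iff₀ (by positivity)]
  have h3 : N ^ 3 ≤ 2 * N * q * (N + q) := by nlinarith [mul_pos hN0 hq0, mul_pos hN0 hN0]
  have h4 : 0 ≤ r + x ^ 2 + 2 * |x| := by positivity
  calc _ ≤ _ := e2
    _ = (r + x ^ 2 + 2 * |x|) * (N ^ 2)⁻¹ * N ^ 3 := by field_simp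
    _ ≤ _ := by gcongr

lemma summable_T (r x : ℝ) (hr : 0 ≤ r) : Summable (T r x) := by
  refine Summable.of_norm_bounded_eventually
    (g := fun n : ℤ => (r + x ^ 2 + 2 * |x|) * |(n : ℝ)| ^ (-2 : ℝ)) 
    ((Real.summable_abs_int_rpow (b := 2) (by norm_num)).mul_left _) ?_
  have h1 : Tendsto (fun n : ℤ => |(n : ℝ)|) cofinite atTop := by
    have := (tendsto_norm_cocompact_atTop (E := ℝ)).comp Int.tendsto_coe_cofinite
    simpa [Function.comp_def] using this
  filter_upwards [h1.eventually_ge_atTop (2 * |x| + 1)] with n hn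
  exact T_bound r x hr n hn

lemma tsum_T_add_one (r x : ℝ) (hr : 0 ≤ r) : ∑' n, T r (x + 1) n = ∑' n, T r x n := by
  have s1 := summable_T r (x + 1) hr
  have s2 : Summable fun n : ℤ => T r x (n + 1) := by
    simpa [Function.comp_def] using (Equiv.addRight (1 : ℤ)).summable_iff.mpr (summable_T r x hr)
  have t2 : ∑' n : ℤ, T r x (n + 1) = ∑' n, T r x n := (Equiv.addRight (1 : ℤ)).tsum_eq (T r x)
  rw [← t2, ← sub_eq_zero, ← s1.tsum_sub s2]
  set d : ℤ → ℝ := fun n => T r (x + 1) n - T r x (n + 1) with hd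
  have hd' : ∀ n, d n = 1 / (2 * |(n : ℝ) + 1|) - 1 / (2 * |(n : ℝ)|) := by
    intro n
    simp only [hd, T]
    push_cast
    rw [show x + 1 + (n : ℝ) = x + (n + 1) by ring]
    ring
  have key : ∑' n, d n = ∑' n, - d n := by
    rw [← (Equiv.subLeft (-1 : ℤ)).tsum_eq d]
    congr 1
    ext n
    rw [hd', hd', Equiv.subLeft_apply]
    push_cast
    rw [show (-1 : ℝ) - n + 1 = -n by ring, show (-1 : ℝ) - n = -(n + 1) by ring, abs_neg, abs_neg]
    ring
  rw [tsum_neg] at key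
  linarith

lemma OVterm_eq (μ x y : ℝ) (n : ℤ) (hn : n ≠ 0) : OVterm μ x y n = T (μ ^ 2 + y ^ 2) x n := by
  simp only [OVterm, T, if_neg hn]
  rw [show μ ^ 2 + (x + n) ^ 2 + y ^ 2 = μ ^ 2 + y ^ 2 + (x + n) ^ 2 by ring]

lemma summable_OVterm (μ x y : ℝ) : Summable (OVterm μ x y) := by
  refine (summable_congr_cofinite ?_).mp (summable_T (μ ^ 2 + y ^ 2) x (by positivity))
  filter_upwards [(Set.finite_singleton (0 : ℤ)).compl_mem_cofinite] with n hn
  exact (OVterm_eq μ x y n hn).symm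

lemma OVpot_eq (A μ x y : ℝ) : OVpot A μ x y = A + ∑' n, T (μ ^ 2 + y ^ 2) x n := by
  have s := summable_T (μ ^ 2 + y ^ 2) x (by positivity)
  unfold OVpot
  rw [s.tsum_eq_add_tsum_ite 0, add_assoc]
  congr 2
  · simp only [T]
    rw [show μ ^ 2 + x ^ 2 + y ^ 2 = μ ^ 2 + y ^ 2 + x ^ 2 by ring]
    simp
  · congr 1
    ext n
    split_ifs with h
    · simp [OVterm, h]
    · exact OVterm_eq μ x y n h

/-- Complex extension of the derivative of `t ↦ 1/(2√(ρ²+t²))`. -/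
noncomputable def Fc (ρ : ℝ) (z : ℂ) : ℂ :=
  -z / (2 * ((ρ : ℂ) ^ 2 + z ^ 2) * ((ρ : ℂ) ^ 2 + z ^ 2) ^ ((1 / 2 : ℝ) : ℂ))

/-- The derivative of `t ↦ 1/(2√(ρ²+t²))`. -/
noncomputable def D (ρ t : ℝ) : ℝ := -t / (2 * (ρ ^ 2 + t ^ 2) * √(ρ ^ 2 + t ^ 2))

lemma Fc_ofReal (ρ t : ℝ) : Fc ρ t = (D ρ t : ℂ) := by
  unfold Fc D
  rw [Real.sqrt_eq_rpow]
  push_cast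
  rw [Complex.ofReal_cpow (by positivity)]
  push_cast
  rfl

lemma normsq_w (ρ : ℝ) (z : ℂ) : ‖(ρ : ℂ) ^ 2 + z ^ 2‖ ^ 2 =
    ((ρ - z.im) ^ 2 + z.re ^ 2) * ((ρ + z.im) ^ 2 + z.re ^ 2) := by
  rw [Complex.sq_norm, Complex.normSq_apply]
  simp [pow_two]
  ring

lemma Fc_norm_le (ρ : ℝ) (hρ : 1 ≤ ρ) (z : ℂ) (hz : |z.im| ≤ ρ - 1 / 2) :
    ‖Fc ρ z‖ ≤ 2 * (1 + z.re ^ 2)⁻¹ := by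
  obtain ⟨h1, h2⟩ := abs_le.mp hz
  set w := (ρ : ℂ) ^ 2 + z ^ 2 with hw
  set q := 1 / 4 + z.re ^ 2 with hq
  have hq0 : 0 < q := by positivity
  have hN := normsq_w ρ z
  rw [← hw] at hN
  have ha : q ≤ (ρ - z.im) ^ 2 + z.re ^ 2 := by rw [hq]; nlinarith
  have hb : q ≤ (ρ + z.im) ^ 2 + z.re ^ 2 := by rw [hq]; nlinarith
  have hz2 : ‖z‖ ^ 2 = z.re ^ 2 + z.im ^ 2 := by
    rw [Complex.sq_norm, Complex.normSq_apply]; ring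
  have hw1 : q ≤ ‖w‖ := by
    apply le_of_sq_le_sq _ (norm_nonneg _)
    rw [hN, pow_two]
    gcongr
  have hw2 : q * ‖z‖ ^ 2 ≤ ‖w‖ ^ 2 := by
    rw [hN, hz2]
    rcases le_total 0 z.im with h | h
    · apply mul_le_mul ha _ (by positivity) (by positivity)
      nlinarith
    · rw [mul_comm ((ρ - z.im) ^ 2 + z.re ^ 2)]
      apply mul_le_mul hb _ (by positivity) (by positivity)
      nlinarith
  have hw0 : 0 < ‖w‖ := by linarith
  have e : ‖Fc ρ z‖ = ‖z‖ / (2 * ‖w‖ * √‖w‖) := by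
    unfold Fc
    rw [← hw, norm_div, norm_neg, norm_mul, norm_mul, Complex.norm_cpow_real, Real.sqrt_eq_rpow]
    simp
  have hs : √q ≤ √‖w‖ := Real.sqrt_le_sqrt hw1
  have hz3 : √q * ‖z‖ ≤ ‖w‖ := by
    apply le_of_sq_le_sq _ (norm_nonneg _)
    rw [mul_pow, Real.sq_sqrt hq0.le]
    exact hw2
  have hqq : √q * √q = q := Real.mul_self_sqrt hq0.le
  have hsq0 : 0 < √q := Real.sqrt_pos.mpr hq0
  have hq4 : (1 + z.re ^ 2) ≤ 4 * q := by rw [hq]; nlinarith [sq_nonneg z.re]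
  rw [e, div_le_iff₀ (by positivity)]
  have : ‖z‖ * q ≤ ‖w‖ * √‖w‖ := by
    calc ‖z‖ * q = √q * ‖z‖ * √q := by linear_combination (-‖z‖) * hqq
      _ ≤ _ := by gcongr
  have h5 : (1 + z.re ^ 2)⁻¹ * (4 * q) ≥ 1 := by
    rw [ge_iff_le, inv_mul_eq_div, one_le_div (by positivity)]; exact hq4
  calc ‖z‖ = ‖z‖ * 1 := by ring
    _ ≤ ‖z‖ * ((1 + z.re ^ 2)⁻¹ * (4 * q)) := by gcongr
    _ = 4 * (1 + z.re ^ 2)⁻¹ * (‖z‖ * q) := by ring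
    _ ≤ 4 * (1 + z.re ^ 2)⁻¹ * (‖w‖ * √‖w‖) := by gcongr
    _ = _ := by ring

lemma Fc_diff (ρ : ℝ) (hρ : 1 ≤ ρ) (z : ℂ) (hz : |z.im| ≤ ρ - 1 / 2) :
    DifferentiableAt ℂ (Fc ρ) z := by
  obtain ⟨h1, h2⟩ := abs_le.mp hz
  have hre : 0 < ((ρ : ℂ) ^ 2 + z ^ 2).re := by
    simp [pow_two]
    nlinarith [sq_nonneg z.re]
  have hsl : (ρ : ℂ) ^ 2 + z ^ 2 ∈ Complex.slitPlane := Or.inl hre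
  have hne : (ρ : ℂ) ^ 2 + z ^ 2 ≠ 0 := Complex.slitPlane_ne_zero hsl
  unfold Fc
  refine DifferentiableAt.div (by fun_prop) ?_ ?_
  · refine DifferentiableAt.mul (by fun_prop) ?_
    exact DifferentiableAt.cpow_const (by fun_prop) hsl
  · refine mul_ne_zero (mul_ne_zero two_ne_zero hne) ?_
    rw [Complex.cpow_def_of_ne_zero hne]
    exact Complex.exp_ne_zero _

lemma integrable_bound : Integrable (fun t : ℝ => 2 * (1 + t ^ 2)⁻¹) :=
  integrable_inv_one_add_sq.const_mul 2

/-- Contour shift. -/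
lemma integral_shift (ρ : ℝ) (hρ : 1 ≤ ρ) (k : ℝ) (hk : 0 ≤ k) :
    ‖∫ t : ℝ, Complex.exp (-(2 * π * k * t) * Complex.I) * Fc ρ t‖ ≤
      Real.exp (-(2 * π * k * (ρ - 1 / 2))) * ∫ t : ℝ, 2 * (1 + t ^ 2)⁻¹ := by
  set c := ρ - 1 / 2 with hc
  have hc0 : 0 ≤ c := by rw [hc]; linarith
  set G : ℂ → ℂ := fun z => Complex.exp (-(2 * π * k * z) * Complex.I) * Fc ρ z with hG
  have hexp : ∀ z : ℂ, ‖Complex.exp (-(2 * π * k * z) * Complex.I)‖ =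
      Real.exp (2 * π * k * z.im) := by
    intro z
    rw [Complex.norm_exp]
    congr 1
    simp
  have hGd : ∀ z : ℂ, |z.im| ≤ c → DifferentiableAt ℂ G z := by
    intro z hz
    exact DifferentiableAt.mul (by fun_prop) (Fc_diff ρ hρ z hz)
  have hGn : ∀ z : ℂ, |z.im| ≤ c → ‖G z‖ ≤ Real.exp (2 * π * k * z.im) * (2 * (1 + z.re ^ 2)⁻¹) := by
    intro z hz
    rw [hG]
    simp only [norm_mul]
    rw [hexp]
    gcongr
    exact Fc_norm_le ρ hρ z hz
  -- integrability on horizontal lines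
  have hline : ∀ s : ℝ, |s| ≤ c → Integrable (fun t : ℝ => G (t + s * Complex.I)) := by
    intro s hs
    refine Integrable.mono' (integrable_bound.const_mul (Real.exp (2 * π * k * s))) ?_ ?_
    · apply Continuous.aestronglyMeasurable
      rw [continuous_iff_continuousAt]
      intro t
      have h := (hGd (t + s * Complex.I) (by simpa using hs)).continuousAt
      exact ContinuousAt.comp (f := fun t : ℝ => (t : ℂ) + s * Complex.I) h (by fun_prop)
    · refine ae_of_all _ fun t => ?_
      have := hGn (t + s * Complex.I) (by simpa using hs)
      simpa using this
  have hneg : |(-c)| ≤ c := by rw [abs_neg, abs_of_nonneg hc0]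
  have rect : ∀ R : ℝ, 
      (∫ t : ℝ in (-R)..R, G (t + (-c : ℝ) * Complex.I)) - (∫ t : ℝ in (-R)..R, G (t + (0 : ℝ) * Complex.I)) +
      Complex.I • (∫ s : ℝ in (-c)..0, G (R + s * Complex.I)) -
      Complex.I • (∫ s : ℝ in (-c)..0, G ((-R : ℝ) + s * Complex.I)) = 0 := by
    intro R
    have := Complex.integral_boundary_rect_eq_zero_of_differentiableOn G
      (⟨-R, -c⟩ : ℂ) (⟨R, 0⟩ : ℂ) ?_
    · simpa using this
    · intro z hz
      apply DifferentiableAt.differentiableWithinAt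
      apply hGd
      have := hz.2
      simp only [Set.mem_preimage] at this
      rw [Set.uIcc_of_le (by linarith)] at this
      rw [abs_le]
      exact ⟨this.1, this.2.trans hc0⟩
  have vert : ∀ R : ℝ, ‖∫ s : ℝ in (-c)..0, G (R + s * Complex.I)‖ ≤ 2 * (1 + R ^ 2)⁻¹ * c := by
    intro R
    have := intervalIntegral.norm_integral_le_of_norm_le_const (a := -c) (b := 0)
      (f := fun s : ℝ => G (R + s * Complex.I)) (C := 2 * (1 + R ^ 2)⁻¹) ?_
    · simpa [abs_of_nonneg hc0] using this
    · intro s hs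
      rw [Set.uIoc_of_le (by linarith)] at hs
      have h1 := hGn (R + s * Complex.I) (by
        simp only [Complex.add_im, Complex.ofReal_im, Complex.mul_im, Complex.ofReal_re, Complex.I_im, mul_one, Complex.I_re, mul_zero, add_zero, zero_add]
        rw [abs_le]; exact ⟨hs.1.le, hs.2.trans hc0⟩)
      have h2 : Real.exp (2 * π * k * s) ≤ 1 := by
        rw [Real.exp_le_one_iff]
        exact mul_nonpos_of_nonneg_of_nonpos (by positivity) hs.2
      simp only [Complex.add_im, Complex.ofReal_im, Complex.mul_im, Complex.ofReal_re, Complex.I_im, mul_one, Complex.I_re, mul_zero, add_zero, zero_add, Complex.add_re, Complex.mul_re, sub_zero] at h1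
      refine h1.trans ?_
      calc _ ≤ 1 * (2 * (1 + R ^ 2)⁻¹) := by gcongr
        _ = _ := one_mul _
  have lim0 : Tendsto (fun R : ℝ => 2 * (1 + R ^ 2)⁻¹ * c) atTop (𝓝 0) := by
    have h : Tendsto (fun R : ℝ => 1 + R ^ 2) atTop atTop :=
      tendsto_atTop_add_const_left _ _ (tendsto_pow_atTop two_ne_zero)
    simpa using (h.inv_tendsto_atTop.const_mul 2).mul_const c
  have v1 : Tendsto (fun R : ℝ => ∫ s : ℝ in (-c)..0, G (R + s * Complex.I)) atTop (𝓝 0) :=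
    squeeze_zero_norm vert lim0
  have v2 : Tendsto (fun R : ℝ => ∫ s : ℝ in (-c)..0, G ((-R : ℝ) + s * Complex.I)) atTop (𝓝 0) :=
    squeeze_zero_norm (fun R => by simpa using vert (-R)) lim0
  have l1 := intervalIntegral_tendsto_integral (hline (-c) hneg) tendsto_neg_atTop_atBot tendsto_id
  have l2 := intervalIntegral_tendsto_integral (hline 0 (by simpa using hc0)) tendsto_neg_atTop_atBot tendsto_id
  have l := ((l1.sub l2).add (v1.const_smul Complex.I)).sub (v2.const_smul Complex.I)
  have l' := l.congr (f₂ := fun _ => (0 : ℂ)) (fun R => by simpa using rect R)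
  have heq := tendsto_nhds_unique l' tendsto_const_nhds
  simp only [smul_zero, add_zero, sub_zero, Complex.ofReal_zero, zero_mul] at heq
  rw [sub_eq_zero] at heq
  change ‖∫ t : ℝ, G t‖ ≤ _
  rw [← heq, ← integral_const_mul]
  refine norm_integral_le_of_norm_le (integrable_bound.const_mul _) (ae_of_all _ fun t => ?_)
  have := hGn (t + (-c : ℝ) * Complex.I) (by simpa using hneg)
  simpa using this

lemma D_bound (ρ : ℝ) (hρ : 1 ≤ ρ) (t : ℝ) : |D ρ t| ≤ 2 * (1 + t ^ 2)⁻¹ := by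
  have := Fc_norm_le ρ hρ t (by simp; linarith)
  rw [Fc_ofReal] at this
  simpa using this

lemma D_cont (ρ : ℝ) (hρ : 1 ≤ ρ) : Continuous (D ρ) := by
  unfold D
  refine Continuous.div (by fun_prop) (by fun_prop) ?_
  intro t
  have : 0 < ρ ^ 2 + t ^ 2 := by positivity
  have := Real.sqrt_pos.mpr this
  positivity

/-- The constant in the integral bound. -/
noncomputable def J : ℝ := ∫ t : ℝ, 2 * (1 + t ^ 2)⁻¹

lemma J_nonneg : 0 ≤ J := integral_nonneg fun t => by positivity

open FourierTransform in
lemma fourier_D (ρ k : ℝ) : 𝓕 (fun t : ℝ => (D ρ t : ℂ)) k =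
    ∫ t : ℝ, Complex.exp (-(2 * π * k * t) * Complex.I) * Fc ρ t := by
  rw [Real.fourier_real_eq_integral_exp_smul]
  congr 1
  ext t
  rw [Fc_ofReal, smul_eq_mul]
  congr 3
  push_cast
  ring

open FourierTransform in
lemma fourier_D_neg (ρ k : ℝ) : 𝓕 (fun t : ℝ => (D ρ t : ℂ)) (-k) =
    - 𝓕 (fun t : ℝ => (D ρ t : ℂ)) k := by
  rw [fourier_D, fourier_D, ← integral_neg, ← integral_neg_eq_self]
  congr 1
  ext t
  have : Fc ρ ((-t : ℝ) : ℂ) = - Fc ρ t := by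
    unfold Fc; push_cast; rw [neg_sq]; ring
  rw [this]
  push_cast
  rw [show -(2 * (π : ℂ) * -k * -t) = -(2 * π * k * t) by ring]
  ring

open FourierTransform in
lemma fourier_D_le (ρ : ℝ) (hρ : 1 ≤ ρ) (n : ℤ) : ‖𝓕 (fun t : ℝ => (D ρ t : ℂ)) (n : ℝ)‖ ≤
    Real.exp (-(2 * π) * ρ) * (Real.exp (2 * π) * J * Real.exp (-(π * |(n : ℝ)|))) := by
  have hpos : ∀ k : ℝ, 1 ≤ k → ‖𝓕 (fun t : ℝ => (D ρ t : ℂ)) k‖ ≤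
      Real.exp (-(2 * π) * ρ) * (Real.exp (2 * π) * J * Real.exp (-(π * k))) := by
    intro k hk
    rw [fourier_D]
    refine (integral_shift ρ hρ k (by linarith)).trans ?_
    change _ * J ≤ _
    rw [show Real.exp (-(2 * π) * ρ) * (Real.exp (2 * π) * J * Real.exp (-(π * k))) =
      (Real.exp (-(2 * π) * ρ) * Real.exp (2 * π) * Real.exp (-(π * k))) * J by ring,
      ← Real.exp_add, ← Real.exp_add]
    have := J_nonneg
    gcongr
    have h : 0 ≤ π * ((k - 1) * (ρ - 1)) :=
      mul_nonneg pi_pos.le (mul_nonneg (by linarith) (by linarith))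
    nlinarith
  rcases lt_trichotomy n 0 with h | h | h
  · have h1 : (n : ℝ) ≤ -1 := by exact_mod_cast (by omega : n ≤ -1)
    have := hpos (-n) (by linarith)
    rwa [fourier_D_neg, norm_neg, ← abs_of_nonpos (by linarith : (n : ℝ) ≤ 0)] at this
  · subst h
    have h0 := fourier_D_neg ρ 0
    rw [neg_zero, self_eq_neg] at h0
    simp only [Int.cast_zero, h0, norm_zero]
    have := J_nonneg
    positivity
  · have h1 : 1 ≤ (n : ℝ) := by exact_mod_cast h
    have := hpos n h1
    rwa [abs_of_nonneg (by linarith : (0 : ℝ) ≤ n)]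

lemma summable_exp_int : Summable fun n : ℤ => Real.exp (-(π * |(n : ℝ)|)) := by
  have h : Summable fun n : ℕ => Real.exp (-(π * (n : ℝ))) := by
    have := Real.summable_exp_nat_mul_iff.mpr (neg_lt_zero.mpr pi_pos)
    refine this.congr fun n => ?_
    congr 1; ring
  refine Summable.of_nat_of_neg (by simpa using h) (by simpa using h)

/-- The constant in the main bound. -/
noncomputable def K : ℝ := ∑' n : ℤ, Real.exp (2 * π) * J * Real.exp (-(π * |(n : ℝ)|))

lemma K_nonneg : 0 ≤ K := tsum_nonneg fun n => by have := J_nonneg; positivity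

open FourierTransform in
lemma tsum_D_le (ρ : ℝ) (hρ : 1 ≤ ρ) (x : ℝ) :
    |∑' n : ℤ, D ρ (x + n)| ≤ K * Real.exp (-(2 * π) * ρ) := by
  have hsum : Summable fun n : ℤ => Real.exp (-(2 * π) * ρ) *
      (Real.exp (2 * π) * J * Real.exp (-(π * |(n : ℝ)|))) :=
    (summable_exp_int.mul_left _).mul_left _
  have hO : (fun t : ℝ => (D ρ t : ℂ)) =O[cocompact ℝ] fun t : ℝ => |t| ^ (-2 : ℝ) := by
    refine Asymptotics.IsBigO.of_bound 2 ?_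
    filter_upwards [(isCompact_singleton (x := (0 : ℝ))).compl_mem_cocompact] with t ht
    have ht0 : 0 < |t| := abs_pos.mpr ht
    rw [Complex.norm_real, Real.norm_eq_abs, Real.norm_eq_abs, abs_of_nonneg (by positivity : 0 ≤ |t| ^ (-2 : ℝ)),
      Real.rpow_neg ht0.le, Real.rpow_two, sq_abs]
    refine (D_bound ρ hρ t).trans ?_
    have : 0 < t ^ 2 := by rw [← sq_abs]; positivity
    gcongr
    linarith
  have hP := Real.tsum_eq_tsum_fourier_of_rpow_decay_of_summable
    (f := fun t : ℝ => (D ρ t : ℂ)) (Complex.continuous_ofReal.comp (D_cont ρ hρ))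
    (b := 2) (by norm_num) hO
    (Summable.of_norm_bounded hsum (fourier_D_le ρ hρ)) x
  have h1 : ((∑' n : ℤ, D ρ (x + n) : ℝ) : ℂ) = ∑' n : ℤ, ((D ρ (x + n) : ℝ) : ℂ) :=
    Complex.ofReal_tsum _
  rw [← Real.norm_eq_abs, ← Complex.norm_real, h1, hP]
  refine (tsum_of_norm_bounded hsum.hasSum fun n => ?_).trans ?_
  · rw [norm_mul]
    have : ‖(fourier n (x : UnitAddCircle) : ℂ)‖ = 1 := by
      rw [fourier_apply]; exact Circle.norm_coe _
    rw [this, mul_one]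
    exact fourier_D_le ρ hρ n
  · rw [tsum_mul_left, mul_comm]; rfl

lemma f_hasDeriv (ρ : ℝ) (hρ : 1 ≤ ρ) (n : ℤ) (x : ℝ) :
    HasDerivAt (fun x => T (ρ ^ 2) x n) (D ρ (x + n)) x := by
  have hpos : 0 < ρ ^ 2 + (x + n) ^ 2 := by positivity
  have hs := Real.sqrt_pos.mpr hpos
  have h1 : HasDerivAt (fun x : ℝ => ρ ^ 2 + (x + n) ^ 2) (2 * (x + n)) x := by
    have := (((hasDerivAt_id x).add_const (n : ℝ)).pow 2).const_add (ρ ^ 2)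
    simpa using this
  have h2 := (((h1.sqrt hpos.ne').const_mul 2).inv (by positivity)).sub_const (1 / (2 * |(n : ℝ)|))
  unfold T
  simp only [one_div] at h2 ⊢
  refine h2.congr_deriv ?_
  unfold D
  set q := √(ρ ^ 2 + (x + n) ^ 2) with hq
  have : ρ ^ 2 + (x + n) ^ 2 = q ^ 2 := (Real.sq_sqrt hpos.le).symm
  rw [this]
  field_simp

lemma D_unif (ρ : ℝ) (hρ : 1 ≤ ρ) (n : ℤ) (x : ℝ) (hx : x ∈ Set.Ioo (-1 : ℝ) 2) :
    ‖D ρ (x + n)‖ ≤ 18 * (1 + (n : ℝ) ^ 2)⁻¹ := by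
  refine (D_bound ρ hρ _).trans ?_
  rw [← div_eq_mul_inv, ← div_eq_mul_inv, div_le_div_iff₀ (by positivity) (by positivity)]
  nlinarith [hx.1, hx.2, sq_nonneg (2 * x + n)]

lemma summable_u : Summable fun n : ℤ => 18 * (1 + (n : ℝ) ^ 2)⁻¹ := by
  apply Summable.mul_left
  refine Summable.of_norm_bounded_eventually (Real.summable_abs_int_rpow (b := 2) (by norm_num)) ?_
  filter_upwards [(Set.finite_singleton (0 : ℤ)).compl_mem_cofinite] with n hn
  have h0 : 0 < |(n : ℝ)| := abs_pos.mpr (by exact_mod_cast hn)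
  have : 0 < (n : ℝ) ^ 2 := by rw [← sq_abs]; positivity
  rw [Real.rpow_neg h0.le, Real.rpow_two, sq_abs, Real.norm_eq_abs, abs_of_pos (by positivity)]
  gcongr
  linarith

lemma V_hasDeriv (ρ : ℝ) (hρ : 1 ≤ ρ) (x : ℝ) (hx : x ∈ Set.Ioo (-1 : ℝ) 2) :
    HasDerivAt (fun x => ∑' n : ℤ, T (ρ ^ 2) x n) (∑' n : ℤ, D ρ (x + n)) x :=
  hasDerivAt_tsum_of_isPreconnected (y₀ := x) summable_u isOpen_Ioo isPreconnected_Ioo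
    (fun n y _ => f_hasDeriv ρ hρ n y) (fun n y hy => D_unif ρ hρ n y hy) hx
    (summable_T _ _ (by positivity)) hx

lemma V_lip (ρ : ℝ) (hρ : 1 ≤ ρ) (x x' : ℝ) (hx : x ∈ Set.Icc (0 : ℝ) 1)
    (hx' : x' ∈ Set.Icc (0 : ℝ) 1) :
    ‖(∑' n : ℤ, T (ρ ^ 2) x n) - ∑' n : ℤ, T (ρ ^ 2) x' n‖ ≤ K * Real.exp (-(2 * π) * ρ) := by
  have h := (convex_Icc (0 : ℝ) 1).norm_image_sub_le_of_norm_hasDerivWithin_le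
    (f := fun x => ∑' n : ℤ, T (ρ ^ 2) x n) (f' := fun x => ∑' n : ℤ, D ρ (x + n))
    (C := K * Real.exp (-(2 * π) * ρ)) (x := x') (y := x)
    (fun y hy => (V_hasDeriv ρ hρ y ⟨by linarith [hy.1], by linarith [hy.2]⟩).hasDerivWithinAt)
    (fun y _ => tsum_D_le ρ hρ y) hx' hx
  refine h.trans ?_
  have h1 : ‖x - x'‖ ≤ 1 := by
    rw [Real.norm_eq_abs, abs_le]; constructor <;> linarith [hx.1, hx.2, hx'.1, hx'.2]
  have := K_nonneg
  exact mul_le_of_le_one_right (by positivity) h1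

/-! mean value over a period -/

lemma T_bound_unif (ρ : ℝ) (hρ : 1 ≤ ρ) (n : ℤ) (x : ℝ) (hx : x ∈ Set.Icc (0 : ℝ) 1) :
    ‖T (ρ ^ 2) x n‖ ≤ ‖T (ρ ^ 2) 0 n‖ + 18 * (1 + (n : ℝ) ^ 2)⁻¹ := by
  have h := (convex_Icc (0 : ℝ) 1).norm_image_sub_le_of_norm_hasDerivWithin_le
    (f := fun x => T (ρ ^ 2) x n) (f' := fun x => D ρ (x + n))
    (C := 18 * (1 + (n : ℝ) ^ 2)⁻¹) (x := 0) (y := x)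
    (fun y hy => (f_hasDeriv ρ hρ n y).hasDerivWithinAt)
    (fun y hy => D_unif ρ hρ n y ⟨by linarith [hy.1], by linarith [hy.2]⟩) (by simp) hx
  have h1 : ‖x - 0‖ ≤ 1 := by
    rw [Real.norm_eq_abs, abs_le]; constructor <;> linarith [hx.1, hx.2]
  have h2 := h.trans (mul_le_of_le_one_right (by positivity) h1)
  have h3 := norm_sub_norm_le (T (ρ ^ 2) x n) (T (ρ ^ 2) 0 n)
  linarith

/-- Primitive of `1/(2√(ρ²+t²))`. -/
noncomputable def P (ρ t : ℝ) : ℝ := 1 / 2 * Real.arsinh (t / ρ)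

lemma integral_T (ρ : ℝ) (hρ : 1 ≤ ρ) (n : ℤ) :
    ∫ x in (0 : ℝ)..1, T (ρ ^ 2) x n = P ρ (n + 1) - P ρ n - 1 / (2 * |(n : ℝ)|) := by
  have hd : ∀ x : ℝ, HasDerivAt (fun x => P ρ (x + n) - x * (1 / (2 * |(n : ℝ)|))) (T (ρ ^ 2) x n) x := by
    intro x
    have h1 := (((hasDerivAt_id x).add_const (n : ℝ)).div_const ρ).arsinh.const_mul (1 / 2)
    have h2 := h1.sub ((hasDerivAt_id x).mul_const (1 / (2 * |(n : ℝ)|)))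
    refine h2.congr_deriv ?_
    unfold T
    simp only [id]
    have : ρ ^ 2 + (x + n) ^ 2 = ρ ^ 2 * (1 + ((x + n) / ρ) ^ 2) := by field_simp
    rw [this, Real.sqrt_mul (by positivity), Real.sqrt_sq (by positivity)]
    have : 0 < √(1 + ((x + n) / ρ) ^ 2) := Real.sqrt_pos.mpr (by positivity)
    simp only [smul_eq_mul]
    field_simp
  rw [intervalIntegral.integral_eq_sub_of_hasDerivAt (fun x _ => hd x)]
  · simp [add_comm]
    ring
  · apply Continuous.intervalIntegrable
    rw [continuous_iff_continuousAt]
    exact fun x => (f_hasDeriv ρ hρ n x).continuousAt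

lemma hasSum_mean (ρ : ℝ) (hρ : 1 ≤ ρ) :
    HasSum (fun n : ℤ => P ρ (n + 1) - P ρ n - 1 / (2 * |(n : ℝ)|))
      (∫ x in (0 : ℝ)..1, ∑' n : ℤ, T (ρ ^ 2) x n) := by
  have hc : ∀ n : ℤ, Continuous fun x => T (ρ ^ 2) x n := fun n => by
    rw [continuous_iff_continuousAt]
    exact fun x => (f_hasDeriv ρ hρ n x).continuousAt
  have := intervalIntegral.hasSum_intervalIntegral_of_summable_norm (a := 0) (b := 1)
    (f := fun n : ℤ => (⟨fun x => T (ρ ^ 2) x n, hc n⟩ : C(ℝ, ℝ))) ?_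
  · simpa only [ContinuousMap.coe_mk, integral_T ρ hρ] using this
  · refine Summable.of_nonneg_of_le (fun _ => norm_nonneg _) (fun n => ?_)
      ((summable_T (ρ ^ 2) 0 (by positivity)).norm.add summable_u)
    rw [ContinuousMap.norm_le _ (by positivity)]
    rintro ⟨x, hx⟩
    apply T_bound_unif ρ hρ n x
    simpa using hx

lemma partial_sum (ρ : ℝ) (N : ℕ) :
    ∑ n ∈ Finset.range N, ((P ρ ((n : ℤ) + 1) - P ρ (n : ℤ) - 1 / (2 * |((n : ℤ) : ℝ)|)) +
      (P ρ ((-((n : ℤ) + 1) : ℤ) + 1) - P ρ (-((n : ℤ) + 1) : ℤ) - 1 / (2 * |((-((n : ℤ) + 1) : ℤ) : ℝ)|))) =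
    Real.arsinh (N / ρ) - harmonic N + 1 / (2 * N) := by
  induction N with
  | zero => simp
  | succ N ih =>
    rw [Finset.sum_range_succ, ih, harmonic_succ]
    unfold P
    push_cast
    rw [show (-((N : ℝ) + 1) + 1) / ρ = -(N / ρ) by ring, neg_div, Real.arsinh_neg, Real.arsinh_neg,
      abs_neg, abs_of_nonneg (by positivity : (0 : ℝ) ≤ N), abs_of_nonneg (by positivity : (0 : ℝ) ≤ N + 1)]
    have : (N : ℝ) + 1 ≠ 0 := by positivity
    field_simp
    ring

lemma lim_mean (ρ : ℝ) (hρ : 1 ≤ ρ) :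
    Tendsto (fun N : ℕ => Real.arsinh (N / ρ) - harmonic N + 1 / (2 * N)) atTop
      (𝓝 (Real.log 2 - Real.log ρ - Real.eulerMascheroniConstant)) := by
  have hρ0 : 0 < ρ := by linarith
  have h1 := Real.tendsto_harmonic_sub_log
  have h0 : Tendsto (fun N : ℕ => ((N : ℝ))⁻¹) atTop (𝓝 0) := tendsto_inv_atTop_nhds_zero_nat
  have h2 : Tendsto (fun N : ℕ => 1 / (2 * (N : ℝ))) atTop (𝓝 0) := by
    have := h0.const_mul (1 / 2)
    rw [mul_zero] at this
    refine this.congr fun N => ?_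
    rw [one_div, one_div, mul_inv]
  have h3 : Tendsto (fun N : ℕ => Real.log (1 / ρ + √(((N : ℝ)⁻¹) ^ 2 + 1 / ρ ^ 2))) atTop
      (𝓝 (Real.log 2 - Real.log ρ)) := by
    have e : Real.log 2 - Real.log ρ = Real.log (1 / ρ + √((0 : ℝ) ^ 2 + 1 / ρ ^ 2)) := by
      rw [← Real.log_div (by norm_num) hρ0.ne']
      congr 1
      rw [show (0 : ℝ) ^ 2 + 1 / ρ ^ 2 = (1 / ρ) ^ 2 by field_simp; ring, Real.sqrt_sq (by positivity)]
      ring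
    rw [e]
    refine Tendsto.log ?_ (by positivity)
    exact tendsto_const_nhds.add (((h0.pow 2).add tendsto_const_nhds).sqrt)
  have h4 := (h3.sub h1).add h2
  rw [add_zero] at h4
  refine h4.congr' ?_
  filter_upwards [eventually_gt_atTop 0] with N hN
  have hN0 : (0 : ℝ) < N := by exact_mod_cast hN
  have e : Real.arsinh (N / ρ) = Real.log N + Real.log (1 / ρ + √(((N : ℝ)⁻¹) ^ 2 + 1 / ρ ^ 2)) := by
    rw [Real.arsinh, ← Real.log_mul hN0.ne' (by positivity)]
    congr 1
    rw [mul_add]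
    congr 1
    · ring
    · rw [show 1 + ((N : ℝ) / ρ) ^ 2 = N ^ 2 * (((N : ℝ)⁻¹) ^ 2 + 1 / ρ ^ 2) by field_simp,
        Real.sqrt_mul (by positivity), Real.sqrt_sq hN0.le]
  rw [e]
  ring

lemma mean_eq (ρ : ℝ) (hρ : 1 ≤ ρ) :
    ∫ x in (0 : ℝ)..1, ∑' n : ℤ, T (ρ ^ 2) x n =
      Real.log 2 - Real.log ρ - Real.eulerMascheroniConstant := by
  have h := (hasSum_mean ρ hρ).nat_add_neg_add_one.tendsto_sum_nat
  refine tendsto_nhds_unique h ((lim_mean ρ hρ).congr fun N => ?_)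
  rw [← partial_sum]

lemma main_bound (ρ : ℝ) (hρ : 1 ≤ ρ) (x : ℝ) (hx : x ∈ Set.Icc (0 : ℝ) 1) :
    |(∑' n : ℤ, T (ρ ^ 2) x n) - (Real.log 2 - Real.log ρ - Real.eulerMascheroniConstant)| ≤
      K * Real.exp (-(2 * π) * ρ) := by
  have hint : IntervalIntegrable (fun x => ∑' n : ℤ, T (ρ ^ 2) x n) volume 0 1 := by
    apply ContinuousOn.intervalIntegrable
    intro y hy
    rw [Set.uIcc_of_le zero_le_one] at hy
    exact (V_hasDeriv ρ hρ y ⟨by linarith [hy.1], by linarith [hy.2]⟩).continuousAt.continuousWithinAt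
  rw [← mean_eq ρ hρ]
  have e : (∑' n : ℤ, T (ρ ^ 2) x n) - ∫ y in (0 : ℝ)..1, ∑' n : ℤ, T (ρ ^ 2) y n =
      ∫ y in (0 : ℝ)..1, ((∑' n : ℤ, T (ρ ^ 2) x n) - ∑' n : ℤ, T (ρ ^ 2) y n) := by
    rw [intervalIntegral.integral_sub intervalIntegrable_const hint]
    simp
  rw [e]
  have := intervalIntegral.norm_integral_le_of_norm_le_const (a := 0) (b := 1)
    (f := fun y => (∑' n : ℤ, T (ρ ^ 2) x n) - ∑' n : ℤ, T (ρ ^ 2) y n)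
    (C := K * Real.exp (-(2 * π) * ρ)) (fun y hy => ?_)
  · simpa using this
  · rw [Set.uIoc_of_le zero_le_one] at hy
    exact V_lip ρ hρ x y hx ⟨hy.1.le, hy.2⟩

lemma tsum_T_fract (r x : ℝ) (hr : 0 ≤ r) :
    ∑' n, T r (Int.fract x) n = ∑' n, T r x n := by
  have h : Function.Periodic (fun x => ∑' n, T r x n) 1 := fun x => tsum_T_add_one r x hr
  have := h.sub_zsmul_eq (x := x) ⌊x⌋
  rw [zsmul_one] at this
  exact this

end OV

/-- the Ooguri–Vafa potential series converges absolutely, is 1-periodic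
in `x`, and decays exponentially to the semiflat potential
`A − γ_E + log 2 − (1/2)log(μ² + y²)` for `μ² + y² ≥ 1`, with a constant independent
of `A`. -/
theorem statement10 : ∃ C : ℝ, 0 < C ∧ ∀ A μ x y : ℝ, 0 < A →
    (∀ n : ℤ, ¬(μ = 0 ∧ x + n = 0 ∧ y = 0)) →
    Summable (fun n : ℤ => |OVterm μ x y n|) ∧
    OVpot A μ (x + 1) y = OVpot A μ x y ∧
    (1 ≤ μ ^ 2 + y ^ 2 →
      |OVpot A μ x y - A + Real.eulerMascheroniConstant - Real.log 2
          + (1 / 2) * Real.log (μ ^ 2 + y ^ 2)|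
        ≤ C * Real.exp (-(2 * Real.pi) * Real.sqrt (μ ^ 2 + y ^ 2))) := by
  refine ⟨OV.K + 1, by linarith [OV.K_nonneg], ?_⟩
  intro A μ x y _ _
  refine ⟨(OV.summable_OVterm μ x y).abs, ?_, ?_⟩
  · rw [OV.OVpot_eq, OV.OVpot_eq, OV.tsum_T_add_one _ _ (by positivity)]
  · intro h
    set ρ := Real.sqrt (μ ^ 2 + y ^ 2) with hρdef
    have hρ : 1 ≤ ρ := Real.one_le_sqrt.mpr h
    have hsq : μ ^ 2 + y ^ 2 = ρ ^ 2 := (Real.sq_sqrt (by positivity)).symm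
    have hb := OV.main_bound ρ hρ (Int.fract x) ⟨Int.fract_nonneg x, (Int.fract_lt_one x).le⟩
    rw [OV.tsum_T_fract _ _ (by positivity)] at hb
    rw [OV.OVpot_eq, hsq, Real.log_pow]
    push_cast
    have e : A + ∑' n, OV.T (ρ ^ 2) x n - A + Real.eulerMascheroniConstant - Real.log 2
        + 1 / 2 * (2 * Real.log ρ) = (∑' n : ℤ, OV.T (ρ ^ 2) x n) -
        (Real.log 2 - Real.log ρ - Real.eulerMascheroniConstant) := by ring
    rw [e]
    refine hb.trans ?_
    gcongr
    linarith
end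

section
/- There is a constant C > 0 such that for every p with 1 ≤ p ≤ 3/2 and every continuously differentiable compactly supported function u : ℝ⁴ → ℝ, the weighted Sobolev inequality ( ∫_{ℝ⁴} |u(x)|^{2p} (1 + |x|)^{2p−4} dx )^{1/p} ≤ C ∫_{ℝ⁴} |∇u(x)|² dx holds, where |x| is the Euclidean norm and |∇u| the Euclidean norm of the gradient. -/
open MeasureTheory


lemma euler_int (h : (EuclideanSpace ℝ (Fin 4)) → ℝ) (hh : ContDiff ℝ 1 h) (hc : HasCompactSupport h) :
    ∫ x, (4 * h x + fderiv ℝ h x x) = 0 := by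
  have hcont := hh.continuous
  have hdc : Continuous (fderiv ℝ h) := hh.continuous_fderiv one_ne_zero
  have hdcs : HasCompactSupport (fderiv ℝ h) := hc.fderiv ℝ
  have hI : Integrable h := hcont.integrable_of_hasCompactSupport hc
  have hJ : ∀ i : Fin 4, Integrable
      (fun x : (EuclideanSpace ℝ (Fin 4)) => fderiv ℝ h x (EuclideanSpace.single i 1) * x i) := by
    intro i
    apply Continuous.integrable_of_hasCompactSupport
    · fun_prop
    · refine hdcs.mono' (subset_trans ?_ subset_closure)
      intro x hx
      contrapose! hx
      simp only [Function.mem_support, not_not] at hx ⊢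
      simp [hx]
  have key : ∀ i : Fin 4, ∫ x : (EuclideanSpace ℝ (Fin 4)), (h x + fderiv ℝ h x (EuclideanSpace.single i 1) * x i) = 0 := by
    intro i
    have hf : ∀ x : (EuclideanSpace ℝ (Fin 4)), fderiv ℝ (fun y : (EuclideanSpace ℝ (Fin 4)) => y i) x = EuclideanSpace.proj i := by
      intro x
      exact (EuclideanSpace.proj i : (EuclideanSpace ℝ (Fin 4)) →L[ℝ] ℝ).fderiv
    have := integral_mul_fderiv_eq_neg_fderiv_mul_of_integrable (μ := (volume : Measure (EuclideanSpace ℝ (Fin 4))))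
      (f := h) (g := fun x : (EuclideanSpace ℝ (Fin 4)) => x i) (v := EuclideanSpace.single i 1) (hJ i)
      (by simpa [hf] using hI)
      (by
        apply Continuous.integrable_of_hasCompactSupport
        · fun_prop
        · exact hc.mul_right)
      (fun x _ => hh.differentiable one_ne_zero x) (fun x _ => by fun_prop)
    rw [integral_add hI (hJ i)]
    simp [hf] at this
    linarith
  have hsum : ∀ x : (EuclideanSpace ℝ (Fin 4)), 4 * h x + fderiv ℝ h x x =
      ∑ i : Fin 4, (h x + fderiv ℝ h x (EuclideanSpace.single i 1) * x i) := by
    intro x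
    have hx : x = ∑ i : Fin 4, x i • EuclideanSpace.single i (1:ℝ) := by
      ext j; simp [Finset.sum_apply, Pi.single_apply]
    rw [Finset.sum_add_distrib]
    conv_lhs => rw [show fderiv ℝ h x x = fderiv ℝ h x (∑ i : Fin 4, x i • EuclideanSpace.single i (1:ℝ)) from congrArg _ hx]
    simp [mul_comm]
  simp_rw [hsum]
  rw [integral_finsetSum]
  · simp [key]
  · exact fun i _ => hI.add (hJ i)

lemma hardy4 (u : (EuclideanSpace ℝ (Fin 4)) → ℝ) (hu : ContDiff ℝ 1 u) (hc : HasCompactSupport u) :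
    ∫ x, (u x)^2 * (1 + ‖x‖^2)⁻¹ ≤ ∫ x, ‖fderiv ℝ u x‖ ^ 2 := by
  have hpos : ∀ x : (EuclideanSpace ℝ (Fin 4)), 0 < 1 + ‖x‖^2 := fun x => by positivity
  have hw : ContDiff ℝ 1 (fun x : (EuclideanSpace ℝ (Fin 4)) => (1 + ‖x‖^2)⁻¹) :=
    (contDiff_const.add (contDiff_norm_sq ℝ)).inv fun x => (hpos x).ne'
  set h : (EuclideanSpace ℝ (Fin 4)) → ℝ := fun x => (u x)^2 * (1 + ‖x‖^2)⁻¹ with hdef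
  have hh : ContDiff ℝ 1 h := (hu.pow 2).mul hw
  have hhc : HasCompactSupport h := by
    refine HasCompactSupport.mul_right ?_
    exact hc.comp_left (g := fun t : ℝ => t^2) (by simp)
  have hdu : Continuous (fderiv ℝ u) := hu.continuous_fderiv one_ne_zero
  have hdh : Continuous (fderiv ℝ h) := hh.continuous_fderiv one_ne_zero
  have i1 : Integrable h := hh.continuous.integrable_of_hasCompactSupport hhc
  have i2 : Integrable (fun x => ‖fderiv ℝ u x‖ ^ 2) := by
    apply Continuous.integrable_of_hasCompactSupport (by fun_prop)
    exact (hc.fderiv ℝ).comp_left (g := fun t => ‖t‖^2) (by simp)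
  have i3 : Integrable (fun x => 4 * h x + fderiv ℝ h x x) := by
    apply (i1.const_mul 4).add
    apply Continuous.integrable_of_hasCompactSupport (by fun_prop)
    refine (hhc.fderiv ℝ).mono' (subset_trans ?_ subset_closure)
    intro x hx
    contrapose! hx
    simp only [Function.mem_support, not_not] at hx ⊢
    simp [hx]
  have hd : ∀ x, fderiv ℝ h x x = 2 * u x * fderiv ℝ u x x * (1 + ‖x‖^2)⁻¹
      - u x ^ 2 * (2 * ‖x‖^2 * ((1 + ‖x‖^2)⁻¹)^2) := by
    intro x
    have h1 : HasFDerivAt u (fderiv ℝ u x) x := (hu.differentiable one_ne_zero x).hasFDerivAt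
    have h2 := (hasDerivAt_inv (hpos x).ne').comp_hasFDerivAt x
      ((hasFDerivAt_id (𝕜 := ℝ) x).norm_sq.const_add 1)
    have h3 := (h1.pow 2).mul h2
    have h4 : HasFDerivAt h _ x := h3
    rw [h4.fderiv]
    simp
    field_simp
    ring
  have hp : ∀ x, h x - ‖fderiv ℝ u x‖^2 ≤ 4 * h x + fderiv ℝ h x x := by
    intro x
    rw [hd]
    set w := (1 + ‖x‖^2)⁻¹ with hwd
    have hw0 : 0 < w := inv_pos.2 (hpos x)
    have hw1 : w * (1 + ‖x‖^2) = 1 := inv_mul_cancel₀ (hpos x).ne'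
    have hle : |fderiv ℝ u x x| ≤ ‖fderiv ℝ u x‖ * ‖x‖ := (fderiv ℝ u x).le_opNorm x
    have hh : h x = u x ^ 2 * w := rfl
    rw [hh]
    set r := ‖x‖
    set D := ‖fderiv ℝ u x‖
    set d := fderiv ℝ u x x
    have e1 : w * r^2 = 1 - w := by linarith
    have e2 : u x ^ 2 * (2 * r^2 * w^2) = 2 * u x ^2 * w * (1 - w) := by rw [← e1]; ring
    have e3 : -(u x * d) ≤ |u x| * (D * r) := by
      calc _ ≤ |u x * d| := neg_le_abs _
        _ = |u x| * |d| := abs_mul _ _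
        _ ≤ _ := by gcongr
    have e4 : 0 ≤ (|u x| * (w * r) - D)^2 := sq_nonneg _
    have e5 : (|u x| * (w * r) - D)^2 = u x ^2 * w * (1 - w) - 2 * (|u x| * (D * r)) * w + D^2 := by
      rw [← e1, ← sq_abs (u x)]; ring
    have e6 := mul_le_mul_of_nonneg_right e3 hw0.le
    have e7 : 0 ≤ u x ^ 2 * w * w := by positivity
    rw [e2]
    nlinarith
  have := integral_mono (i1.sub i2) i3 hp
  rw [euler_int h hh hhc] at this
  have h5 : ∫ x, (h - fun x => ‖fderiv ℝ u x‖ ^ 2) x = (∫ x, h x) - ∫ x, ‖fderiv ℝ u x‖ ^ 2 :=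
    integral_sub i1 i2
  linarith

lemma sobolev4 : ∃ K : ℝ, 0 ≤ K ∧ ∀ u : (EuclideanSpace ℝ (Fin 4)) → ℝ, ContDiff ℝ 1 u → HasCompactSupport u →
    ∫ x, (u x)^4 ≤ K * (∫ x, ‖fderiv ℝ u x‖ ^ 2)^2 := by
  refine ⟨(eLpNormLESNormFDerivOfEqInnerConst (volume : Measure (EuclideanSpace ℝ (Fin 4))) 2 : ℝ)^4, by positivity, ?_⟩
  intro u hu hc
  have h := eLpNorm_le_eLpNorm_fderiv_of_eq_inner (volume : Measure (EuclideanSpace ℝ (Fin 4))) hu hc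
    (p := 2) (p' := 4) (by norm_num) (by simp) (by simp; norm_num)
  have m1 : MemLp u ((4 : NNReal) : ENNReal) := hu.continuous.memLp_of_hasCompactSupport hc
  have m2 : MemLp (fderiv ℝ u) ((2 : NNReal) : ENNReal) :=
    (hu.continuous_fderiv one_ne_zero).memLp_of_hasCompactSupport (hc.fderiv ℝ)
  rw [m1.eLpNorm_eq_integral_rpow_norm (by simp) (by simp),
    m2.eLpNorm_eq_integral_rpow_norm (by simp) (by simp)] at h
  generalize hC : eLpNormLESNormFDerivOfEqInnerConst (volume : Measure (EuclideanSpace ℝ (Fin 4))) 2 = C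
  rw [show (((2 : NNReal) : ℝ)) = 2 from rfl, hC] at h
  have hA : ∫ x, ‖u x‖ ^ (((4 : NNReal) : ENNReal).toReal) = ∫ x, (u x)^4 := by
    congr 1; ext x
    have : (((4 : NNReal) : ENNReal).toReal) = ((4:ℕ):ℝ) := by simp
    rw [this, Real.rpow_natCast, Real.norm_eq_abs, Even.pow_abs (by decide)]
  have hB : ∫ x, ‖fderiv ℝ u x‖ ^ (((2 : NNReal) : ENNReal).toReal) = ∫ x, ‖fderiv ℝ u x‖^2 := by
    congr 1; ext x
    have : (((2 : NNReal) : ENNReal).toReal) = ((2:ℕ):ℝ) := by simp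
    rw [this, Real.rpow_natCast]
  rw [hA, hB] at h
  set A := ∫ x, (u x)^4
  set B := ∫ x, ‖fderiv ℝ u x‖^2
  have hA0 : 0 ≤ A := integral_nonneg fun x => by positivity
  have hB0 : 0 ≤ B := integral_nonneg fun x => by positivity
  rw [← ENNReal.ofReal_coe_nnreal (p := C), ← ENNReal.ofReal_mul (by positivity),
    ENNReal.ofReal_le_ofReal_iff (by positivity)] at h
  have h4 := pow_le_pow_left₀ (by positivity) h 4
  have e1 : (A ^ (((4 : NNReal) : ENNReal).toReal)⁻¹)^4 = A := by
    rw [← Real.rpow_natCast, ← Real.rpow_mul hA0]; simp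
  have e2 : (B ^ (((2 : NNReal) : ENNReal).toReal)⁻¹)^4 = B^2 := by
    rw [← Real.rpow_natCast, ← Real.rpow_mul hB0, ← Real.rpow_natCast]
    congr 1; simp; norm_num
  rw [mul_pow, e1, e2] at h4
  exact h4

/-- the weighted Sobolev inequality on Euclidean `ℝ⁴`:
`(∫ |u|^{2p} (1+|x|)^{2p−4})^{1/p} ≤ C ∫ |∇u|²` for `1 ≤ p ≤ 3/2` and `u ∈ C¹_c`. -/
theorem statement11 : ∃ C : ℝ, 0 < C ∧
    ∀ p : ℝ, 1 ≤ p → p ≤ 3 / 2 →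
    ∀ u : EuclideanSpace ℝ (Fin 4) → ℝ, ContDiff ℝ 1 u → HasCompactSupport u →
      (∫ x : EuclideanSpace ℝ (Fin 4), |u x| ^ (2 * p) * (1 + ‖x‖) ^ (2 * p - 4)) ^ (1 / p)
        ≤ C * ∫ x : EuclideanSpace ℝ (Fin 4), ‖fderiv ℝ u x‖ ^ 2 := by
  obtain ⟨K, hK, hS⟩ := sobolev4
  refine ⟨1 + K, by positivity, ?_⟩
  intro p hp1 hp2 u hu hc
  have H := hardy4 u hu hc
  have S := hS u hu hc
  set D := ∫ x, ‖fderiv ℝ u x‖ ^ 2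
  have hD : 0 ≤ D := integral_nonneg fun x => by positivity
  have hp0 : 0 < p := by linarith
  have hpos : ∀ x : (EuclideanSpace ℝ (Fin 4)), 0 < 1 + ‖x‖^2 := fun x => by positivity
  have cu := hu.continuous
  have i1 : Integrable (fun x : (EuclideanSpace ℝ (Fin 4)) => (u x)^2 * (1 + ‖x‖^2)⁻¹) := by
    apply Continuous.integrable_of_hasCompactSupport
    · exact (cu.pow 2).mul (Continuous.inv₀ (by fun_prop) fun x => (hpos x).ne')
    · exact HasCompactSupport.mul_right (hc.comp_left (g := fun t : ℝ => t^2) (by simp))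
  have i2 : Integrable (fun x : (EuclideanSpace ℝ (Fin 4)) => (u x)^4) := by
    apply Continuous.integrable_of_hasCompactSupport (by fun_prop)
    exact hc.comp_left (g := fun t : ℝ => t^4) (by simp)
  have main : ∀ s : ℝ, 0 < s → D ≤ s →
      ∫ x : (EuclideanSpace ℝ (Fin 4)), |u x| ^ (2 * p) * (1 + ‖x‖) ^ (2 * p - 4) ≤ (1 + K) * s ^ p := by
    intro s hs hDs
    have hpt : ∀ x : (EuclideanSpace ℝ (Fin 4)), |u x| ^ (2 * p) * (1 + ‖x‖) ^ (2 * p - 4) ≤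
        s ^ (p-1) * ((2 - p) * ((u x)^2 * (1 + ‖x‖^2)⁻¹) + (p - 1) * ((u x)^4 / s)) := by
      intro x
      set r := ‖x‖
      have hr : 0 ≤ r := norm_nonneg x
      set a := (u x)^2 * (1 + r^2)⁻¹
      have ha : 0 ≤ a := by positivity
      have hb : 0 ≤ (u x)^4 / s := by positivity
      have am := Real.geom_mean_le_arith_mean2_weighted (w₁ := 2 - p) (w₂ := p - 1)
        (by linarith) (by linarith) ha hb (by ring)
      refine le_trans ?_ (mul_le_mul_of_nonneg_left am (by positivity))
      have e1 : ((u x)^4 / s)^(p-1) * s^(p-1) = ((u x)^4)^(p-1) := by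
        rw [← Real.mul_rpow hb hs.le, div_mul_cancel₀ _ hs.ne']
      have e2 : s ^ (p-1) * (a^(2-p) * ((u x)^4 / s)^(p-1)) = a^(2-p) * ((u x)^4)^(p-1) := by
        rw [← e1]; ring
      rw [e2]
      have e3 : |u x| ^ (2 * p) * (1 + r) ^ (2 * p - 4) =
          (|u x|^2 * ((1+r)^2)⁻¹)^(2-p) * (|u x|^4)^(p-1) := by
        rw [Real.mul_rpow (by positivity) (by positivity)]
        have t1 : (|u x|^2)^(2-p) * (|u x|^4)^(p-1) = |u x|^(2*p) := by
          rw [← Real.rpow_natCast, ← Real.rpow_natCast, ← Real.rpow_mul (abs_nonneg _),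
            ← Real.rpow_mul (abs_nonneg _), ← Real.rpow_add' (abs_nonneg _)]
          · congr 1; push_cast; ring
          · push_cast; ring_nf; positivity
        have t2 : (((1+r)^2)⁻¹)^(2-p) = (1+r)^(2*p-4) := by
          rw [Real.inv_rpow (by positivity), ← Real.rpow_neg (by positivity),
            ← Real.rpow_natCast, ← Real.rpow_mul (by positivity)]
          congr 1; push_cast; ring
        rw [← t1, ← t2]; ring
      rw [e3, sq_abs, Even.pow_abs (by decide : Even 4)]
      gcongr
      · linarith
      · simp only [a]
        gcongr
        nlinarith
    have i3 : Integrable (fun x : (EuclideanSpace ℝ (Fin 4)) => s ^ (p-1) *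
        ((2 - p) * ((u x)^2 * (1 + ‖x‖^2)⁻¹) + (p - 1) * ((u x)^4 / s))) :=
      ((i1.const_mul _).add ((i2.div_const _).const_mul _)).const_mul _
    have := integral_mono_of_nonneg (μ := (volume : Measure (EuclideanSpace ℝ (Fin 4))))
      (Filter.Eventually.of_forall fun x => by positivity) i3 (Filter.Eventually.of_forall hpt)
    refine this.trans ?_
    rw [integral_const_mul, integral_add (i1.const_mul _) ((i2.div_const _).const_mul _),
      integral_const_mul, integral_const_mul, integral_div]
    have hsp : s ^ p = s^(p-1) * s := by
      rw [Real.rpow_sub_one hs.ne', div_mul_cancel₀ _ hs.ne']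
    rw [hsp]
    have q1 : (∫ x : (EuclideanSpace ℝ (Fin 4)), (u x)^4) / s ≤ K * s := by
      rw [div_le_iff₀ hs]
      calc _ ≤ K * D^2 := S
        _ ≤ K * s^2 := by gcongr
        _ = _ := by ring
    have q2 := H.trans hDs
    have q3 : (2 - p) * (∫ x : (EuclideanSpace ℝ (Fin 4)), (u x)^2 * (1 + ‖x‖^2)⁻¹) + (p - 1) * ((∫ x : (EuclideanSpace ℝ (Fin 4)), (u x)^4) / s)
        ≤ (1 + K) * s := by
      have z1 := mul_le_mul_of_nonneg_left q2 (show 0 ≤ 2 - p by linarith)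
      have z2 := mul_le_mul_of_nonneg_left q1 (show 0 ≤ p - 1 by linarith)
      have z3 : 0 ≤ K * s := by positivity
      nlinarith
    calc _ ≤ s^(p-1) * ((1+K) * s) := by gcongr
      _ = _ := by ring
  have main2 : ∀ s : ℝ, 0 < s → D ≤ s →
      (∫ x : (EuclideanSpace ℝ (Fin 4)), |u x| ^ (2 * p) * (1 + ‖x‖) ^ (2 * p - 4)) ^ (1/p) ≤ (1 + K) * s := by
    intro s hs hDs
    have h0 : 0 ≤ ∫ x : (EuclideanSpace ℝ (Fin 4)), |u x| ^ (2 * p) * (1 + ‖x‖) ^ (2 * p - 4) :=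
      integral_nonneg fun x => by positivity
    calc _ ≤ ((1 + K) * s ^ p)^(1/p) := Real.rpow_le_rpow h0 (main s hs hDs) (by positivity)
      _ = (1+K)^(1/p) * s := by
        rw [Real.mul_rpow (by positivity) (by positivity), ← Real.rpow_mul hs.le,
          mul_one_div_cancel hp0.ne', Real.rpow_one]
      _ ≤ (1+K) * s := by
        gcongr
        apply Real.rpow_le_self_of_one_le (by linarith)
        rw [div_le_one hp0]; exact hp1
  apply le_of_forall_pos_le_add
  intro ε hε
  have := main2 (D + ε / (1 + K)) (by positivity) (by linarith [show 0 < ε / (1+K) by positivity])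
  rw [mul_add, mul_div_cancel₀ _ (by positivity)] at this
  exact this
end

section
/- For every C₀ ≥ 1 there are constants c ≥ 1 and C > 0 with the following property (far-field asymptote of the doubly periodic Newtonian potential). Let a be a positive definite Hermitian 2×2 complex matrix with A = det a ≥ 1 which is C₀-elliptic, and define γ(η₁, η₂, μ) = −(1/(8π²)) Σ_{(n₁,n₂)∈ℤ²} ( Q(η₁+n₁, η₂+n₂) + Aμ² )^{−3/2} for (η₁, η₂, μ) ∈ ℂ² × ℝ with ϱ > 0, where ϱ = √((A/𝔸)Qℝ(Im η₁, Im η₂) + Aμ²). Then whenever ϱ ≥ c·A^{1/4}, the series converges absolutely and | γ(η₁, η₂, μ) + 1/(4π·ϱ·√𝔸) | ≤ C·ϱ^{−3}. -/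
/-- The Hermitian form `Q(w) = a₁₁|w₁|² + a₂₂|w₂|² + 2Re(a₁₂ w₁ conj(w₂))`. -/
noncomputable def Qh (a11 a22 : ℝ) (a12 w1 w2 : ℂ) : ℝ :=
  a11 * Complex.normSq w1 + a22 * Complex.normSq w2 + 2 * (a12 * w1 * (starRingEnd ℂ) w2).re

/-- The real quadratic form `Qℝ(y) = a₁₁y₁² + 2Re(a₁₂)y₁y₂ + a₂₂y₂²`. -/
noncomputable def QR (a11 a22 : ℝ) (a12 : ℂ) (y1 y2 : ℝ) : ℝ :=
  a11 * y1 ^ 2 + 2 * a12.re * y1 * y2 + a22 * y2 ^ 2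

/-- The distance `ϱ = √((A/𝔸)Qℝ(y₁,y₂) + Aμ²)` with `A = det a`, `𝔸 = A + (Im a₁₂)²`. -/
noncomputable def rhoH (a11 a22 : ℝ) (a12 : ℂ) (y1 y2 μ : ℝ) : ℝ :=
  Real.sqrt (((a11 * a22 - Complex.normSq a12) /
      (a11 * a22 - Complex.normSq a12 + a12.im ^ 2)) * QR a11 a22 a12 y1 y2
    + (a11 * a22 - Complex.normSq a12) * μ ^ 2)

/-- `C₀`-ellipticity of the Hermitian matrix `a`. -/
def IsEllipticH (C₀ a11 a22 : ℝ) (a12 : ℂ) : Prop :=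
  ∀ w1 w2 : ℂ,
    C₀⁻¹ * Real.sqrt (a11 * a22 - Complex.normSq a12) *
        (Complex.normSq w1 + Complex.normSq w2) ≤ Qh a11 a22 a12 w1 w2 ∧
      Qh a11 a22 a12 w1 w2 ≤ C₀ * Real.sqrt (a11 * a22 - Complex.normSq a12) *
        (Complex.normSq w1 + Complex.normSq w2)

section Aux
open MeasureTheory Set Filter Topology

lemma aux_radial (p ρ : ℝ) (hp : 1 < p) (hρ : 0 < ρ) :
    IntegrableOn (fun r : ℝ => r * (r ^ 2 + ρ ^ 2) ^ (-p)) (Ioi 0) ∧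
    ∫ r in Ioi (0:ℝ), r * (r ^ 2 + ρ ^ 2) ^ (-p) = (ρ ^ 2) ^ (1 - p) / (2 * (p - 1)) := by
  have hd : ∀ x ∈ Ici (0:ℝ), HasDerivAt (fun r : ℝ => (r ^ 2 + ρ ^ 2) ^ (1 - p) / (2 * (1 - p)))
      (x * (x ^ 2 + ρ ^ 2) ^ (-p)) x := by
    intro x _
    have h1 : HasDerivAt (fun r : ℝ => r ^ 2 + ρ ^ 2) (2 * x) x := by
      simpa using (hasDerivAt_pow 2 x).add_const (ρ ^ 2)
    have h2 := (h1.rpow_const (p := 1 - p) (Or.inl (by positivity))).div_const (2 * (1 - p))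
    have h0 : 1 - p ≠ 0 := by linarith
    have h3 : 2 * x * (1 - p) * (x ^ 2 + ρ ^ 2) ^ (1 - p - 1) / (2 * (1 - p)) =
        x * (x ^ 2 + ρ ^ 2) ^ (-p) := by
      rw [show 1 - p - 1 = -p by ring]
      field_simp
    rw [h3] at h2
    exact h2
  have hpos : ∀ x ∈ Ioi (0:ℝ), 0 ≤ x * (x ^ 2 + ρ ^ 2) ^ (-p) := by
    intro x hx
    have : (0:ℝ) < x := hx
    positivity
  have ht : Tendsto (fun r : ℝ => (r ^ 2 + ρ ^ 2) ^ (1 - p) / (2 * (1 - p))) atTop (𝓝 0) := by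
    have h1 : Tendsto (fun r : ℝ => r ^ 2 + ρ ^ 2) atTop atTop :=
      tendsto_atTop_add_const_right _ _ (tendsto_pow_atTop (by norm_num))
    have h2 := (tendsto_rpow_neg_atTop (y := p - 1) (by linarith)).comp h1
    have h3 := h2.div_const (2 * (1 - p))
    simpa [Function.comp_def] using h3
  refine ⟨integrableOn_Ioi_deriv_of_nonneg' hd hpos ht, ?_⟩
  rw [integral_Ioi_of_hasDerivAt_of_nonneg' hd hpos ht]
  have : 1 - p ≠ 0 := by linarith
  have : p - 1 ≠ 0 := by linarith
  simp
  rw [← neg_sub p 1]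
  field_simp

lemma aux_complex (p ρ : ℝ) (hp : 1 < p) (hρ : 0 < ρ) :
    Integrable (fun z : ℂ => (‖z‖ ^ 2 + ρ ^ 2) ^ (-p)) ∧
    ∫ z : ℂ, (‖z‖ ^ 2 + ρ ^ 2) ^ (-p) = Real.pi * (ρ ^ 2) ^ (1 - p) / (p - 1) := by
  obtain ⟨h1, h2⟩ := aux_radial p ρ hp hρ
  constructor
  · rw [integrable_fun_norm_addHaar (volume : Measure ℂ) (f := fun r => (r ^ 2 + ρ ^ 2) ^ (-p))]
    simpa using h1
  · rw [integral_fun_norm_addHaar (volume : Measure ℂ) (fun r => (r ^ 2 + ρ ^ 2) ^ (-p))]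
    simp only [Complex.finrank_real_complex, smul_eq_mul, Nat.add_one_sub_one, pow_one]
    rw [h2]
    simp [Measure.real]
    have : p - 1 ≠ 0 := by linarith
    field_simp

lemma aux_prod (p ρ : ℝ) (hp : 1 < p) (hρ : 0 < ρ) :
    Integrable (fun z : ℝ × ℝ => (z.1 ^ 2 + z.2 ^ 2 + ρ ^ 2) ^ (-p)) ∧
    ∫ z : ℝ × ℝ, (z.1 ^ 2 + z.2 ^ 2 + ρ ^ 2) ^ (-p) = Real.pi * (ρ ^ 2) ^ (1 - p) / (p - 1) := by
  have he : (fun z : ℂ => (‖z‖ ^ 2 + ρ ^ 2) ^ (-p)) =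
      (fun z : ℝ × ℝ => (z.1 ^ 2 + z.2 ^ 2 + ρ ^ 2) ^ (-p)) ∘ Complex.measurableEquivRealProd := by
    ext z
    rw [Complex.sq_norm, Complex.normSq_apply]
    simp [Complex.measurableEquivRealProd, sq]
  obtain ⟨h1, h2⟩ := aux_complex p ρ hp hρ
  rw [he] at h1 h2
  have hm := Complex.volume_preserving_equiv_real_prod
  constructor
  · exact (hm.integrable_comp_emb (MeasurableEquiv.measurableEmbedding _)).1 h1
  · rw [← h2]
    exact (hm.integral_comp (MeasurableEquiv.measurableEmbedding _) _).symm

lemma aux_form (a b d p ρ : ℝ) (hp : 1 < p) (hρ : 0 < ρ) (ha : 0 < a) (hD : 0 < a * d - b ^ 2) :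
    Integrable (fun z : ℝ × ℝ => (a * z.1 ^ 2 + 2 * b * z.1 * z.2 + d * z.2 ^ 2 + ρ ^ 2) ^ (-p)) ∧
    ∫ z : ℝ × ℝ, (a * z.1 ^ 2 + 2 * b * z.1 * z.2 + d * z.2 ^ 2 + ρ ^ 2) ^ (-p) =
      Real.pi * (ρ ^ 2) ^ (1 - p) / (p - 1) / √(a * d - b ^ 2) := by
  obtain ⟨h1, h2⟩ := aux_prod p ρ hp hρ
  set D := a * d - b ^ 2 with hDdef
  have hsa : 0 < √a := Real.sqrt_pos.2 ha
  have hsD : 0 < √D := Real.sqrt_pos.2 hD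
  have hsa2 : √a ^ 2 = a := Real.sq_sqrt ha.le
  have hsD2 : √D ^ 2 = D := Real.sq_sqrt hD.le
  let M : Matrix (Fin 2) (Fin 2) ℝ := !![√a, b / √a; 0, √D / √a]
  let T : (ℝ × ℝ) →ₗ[ℝ] (ℝ × ℝ) :=
    Matrix.toLin (Module.Basis.finTwoProd ℝ) (Module.Basis.finTwoProd ℝ) M
  have hdet : LinearMap.det T = √D := by
    simp only [T, LinearMap.det_toLin, M, Matrix.det_fin_two_of]
    field_simp
    ring
  have hdet0 : LinearMap.det T ≠ 0 := by rw [hdet]; exact hsD.ne'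
  have hT : ∀ z, T z = (√a * z.1 + b / √a * z.2, 0 * z.1 + √D / √a * z.2) := fun z =>
    Matrix.toLin_finTwoProd_apply _ _ _ _ z
  have hmap := Measure.map_linearMap_addHaar_eq_smul_addHaar (volume : Measure (ℝ × ℝ)) hdet0
  have he : (fun z : ℝ × ℝ => (a * z.1 ^ 2 + 2 * b * z.1 * z.2 + d * z.2 ^ 2 + ρ ^ 2) ^ (-p)) =
      (fun z : ℝ × ℝ => (z.1 ^ 2 + z.2 ^ 2 + ρ ^ 2) ^ (-p)) ∘ T := by
    ext z
    simp only [Function.comp, hT]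
    congr 2
    have : (√a * z.1 + b / √a * z.2) ^ 2 + (0 * z.1 + √D / √a * z.2) ^ 2
      = √a ^ 2 * z.1 ^ 2 + 2 * b * z.1 * z.2 + (b ^ 2 + √D ^ 2) / √a ^ 2 * z.2 ^ 2 := by
      field_simp
      ring
    rw [this, hsa2, hsD2, hDdef]
    field_simp
    ring
  have hTc : Continuous T := LinearMap.continuous_of_finiteDimensional T
  have hTm : AEMeasurable T (volume : Measure (ℝ × ℝ)) := hTc.aemeasurable
  have hg : Continuous (fun z : ℝ × ℝ => (z.1 ^ 2 + z.2 ^ 2 + ρ ^ 2) ^ (-p)) := by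
    apply Continuous.rpow_const (by fun_prop)
    intro z
    left
    positivity
  have hi : Integrable (fun z : ℝ × ℝ => (z.1 ^ 2 + z.2 ^ 2 + ρ ^ 2) ^ (-p))
      (Measure.map T volume) := by
    rw [hmap]
    exact h1.smul_measure ENNReal.ofReal_ne_top
  rw [he]
  constructor
  · exact hi.comp_aemeasurable hTm
  · have := integral_map hTm (f := (fun z : ℝ × ℝ => (z.1 ^ 2 + z.2 ^ 2 + ρ ^ 2) ^ (-p)))
      hg.aestronglyMeasurable
    simp only [Function.comp_def]
    rw [← this, hmap, integral_smul_measure, h2, hdet, ENNReal.toReal_ofReal (abs_nonneg _),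
      abs_of_pos (inv_pos.2 hsD), smul_eq_mul]
    field_simp

lemma aux_tile (v1 v2 : ℝ) (f : ℝ × ℝ → ℝ) (hf : Integrable f) :
    HasSum (fun n : ℤ × ℤ => ∫ u in Ioc (-(1/2):ℝ) (1/2) ×ˢ Ioc (-(1/2):ℝ) (1/2),
      f (v1 + n.1 + u.1, v2 + n.2 + u.2)) (∫ z, f z) := by
  let s : ℤ × ℤ → Set (ℝ × ℝ) := fun n =>
    Ioc ((v1 - 1/2) + n.1) ((v1 - 1/2) + n.1 + 1) ×ˢ Ioc ((v2 - 1/2) + n.2) ((v2 - 1/2) + n.2 + 1)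
  have hu : ⋃ n, s n = univ := by
    rw [eq_univ_iff_forall]
    rintro ⟨x, y⟩
    have hx : x ∈ ⋃ n : ℤ, Ioc ((v1 - 1/2) + n) ((v1 - 1/2) + n + 1) := by
      rw [iUnion_Ioc_add_intCast]; trivial
    have hy : y ∈ ⋃ n : ℤ, Ioc ((v2 - 1/2) + n) ((v2 - 1/2) + n + 1) := by
      rw [iUnion_Ioc_add_intCast]; trivial
    obtain ⟨n, hn⟩ := mem_iUnion.1 hx
    obtain ⟨m, hm⟩ := mem_iUnion.1 hy
    exact mem_iUnion.2 ⟨(n, m), hn, hm⟩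
  have hd : Pairwise (Function.onFun Disjoint s) := by
    rintro ⟨n1, n2⟩ ⟨m1, m2⟩ hne
    simp only [Function.onFun, s]
    rw [Set.disjoint_prod]
    by_cases h : n1 = m1
    · right
      exact pairwise_disjoint_Ioc_add_intCast (v2 - 1/2) (fun h' => hne (by rw [h, h']))
    · left
      exact pairwise_disjoint_Ioc_add_intCast (v1 - 1/2) h
  have hs := hasSum_integral_iUnion (μ := volume) (f := f) (s := s)
    (fun n => measurableSet_Ioc.prod measurableSet_Ioc) hd hf.integrableOn
  rw [hu, setIntegral_univ] at hs
  refine (congrArg (fun F => HasSum F (∫ z, f z)) (funext fun n => ?_)).mpr hs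
  have hpre : (fun u : ℝ × ℝ => (v1 + n.1 + u.1, v2 + n.2 + u.2)) ⁻¹' s n
      = Ioc (-(1/2):ℝ) (1/2) ×ˢ Ioc (-(1/2):ℝ) (1/2) := by
    ext ⟨x, y⟩
    simp only [s, mem_preimage, mem_prod, mem_Ioc]
    constructor <;> rintro ⟨⟨h1, h2⟩, h3, h4⟩ <;> refine ⟨⟨?_, ?_⟩, ?_, ?_⟩ <;> linarith
  have hmp : MeasurePreserving (fun u : ℝ × ℝ => (v1 + n.1 + u.1, v2 + n.2 + u.2)) :=
    measurePreserving_add_left volume ((v1 + n.1, v2 + n.2) : ℝ × ℝ)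
  have hemb : MeasurableEmbedding (fun u : ℝ × ℝ => (v1 + n.1 + u.1, v2 + n.2 + u.2)) :=
    measurableEmbedding_addLeft ((v1 + n.1, v2 + n.2) : ℝ × ℝ)
  rw [← hpre]
  exact hmp.setIntegral_preimage_emb hemb f (s n)

lemma aux_taylor (W x y : ℝ) (hW : 1 ≤ W) (hx : 0 < x) (hy : 0 < y) (h : x ≤ W * y) :
    |(y ^ 3)⁻¹ - (x ^ 3)⁻¹ + 3 / 2 * (y ^ 2 - x ^ 2) * (x ^ 5)⁻¹| ≤
      8 * W ^ 3 * (y ^ 2 - x ^ 2) ^ 2 * (x ^ 7)⁻¹ := by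
  have e : (y ^ 3)⁻¹ - (x ^ 3)⁻¹ + 3 / 2 * (y ^ 2 - x ^ 2) * (x ^ 5)⁻¹
      = (x - y) ^ 2 * (x ^ 3 + 2 * x ^ 2 * y + 3 * x * y ^ 2 + 3 / 2 * y ^ 3) *
        ((x ^ 5)⁻¹ * (y ^ 3)⁻¹) := by
    field_simp
    ring
  rw [e, abs_of_nonneg (by positivity)]
  have e2 : 8 * W ^ 3 * (y ^ 2 - x ^ 2) ^ 2 * (x ^ 7)⁻¹ =
      (x - y) ^ 2 * (8 * W ^ 3 * y ^ 3) * ((x + y) ^ 2 * (x ^ 2)⁻¹) * ((x ^ 5)⁻¹ * (y ^ 3)⁻¹) := by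
    field_simp
    ring
  rw [e2]
  refine mul_le_mul_of_nonneg_right ?_ (by positivity)
  have h1 : 1 ≤ (x + y) ^ 2 * (x ^ 2)⁻¹ := by
    rw [← div_eq_mul_inv, one_le_div (by positivity)]
    gcongr
    linarith
  have hyW : y ≤ W * y := by nlinarith
  have h2 : x ^ 3 + 2 * x ^ 2 * y + 3 * x * y ^ 2 + 3 / 2 * y ^ 3 ≤ 8 * W ^ 3 * y ^ 3 := by
    calc _ ≤ (W * y) ^ 3 + 2 * (W * y) ^ 2 * (W * y) + 3 * (W * y) * (W * y) ^ 2
          + 3 / 2 * (W * y) ^ 3 := by gcongr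
      _ = 7.5 * (W * y) ^ 3 := by ring
      _ ≤ 8 * (W * y) ^ 3 := by gcongr; norm_num
      _ = _ := by ring
  calc _ ≤ (x - y) ^ 2 * (8 * W ^ 3 * y ^ 3) := by gcongr
    _ ≤ _ := le_mul_of_one_le_right (by positivity) h1

set_option maxHeartbeats 1000000 in
/-- pointwise estimates -/
lemma aux_point (C₀ a b d ρ L : ℝ) (hC : 1 ≤ C₀) (hρ : 0 < ρ) (hL : 0 ≤ L)
    (hLρ : L ≤ C₀ * ρ ^ 2)
    (hpos : ∀ x y : ℝ, 0 ≤ a * x ^ 2 + 2 * b * x * y + d * y ^ 2)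
    (hD : 0 < a * d - b ^ 2)
    (hup : ∀ x y : ℝ, a * x ^ 2 + 2 * b * x * y + d * y ^ 2 ≤ L * (x ^ 2 + y ^ 2))
    (x1 x2 u1 u2 q s : ℝ) (hu1 : |u1| ≤ 1 / 2) (hu2 : |u2| ≤ 1 / 2)
    (hq : q = a * x1 ^ 2 + 2 * b * x1 * x2 + d * x2 ^ 2 + ρ ^ 2)
    (hs : s = a * (x1 + u1) ^ 2 + 2 * b * (x1 + u1) * (x2 + u2) + d * (x2 + u2) ^ 2 + ρ ^ 2) :
    |(√s ^ 3)⁻¹ - (√q ^ 3)⁻¹ +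
      3 * (√q ^ 5)⁻¹ * (a * x1 * u1 + b * (x1 * u2 + x2 * u1) + d * x2 * u2)| ≤
      (1 + 4 * (2 + C₀) ^ 3 * (8 + C₀)) * L * (√q ^ 5)⁻¹ ∧
    (√q ^ 5)⁻¹ ≤ (2 + C₀) ^ 5 * (√s ^ 5)⁻¹ := by
  set B := a * x1 * u1 + b * (x1 * u2 + x2 * u1) + d * x2 * u2 with hB
  set U := a * u1 ^ 2 + 2 * b * u1 * u2 + d * u2 ^ 2 with hU
  set X := a * x1 ^ 2 + 2 * b * x1 * x2 + d * x2 ^ 2 with hX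
  set Y := a * (x1 + u1) ^ 2 + 2 * b * (x1 + u1) * (x2 + u2) + d * (x2 + u2) ^ 2 with hY
  have hX0 : 0 ≤ X := hpos x1 x2
  have hU0 : 0 ≤ U := hpos u1 u2
  have hY0 : 0 ≤ Y := hpos _ _
  have hYe : Y = X + 2 * B + U := by rw [hX, hB, hU, hY]; ring
  have hq0 : 0 < q := by rw [hq]; positivity
  have hs0 : 0 < s := by rw [hs]; positivity
  have hUL : U ≤ L / 2 := by
    have h1 := hup u1 u2
    have h2 : u1 ^ 2 ≤ 1 / 4 := by have := sq_le_sq' (a := u1) (b := 1/2) (by linarith [abs_le.1 hu1]) (abs_le.1 hu1).2; linarith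
    have h3 : u2 ^ 2 ≤ 1 / 4 := by have := sq_le_sq' (a := u2) (b := 1/2) (by linarith [abs_le.1 hu2]) (abs_le.1 hu2).2; linarith
    nlinarith
  have hCS : B ^ 2 ≤ X * U := by
    have : X * U - B ^ 2 = (a * d - b ^ 2) * (x1 * u2 - x2 * u1) ^ 2 := by
      rw [hX, hU, hB]; ring
    nlinarith [mul_nonneg hD.le (sq_nonneg (x1 * u2 - x2 * u1))]
  have hXY : X ≤ 2 * Y + 2 * U := by
    have h := hpos (x1 + 2 * u1) (x2 + 2 * u2)
    have : a * (x1 + 2 * u1) ^ 2 + 2 * b * (x1 + 2 * u1) * (x2 + 2 * u2) + d * (x2 + 2 * u2) ^ 2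
      = X + 4 * B + 4 * U := by rw [hX, hB, hU]; ring
    linarith
  have hYX : Y ≤ 2 * X + 2 * U := by
    have h := hpos (x1 - u1) (x2 - u2)
    have : a * (x1 - u1) ^ 2 + 2 * b * (x1 - u1) * (x2 - u2) + d * (x2 - u2) ^ 2
      = X - 2 * B + U := by rw [hX, hB, hU]; ring
    linarith
  clear_value B U X Y
  have hρ2 : 0 < ρ ^ 2 := by positivity
  set W := 2 + C₀ with hW
  have hqs : q ≤ W ^ 2 * s := by
    have h1 : q ≤ W * s := by
      rw [hq, hs, hW]
      have := mul_nonneg (show 0 ≤ C₀ by linarith) hY0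
      linarith
    have h2 : s * W ≤ s * W ^ 2 := by gcongr; nlinarith
    linarith
  have hsq : s ≤ W ^ 2 * q := by
    have h1 : s ≤ W * q := by
      rw [hq, hs, hW]
      have := mul_nonneg (show 0 ≤ C₀ by linarith) hX0
      linarith
    have h2 : q * W ≤ q * W ^ 2 := by gcongr; nlinarith
    linarith
  have hW0 : 0 < W := by linarith
  have hqs' : √q ≤ W * √s := by
    have := Real.sqrt_le_sqrt hqs
    rwa [Real.sqrt_mul (by positivity), Real.sqrt_sq hW0.le] at this
  have hsq' : √s ≤ W * √q := by
    have := Real.sqrt_le_sqrt hsq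
    rwa [Real.sqrt_mul (by positivity), Real.sqrt_sq hW0.le] at this
  have hq1 : 0 < √q := Real.sqrt_pos.2 hq0
  have hs1 : 0 < √s := Real.sqrt_pos.2 hs0
  have hq2 : √q ^ 2 = q := Real.sq_sqrt hq0.le
  have hs2 : √s ^ 2 = s := Real.sq_sqrt hs0.le
  constructor
  · have ht := aux_taylor W (√q) (√s) (by linarith) hq1 hs1 hqs'
    rw [hq2, hs2] at ht
    have hsmq : s - q = 2 * B + U := by rw [hs, hq, hYe]; ring
    have hsm2 : (s - q) ^ 2 ≤ (8 + C₀) * (L / 2) * q := by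
      calc (s - q) ^ 2 ≤ 2 * U ^ 2 + 8 * B ^ 2 := by rw [hsmq]; nlinarith [sq_nonneg (2 * B - U)]
        _ ≤ U * (2 * U + 8 * X) := by
          have : U * (2 * U + 8 * X) = 2 * U ^ 2 + 8 * (X * U) := by ring
          linarith
        _ ≤ (L / 2) * ((8 + C₀) * q) := by
          apply mul_le_mul hUL _ (by positivity) (by positivity)
          rw [hq]
          have := mul_nonneg (show 0 ≤ C₀ by linarith) hX0
          linarith
        _ = _ := by ring
    have e1 : (√s ^ 3)⁻¹ - (√q ^ 3)⁻¹ + 3 * (√q ^ 5)⁻¹ * B =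
        ((√s ^ 3)⁻¹ - (√q ^ 3)⁻¹ + 3 / 2 * (s - q) * (√q ^ 5)⁻¹) - 3 / 2 * U * (√q ^ 5)⁻¹ := by
      rw [hsmq]; ring
    rw [e1]
    have h7 : q * (√q ^ 7)⁻¹ = (√q ^ 5)⁻¹ := by
      nth_rewrite 1 [← hq2]
      field_simp
    have ht2 : 8 * W ^ 3 * (s - q) ^ 2 * (√q ^ 7)⁻¹ ≤
        4 * W ^ 3 * (8 + C₀) * L * (√q ^ 5)⁻¹ := by
      calc _ ≤ 8 * W ^ 3 * ((8 + C₀) * (L / 2) * q) * (√q ^ 7)⁻¹ := by gcongr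
        _ = 4 * W ^ 3 * (8 + C₀) * L * (q * (√q ^ 7)⁻¹) := by ring
        _ = _ := by rw [h7]
    have h5 : 0 < (√q ^ 5)⁻¹ := by positivity
    have hU5 : 3 / 2 * U * (√q ^ 5)⁻¹ ≤ L * (√q ^ 5)⁻¹ := by
      gcongr; linarith
    have hU6 : 0 ≤ 3 / 2 * U * (√q ^ 5)⁻¹ := by positivity
    have hab := abs_sub ((√s ^ 3)⁻¹ - (√q ^ 3)⁻¹ + 3 / 2 * (s - q) * (√q ^ 5)⁻¹)
      (3 / 2 * U * (√q ^ 5)⁻¹)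
    rw [abs_of_nonneg hU6] at hab
    calc _ ≤ _ := hab
      _ ≤ 4 * W ^ 3 * (8 + C₀) * L * (√q ^ 5)⁻¹ + L * (√q ^ 5)⁻¹ := by linarith
      _ = _ := by ring
  · have : √s ^ 5 ≤ W ^ 5 * √q ^ 5 := by
      rw [← mul_pow]; gcongr
    rw [← div_eq_mul_inv, inv_eq_one_div, div_le_div_iff₀ (by positivity) (by positivity)]
    linarith

lemma aux_vol : (volume : Measure (ℝ × ℝ)) (Ioc (-(1/2):ℝ) (1/2) ×ˢ Ioc (-(1/2):ℝ) (1/2)) = 1 := by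
  rw [Measure.volume_eq_prod, Measure.prod_prod, Real.volume_Ioc]
  norm_num

lemma aux_id : ∫ t in Ioc (-(1/2):ℝ) (1/2), t = 0 := by
  rw [← intervalIntegral.integral_of_le (by norm_num), integral_id]
  norm_num

lemma aux_intS (F : ℝ × ℝ → ℝ) (hF : Continuous F) :
    IntegrableOn F (Ioc (-(1/2):ℝ) (1/2) ×ˢ Ioc (-(1/2):ℝ) (1/2)) := by
  refine (hF.continuousOn.integrableOn_compact
    (isCompact_Icc.prod isCompact_Icc : IsCompact (Icc (-(1/2):ℝ) (1/2) ×ˢ Icc (-(1/2):ℝ) (1/2)))).mono_set ?_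
  exact prod_mono Ioc_subset_Icc_self Ioc_subset_Icc_self

lemma aux_lin (A B : ℝ) :
    ∫ u in Ioc (-(1/2):ℝ) (1/2) ×ˢ Ioc (-(1/2):ℝ) (1/2), (A * u.1 + B * u.2) = 0 := by
  have h1 : ∫ u in Ioc (-(1/2):ℝ) (1/2) ×ˢ Ioc (-(1/2):ℝ) (1/2), u.1 = 0 := by
    have := setIntegral_prod_mul (μ := (volume : Measure ℝ)) (ν := (volume : Measure ℝ))
      (fun t : ℝ => t) (fun _ : ℝ => (1:ℝ)) (Ioc (-(1/2):ℝ) (1/2)) (Ioc (-(1/2):ℝ) (1/2))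
    rw [aux_id, zero_mul] at this
    simpa [Measure.volume_eq_prod] using this
  have h2 : ∫ u in Ioc (-(1/2):ℝ) (1/2) ×ˢ Ioc (-(1/2):ℝ) (1/2), u.2 = 0 := by
    have := setIntegral_prod_mul (μ := (volume : Measure ℝ)) (ν := (volume : Measure ℝ))
      (fun _ : ℝ => (1:ℝ)) (fun t : ℝ => t) (Ioc (-(1/2):ℝ) (1/2)) (Ioc (-(1/2):ℝ) (1/2))
    rw [aux_id, mul_zero] at this
    simpa [Measure.volume_eq_prod] using this
  rw [integral_add (aux_intS _ (by fun_prop)) (aux_intS _ (by fun_prop)),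
    integral_const_mul, integral_const_mul, h1, h2]
  simp

lemma aux_rpow (t : ℝ) (k : ℕ) (ht : 0 ≤ t) : t ^ (-((k:ℝ) / 2)) = (√t ^ k)⁻¹ := by
  rw [Real.rpow_neg ht, Real.sqrt_eq_rpow, ← Real.rpow_natCast, ← Real.rpow_mul ht]
  congr 2
  ring

lemma aux_constle (F : ℝ × ℝ → ℝ) (hF : Continuous F) (k : ℝ)
    (h : ∀ u ∈ Ioc (-(1/2):ℝ) (1/2) ×ˢ Ioc (-(1/2):ℝ) (1/2), k ≤ F u) :
    k ≤ ∫ u in Ioc (-(1/2):ℝ) (1/2) ×ˢ Ioc (-(1/2):ℝ) (1/2), F u := by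
  have hm := setIntegral_mono_on (aux_intS (fun _ => k) continuous_const) (aux_intS F hF)
    (measurableSet_Ioc.prod measurableSet_Ioc) h
  rw [setIntegral_const, Measure.real, aux_vol] at hm
  simpa using hm

lemma aux_affine (F : ℝ × ℝ → ℝ) (hF : Continuous F) (k A B : ℝ) :
    ∫ u in Ioc (-(1/2):ℝ) (1/2) ×ˢ Ioc (-(1/2):ℝ) (1/2), (F u - k + (A * u.1 + B * u.2)) =
    (∫ u in Ioc (-(1/2):ℝ) (1/2) ×ˢ Ioc (-(1/2):ℝ) (1/2), F u) - k := by
  rw [integral_add (f := fun u => F u - k) (g := fun u => A * u.1 + B * u.2)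
    (aux_intS _ (by fun_prop)) (aux_intS _ (by fun_prop)),
    integral_sub (aux_intS _ hF) (aux_intS _ continuous_const), aux_lin,
    setIntegral_const, Measure.real, aux_vol]
  simp

set_option maxHeartbeats 1000000 in
lemma aux_core (C₀ a b d ρ L v1 v2 : ℝ) (hC : 1 ≤ C₀) (hρ : 0 < ρ) (hL : 0 ≤ L)
    (hLρ : L ≤ C₀ * ρ ^ 2) (ha : 0 < a)
    (hpos : ∀ x y : ℝ, 0 ≤ a * x ^ 2 + 2 * b * x * y + d * y ^ 2)
    (hD : 0 < a * d - b ^ 2)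
    (hup : ∀ x y : ℝ, a * x ^ 2 + 2 * b * x * y + d * y ^ 2 ≤ L * (x ^ 2 + y ^ 2)) :
    Summable (fun n : ℤ × ℤ => (√(a * (v1 + n.1) ^ 2 + 2 * b * (v1 + n.1) * (v2 + n.2)
      + d * (v2 + n.2) ^ 2 + ρ ^ 2) ^ 3)⁻¹) ∧
    |∑' n : ℤ × ℤ, (√(a * (v1 + n.1) ^ 2 + 2 * b * (v1 + n.1) * (v2 + n.2)
      + d * (v2 + n.2) ^ 2 + ρ ^ 2) ^ 3)⁻¹ - 2 * Real.pi / (ρ * √(a * d - b ^ 2))| ≤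
    (1 + 4 * (2 + C₀) ^ 3 * (8 + C₀)) * L * ((2 + C₀) ^ 5 *
      (2 * Real.pi / (3 * ρ ^ 3 * √(a * d - b ^ 2)))) := by
  set K := 1 + 4 * (2 + C₀) ^ 3 * (8 + C₀) with hK
  have hK0 : 0 ≤ K := by positivity
  let q : ℝ × ℝ → ℝ := fun z => a * z.1 ^ 2 + 2 * b * z.1 * z.2 + d * z.2 ^ 2 + ρ ^ 2
  have hq0 : ∀ z, 0 < q z := fun z => by
    have := hpos z.1 z.2
    simp only [q]; positivity
  have hqc : Continuous q := by fun_prop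
  let f : ℕ → ℝ × ℝ → ℝ := fun k z => (√(q z) ^ k)⁻¹
  have hfc : ∀ k, Continuous (f k) := fun k => by
    apply Continuous.inv₀ (by fun_prop)
    intro z
    have := Real.sqrt_pos.2 (hq0 z)
    positivity
  have hfint : ∀ k : ℕ, 2 < k → Integrable (f k) ∧ ∫ z, f k z =
      Real.pi * (ρ ^ 2) ^ (1 - (k:ℝ)/2) / ((k:ℝ)/2 - 1) / √(a * d - b ^ 2) := by
    intro k hk
    have hk' : (2:ℝ) < k := by exact_mod_cast hk
    have h := aux_form a b d ((k:ℝ)/2) ρ (by linarith) hρ ha hD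
    have he : (fun z : ℝ × ℝ => (a * z.1 ^ 2 + 2 * b * z.1 * z.2 + d * z.2 ^ 2 + ρ ^ 2) ^ (-((k:ℝ)/2)))
        = f k := by
      ext z
      exact aux_rpow (q z) k (hq0 z).le
    rw [he] at h
    exact h
  obtain ⟨h3i, h3⟩ := hfint 3 (by norm_num)
  obtain ⟨h5i, h5⟩ := hfint 5 (by norm_num)
  have hsD : 0 < √(a * d - b ^ 2) := Real.sqrt_pos.2 hD
  have h3' : ∫ z, f 3 z = 2 * Real.pi / (ρ * √(a * d - b ^ 2)) := by
    have e : (ρ ^ 2) ^ (1 - ((3:ℕ):ℝ)/2) = ρ⁻¹ := by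
      rw [show 1 - ((3:ℕ):ℝ)/2 = -(((1:ℕ):ℝ)/2) by norm_num, aux_rpow _ _ (by positivity),
        Real.sqrt_sq hρ.le, pow_one]
    rw [h3, e]
    norm_num
    field_simp
  have h5' : ∫ z, f 5 z = 2 * Real.pi / (3 * ρ ^ 3 * √(a * d - b ^ 2)) := by
    have e : (ρ ^ 2) ^ (1 - ((5:ℕ):ℝ)/2) = (ρ ^ 3)⁻¹ := by
      rw [show 1 - ((5:ℕ):ℝ)/2 = -(((3:ℕ):ℝ)/2) by norm_num, aux_rpow _ _ (by positivity),
        Real.sqrt_sq hρ.le]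
    rw [h5, e]
    norm_num
    field_simp
  have t3 := aux_tile v1 v2 (f 3) h3i
  have t5 := aux_tile v1 v2 (f 5) h5i
  rw [h3'] at t3
  rw [h5'] at t5
  set S := Ioc (-(1/2):ℝ) (1/2) ×ˢ Ioc (-(1/2):ℝ) (1/2) with hS
  have hSm : MeasurableSet S := measurableSet_Ioc.prod measurableSet_Ioc
  have hvol : (volume : Measure (ℝ × ℝ)) S = 1 := aux_vol
  have hvolr : (volume : Measure (ℝ × ℝ)).real S = 1 := by simp [Measure.real, hvol]
  have hcell : ∀ x1 x2 : ℝ, |f 3 (x1, x2) - ∫ u in S, f 3 (x1 + u.1, x2 + u.2)| ≤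
      K * L * ((2 + C₀) ^ 5 * ∫ u in S, f 5 (x1 + u.1, x2 + u.2)) := by
    intro x1 x2
    have hpt : ∀ u ∈ S, _ := fun u (hu : u ∈ S) =>
      aux_point C₀ a b d ρ L hC hρ hL hLρ hpos hD hup x1 x2 u.1 u.2
        (q (x1, x2)) (q (x1 + u.1, x2 + u.2))
        (abs_le.2 ⟨hu.1.1.le, hu.1.2⟩) (abs_le.2 ⟨hu.2.1.le, hu.2.2⟩) rfl rfl
    have hc : ∀ k, Continuous (fun u : ℝ × ℝ => f k (x1 + u.1, x2 + u.2)) := fun k =>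
      (hfc k).comp (by fun_prop)
    have hcq : ∫ u in S, (f 3 (x1 + u.1, x2 + u.2) - f 3 (x1, x2) +
        ((3 * f 5 (x1, x2) * (a * x1 + b * x2)) * u.1 +
          (3 * f 5 (x1, x2) * (b * x1 + d * x2)) * u.2)) =
        (∫ u in S, f 3 (x1 + u.1, x2 + u.2)) - f 3 (x1, x2) := by
      exact aux_affine _ (hc 3) _ _ _
    have hb := norm_setIntegral_le_of_norm_le_const (μ := volume) (s := S)
      (f := fun u : ℝ × ℝ => f 3 (x1 + u.1, x2 + u.2) - f 3 (x1, x2) +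
        ((3 * f 5 (x1, x2) * (a * x1 + b * x2)) * u.1 +
          (3 * f 5 (x1, x2) * (b * x1 + d * x2)) * u.2)) (C := K * L * f 5 (x1, x2))
      (by rw [hvol]; exact ENNReal.one_lt_top) (by
        intro u hu
        have h := (hpt u hu).1
        rw [Real.norm_eq_abs]
        refine le_trans (le_of_eq ?_) h
        congr 1
        simp only [f]
        ring)
    rw [hcq, hvolr, mul_one, Real.norm_eq_abs, abs_sub_comm] at hb
    refine hb.trans ?_
    refine mul_le_mul_of_nonneg_left ?_ (by positivity)
    have hm := aux_constle (fun u : ℝ × ℝ => (2 + C₀) ^ 5 * f 5 (x1 + u.1, x2 + u.2))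
      (continuous_const.mul (hc 5)) (f 5 (x1, x2)) (fun u hu => (hpt u hu).2)
    rw [integral_const_mul] at hm
    exact hm
  have ts := (t5.mul_left ((2 + C₀) ^ 5)).mul_left (K * L)
  let F : ℤ × ℤ → ℝ := fun n => f 3 (v1 + n.1, v2 + n.2)
  let J : ℤ × ℤ → ℝ := fun n => ∫ u in S, f 3 (v1 + n.1 + u.1, v2 + n.2 + u.2)
  have t3 : HasSum J (2 * Real.pi / (ρ * √(a * d - b ^ 2))) := t3
  have hdiff : ∀ n, ‖F n - J n‖ ≤ _ := fun n => hcell (v1 + n.1) (v2 + n.2)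
  have hsd : Summable (fun n => F n - J n) := ts.summable.of_norm_bounded hdiff
  have hsF : Summable F := by
    have := hsd.add t3.summable
    simpa using this
  refine ⟨hsF, ?_⟩
  have hle := tsum_of_norm_bounded ts hdiff
  rw [hsF.tsum_sub t3.summable, t3.tsum_eq] at hle
  exact hle

lemma aux_square (a d r b A D x1 y1 x2 y2 n m μ : ℝ) (hD : 0 < D) (hDe : D = a * d - r ^ 2)
    (hAD : A = D - b ^ 2) :
    a * ((x1 + n) * (x1 + n) + (y1 + 0) * (y1 + 0)) +
      d * ((x2 + m) * (x2 + m) + (y2 + 0) * (y2 + 0)) +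
      2 * ((r * (x1 + n) - b * (y1 + 0)) * (x2 + m) -
        (r * (y1 + 0) + b * (x1 + n)) * -(y2 + 0)) + A * μ ^ 2 =
    a * (x1 + b / D * (d * y2 + r * y1) + n) ^ 2 +
      2 * r * (x1 + b / D * (d * y2 + r * y1) + n) * (x2 - b / D * (r * y2 + a * y1) + m) +
      d * (x2 - b / D * (r * y2 + a * y1) + m) ^ 2 +
      (A / D * (a * y1 ^ 2 + 2 * r * y1 * y2 + d * y2 ^ 2) + A * μ ^ 2) := by
  obtain ⟨k, hk⟩ : ∃ k, k = b / D := ⟨_, rfl⟩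
  have hb : b = k * D := by rw [hk]; field_simp
  have hA' : A / D = 1 - k * b := by rw [hAD, hk]; field_simp
  rw [← hk, hA', hb, hDe]
  ring

end Aux

/-- far-field asymptote of the doubly periodic Newtonian potential
`γ = −(1/8π²) Σ_{(n₁,n₂)∈ℤ²} (Q(η₁+n₁, η₂+n₂) + Aμ²)^{−3/2}`: for `ϱ ≥ c·A^{1/4}` the
series converges absolutely and `|γ + 1/(4πϱ√𝔸)| ≤ C·ϱ^{−3}`. -/
theorem statement13 : ∀ C₀ : ℝ, 1 ≤ C₀ → ∃ c C : ℝ, 1 ≤ c ∧ 0 < C ∧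
    ∀ (a11 a22 : ℝ) (a12 : ℂ), 0 < a11 → 0 < a22 →
      1 ≤ a11 * a22 - Complex.normSq a12 → IsEllipticH C₀ a11 a22 a12 →
    ∀ (η1 η2 : ℂ) (μ : ℝ),
      c * (a11 * a22 - Complex.normSq a12) ^ ((1 : ℝ) / 4)
        ≤ rhoH a11 a22 a12 η1.im η2.im μ →
      Summable (fun n : ℤ × ℤ =>
        |(Qh a11 a22 a12 (η1 + (n.1 : ℂ)) (η2 + (n.2 : ℂ))
          + (a11 * a22 - Complex.normSq a12) * μ ^ 2) ^ (-(3 : ℝ) / 2)|) ∧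
      |(-(1 / (8 * Real.pi ^ 2)) * ∑' n : ℤ × ℤ,
          (Qh a11 a22 a12 (η1 + (n.1 : ℂ)) (η2 + (n.2 : ℂ))
            + (a11 * a22 - Complex.normSq a12) * μ ^ 2) ^ (-(3 : ℝ) / 2))
        + 1 / (4 * Real.pi * rhoH a11 a22 a12 η1.im η2.im μ *
            Real.sqrt (a11 * a22 - Complex.normSq a12 + a12.im ^ 2))|
      ≤ C / rhoH a11 a22 a12 η1.im η2.im μ ^ 3 := by
  intro C₀ hC
  refine ⟨1, (1 + 4 * (2 + C₀) ^ 3 * (8 + C₀)) * C₀ * (2 + C₀) ^ 5, le_rfl, by positivity, ?_⟩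
  intro a11 a22 a12 ha hd hA hell η1 η2 μ hρ
  set A := a11 * a22 - Complex.normSq a12 with hAdef
  set ρ := rhoH a11 a22 a12 η1.im η2.im μ with hρdef
  have hA0 : 0 < A := by linarith
  have hsA : 0 < √A := Real.sqrt_pos.2 hA0
  set D := A + a12.im ^ 2 with hDdef
  have hDA : A ≤ D := by rw [hDdef]; nlinarith [sq_nonneg a12.im]
  have hD0 : 0 < D := by linarith
  have hDe : D = a11 * a22 - a12.re ^ 2 := by
    rw [hDdef, hAdef, Complex.normSq_apply]; ring
  have hQr : ∀ x y : ℝ, Qh a11 a22 a12 (x : ℂ) (y : ℂ) =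
      a11 * x ^ 2 + 2 * a12.re * x * y + a22 * y ^ 2 := by
    intro x y
    simp [Qh, Complex.normSq_apply]
    ring
  have hpos : ∀ x y : ℝ, 0 ≤ a11 * x ^ 2 + 2 * a12.re * x * y + a22 * y ^ 2 := by
    intro x y
    rw [← hQr]
    refine le_trans ?_ (hell x y).1
    have := Complex.normSq_nonneg x
    have := Complex.normSq_nonneg y
    positivity
  have hup : ∀ x y : ℝ, a11 * x ^ 2 + 2 * a12.re * x * y + a22 * y ^ 2
      ≤ (C₀ * √A) * (x ^ 2 + y ^ 2) := by
    intro x y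
    rw [← hQr]
    refine le_trans (hell x y).2 (le_of_eq ?_)
    rw [Complex.normSq_ofReal, Complex.normSq_ofReal, sq, sq]
  have hAq : 0 < A ^ ((1:ℝ) / 4) := Real.rpow_pos_of_pos hA0 _
  have hρ0 : 0 < ρ := by linarith
  have hρA : √A ≤ ρ ^ 2 := by
    have h1 : (A ^ ((1:ℝ) / 4)) ^ 2 = √A := by
      rw [Real.sqrt_eq_rpow, ← Real.rpow_natCast, ← Real.rpow_mul hA0.le]
      norm_num
    rw [← h1]
    gcongr
    linarith
  have hρ2 : ρ ^ 2 = A / D * (a11 * η1.im ^ 2 + 2 * a12.re * η1.im * η2.im + a22 * η2.im ^ 2)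
      + A * μ ^ 2 := by
    rw [hρdef, rhoH, Real.sq_sqrt]
    · rfl
    · have := hpos η1.im η2.im
      unfold QR
      positivity
  obtain ⟨hsum, hbd⟩ := aux_core C₀ a11 a12.re a22 ρ (C₀ * √A)
    (η1.re + a12.im / D * (a22 * η2.im + a12.re * η1.im))
    (η2.re - a12.im / D * (a12.re * η2.im + a11 * η1.im)) hC hρ0 (by positivity)
    (by gcongr) ha hpos (by rw [← hDe]; exact hD0) hup
  rw [← hDe] at hbd
  have hterm : ∀ n : ℤ × ℤ, (Qh a11 a22 a12 (η1 + (n.1 : ℂ)) (η2 + (n.2 : ℂ)) + A * μ ^ 2)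
      ^ (-(3 : ℝ) / 2) =
      (√(a11 * (η1.re + a12.im / D * (a22 * η2.im + a12.re * η1.im) + n.1) ^ 2 +
        2 * a12.re * (η1.re + a12.im / D * (a22 * η2.im + a12.re * η1.im) + n.1) *
          (η2.re - a12.im / D * (a12.re * η2.im + a11 * η1.im) + n.2) +
        a22 * (η2.re - a12.im / D * (a12.re * η2.im + a11 * η1.im) + n.2) ^ 2 + ρ ^ 2) ^ 3)⁻¹ := by
    intro n
    rw [← aux_rpow _ 3 (add_nonneg (hpos _ _) (by positivity))]
    rw [show (-(3:ℝ) / 2) = -(((3:ℕ):ℝ)/2) by norm_num]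
    congr 1
    have hAD : A = D - a12.im ^ 2 := by rw [hDdef]; ring
    rw [hρ2, Qh]
    simp only [Complex.normSq_apply, Complex.add_re, Complex.add_im, Complex.intCast_re,
      Complex.intCast_im, Complex.mul_re, Complex.mul_im, Complex.conj_re, Complex.conj_im]
    exact aux_square a11 a22 a12.re a12.im A D η1.re η1.im η2.re η2.im n.1 n.2 μ hD0 hDe hAD
  simp_rw [hterm]
  refine ⟨hsum.abs, ?_⟩
  set T := ∑' n : ℤ × ℤ, (√(a11 * (η1.re + a12.im / D * (a22 * η2.im + a12.re * η1.im) + n.1) ^ 2 +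
        2 * a12.re * (η1.re + a12.im / D * (a22 * η2.im + a12.re * η1.im) + n.1) *
          (η2.re - a12.im / D * (a12.re * η2.im + a11 * η1.im) + n.2) +
        a22 * (η2.re - a12.im / D * (a12.re * η2.im + a11 * η1.im) + n.2) ^ 2 + ρ ^ 2) ^ 3)⁻¹
    with hT
  clear_value T
  have hpi := Real.pi_pos
  have hpi3 := Real.pi_gt_three
  have hsD : 0 < √D := Real.sqrt_pos.2 hD0
  have hsAD : √A ≤ √D := Real.sqrt_le_sqrt hDA
  have e : -(1 / (8 * Real.pi ^ 2)) * T + 1 / (4 * Real.pi * ρ * √D) =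
      -(1 / (8 * Real.pi ^ 2)) * (T - 2 * Real.pi / (ρ * √D)) := by
    field_simp
    ring
  rw [e, abs_mul, abs_neg, abs_of_pos (by positivity : 0 < 1 / (8 * Real.pi ^ 2))]
  set K := 1 + 4 * (2 + C₀) ^ 3 * (8 + C₀) with hK
  have hK0 : 0 < K := by positivity
  calc _ ≤ 1 / (8 * Real.pi ^ 2) * (K * (C₀ * √A) * ((2 + C₀) ^ 5 *
        (2 * Real.pi / (3 * ρ ^ 3 * √D)))) := by gcongr
    _ = (K * C₀ * (2 + C₀) ^ 5 / ρ ^ 3) * ((√A / √D) * (1 / (12 * Real.pi))) := by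
      field_simp
      ring
    _ ≤ (K * C₀ * (2 + C₀) ^ 5 / ρ ^ 3) * (1 * 1) := by
      gcongr
      · exact (div_le_one hsD).2 hsAD
      · rw [div_le_one (by positivity)]; linarith
    _ = _ := by ring
end
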